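/- arXiv:1110.0919 — 4 statements merged into one kernel-verified Lean document; each statement's English description precedes it below -/
import Mathlib

section
/- (Arsenin–Kunugui) Let X be a Polish space and P ⊆ X × ℕ^ℕ a Borel set all of whose vertical sections P_x = {y : (x,y) ∈ P} are σ-compact. Then the projection {x : ∃ y, (x,y) ∈ P} is a Borel subset of X. -/
/-!
Write `P` and its complement as ranges of continuous maps `p` and `g` on Polish spaces. Call an
analytic subset of the domain of `p` cover-residual if the image of every analytic set disjoint
from it is covered by countably many Borel sets with closed sections that avoid the complement of
`P`. By Novikov's separation theorem, cover-residual sets are stable under countable intersections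
and under the derivative that keeps the points near which the closure, inside the fiber, of the
image of `p` touches the range of `g`.

If `P` itself has no such cover, then every cover-residual set is nonempty, and a fusion argument
produces a countable set `C` in the domain of `p`, over a single point `x`, such that the image of
each relatively open piece of `C` accumulates at a point outside `P`. If the section of `P` over
`x` is a countable union of closed sets, this contradicts the Baire category theorem on the closure
of `C`. So `P` is a countable union of Borel sets with closed sections.

Embedding the second factor in the Hilbert cube keeps sections `σ`-compact, hence countable unions
of closed sets, and makes the fibers compact. By compactness, the projection of a Borel set with
closed sections is then Borel.
-/

open Set Function Topology TopologicalSpace MeasureTheory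

section FiniteApproximation

theorem exists_forall_finset_of_exists_update {ι α : Type*} [Countable ι] [DecidableEq ι]
    {Q : Finset ι → (ι → α) → Prop} (hanti : ∀ s s' t, s ⊆ s' → Q s' t → Q s t)
    (hcongr : ∀ s t t', (∀ i ∈ s, t i = t' i) → Q s t → Q s t') (hempty : ∃ t, Q ∅ t)
    (hinsert : ∀ s t i, Q s t → i ∉ s → ∃ a, Q (insert i s) (update t i a)) :
    ∃ t, ∀ s, Q s t := by
  let _ := Encodable.ofCountable ι
  obtain ⟨t₀, ht₀⟩ := hempty
  let _ : Preorder {c : Finset ι × (ι → α) // Q c.1 c.2} :=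
    { le c d := c.1.1 ⊆ d.1.1 ∧ ∀ i ∈ c.1.1, c.1.2 i = d.1.2 i
      le_refl _ := ⟨subset_rfl, fun _ _ ↦ rfl⟩
      le_trans _ _ _ h h' := ⟨h.1.trans h'.1, fun i hi ↦ (h.2 i hi).trans (h'.2 i (h.1 hi))⟩ }
  have isCofinal_mem (i : ι) :
      IsCofinal {c : {c : Finset ι × (ι → α) // Q c.1 c.2} | i ∈ c.1.1} := fun c ↦ by
    by_cases hi : i ∈ c.1.1
    · exact ⟨c, hi, le_rfl⟩
    · obtain ⟨a, ha⟩ := hinsert _ _ i c.2 hi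
      exact ⟨⟨(_, _), ha⟩, Finset.mem_insert_self _ _, Finset.subset_insert _ _,
        fun j hj ↦ (update_of_ne (ne_of_mem_of_not_mem hj hi) _ _).symm⟩
  let u : ℕ → {c : Finset ι × (ι → α) // Q c.1 c.2} :=
    Order.sequenceOfCofinals ⟨(∅, t₀), ht₀⟩ fun i ↦ ⟨_, isCofinal_mem i⟩
  have hu : Monotone u := Order.sequenceOfCofinals.monotone _ _
  have mem_u (i : ι) : i ∈ (u (Encodable.encode i + 1)).1.1 :=
    Order.sequenceOfCofinals.encode_mem _ (fun i ↦ ⟨_, isCofinal_mem i⟩) i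
  have u_eq (n : ℕ) (i : ι) (hi : i ∈ (u n).1.1) :
      (u n).1.2 i = (u (Encodable.encode i + 1)).1.2 i :=
    (le_total n _).elim (fun h ↦ (hu h).2 i hi) fun h ↦ ((hu h).2 i (mem_u i)).symm
  refine ⟨fun i ↦ (u (Encodable.encode i + 1)).1.2 i, fun s ↦ ?_⟩
  let n := s.sup fun i ↦ Encodable.encode i + 1
  have hs : s ⊆ (u n).1.1 := fun i hi ↦
    (hu (Finset.le_sup (f := fun i ↦ Encodable.encode i + 1) hi)).1 (mem_u i)
  exact hanti _ _ _ hs (hcongr _ _ _ (u_eq n) (u n).2)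

variable {F I D : Type*} {rank : I → ℕ} {T : F → ℕ → Set (I → D)}

theorem exists_extension_of_exists_extension_succ (hanti : ∀ a, Antitone (T a))
    (hext : ∀ a m, ∃ b, ∀ c ∈ T b m, ∃ d ∈ T a (m + 1), ∀ i, rank i < m → d i = c i)
    (a : F) (m n : ℕ) : ∃ b, ∀ c ∈ T b m, ∃ d ∈ T a n, ∀ i, rank i < m → d i = c i := by
  obtain hnm | hmn := le_total n m
  · exact ⟨a, fun c hc ↦ ⟨c, hanti a hnm hc, fun _ _ ↦ rfl⟩⟩
  induction n, hmn using Nat.le_induction generalizing a with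
  | base => exact ⟨a, fun c hc ↦ ⟨c, hc, fun _ _ ↦ rfl⟩⟩
  | succ n hmn ih =>
    obtain ⟨b, hb⟩ := hext a n
    obtain ⟨b', hb'⟩ := ih b
    refine ⟨b', fun c hc ↦ ?_⟩
    obtain ⟨d, hd, hdc⟩ := hb' c hc
    obtain ⟨d', hd', hdd'⟩ := hb d hd
    exact ⟨d', hd', fun i hi ↦ (hdd' i (hi.trans_le hmn)).trans (hdc i hi)⟩

theorem exists_forall_mem_closure_of_exists_extension_nat [Preorder F] [Countable I]
    {T : F → ℕ → Set (I → ℕ)} (hdir : ∀ a : ℕ → F, ∃ b, ∀ n, b ≤ a n)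
    (hmono : ∀ m, Monotone (T · m)) (hne : ∀ a m, (T a m).Nonempty)
    (hext : ∀ a m n, ∃ b, ∀ c ∈ T b m, ∃ d ∈ T a n, ∀ i, rank i < m → d i = c i) :
    ∃ c, ∀ a m, c ∈ closure (T a m) := by
  classical
  obtain ⟨c, hc⟩ : ∃ c : I → ℕ, ∀ s : Finset I, ∀ a m, ∃ d ∈ T a m, ∀ i ∈ s, d i = c i := by
    refine exists_forall_finset_of_exists_update
      (fun s s' c hs h a m ↦ (h a m).imp fun d hd ↦ ⟨hd.1, fun i hi ↦ hd.2 i (hs hi)⟩)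
      (fun s c c' hcc' h a m ↦ (h a m).imp fun d hd ↦
        ⟨hd.1, fun i hi ↦ (hd.2 i hi).trans (hcc' i hi)⟩)
      ⟨0, fun a m ↦ (hne a m).imp fun d hd ↦ ⟨hd, by simp⟩⟩ fun s c j hs _ ↦ ?_
    -- A value `v` that fails at `j` does so at some `(a v, m v)`; countable directedness refutes
    -- all values at once.
    by_contra! hfail
    choose a m hfail using hfail
    let M := (insert j s).sup rank + 1
    have rank_lt (i) (hi : i ∈ insert j s) : rank i < M := Nat.lt_succ_of_le (Finset.le_sup hi)
    choose b hb using fun v ↦ hext (a v) M (m v)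
    obtain ⟨b₀, hb₀⟩ := hdir b
    obtain ⟨u, hu, hus⟩ := hs b₀ M
    obtain ⟨d, hd, hdu⟩ := hb (u j) u (hmono M (hb₀ _) hu)
    obtain ⟨i, hi, hne⟩ := hfail (u j) d hd
    refine hne ?_
    rw [hdu i (rank_lt i hi)]
    obtain rfl | hij := eq_or_ne i j
    · rw [update_self]
    · rw [update_of_ne hij, hus i (Finset.mem_of_mem_insert_of_ne hi hij)]
  refine ⟨c, fun a m ↦ mem_closure_iff.2 fun O hO hcO ↦ ?_⟩
  obtain ⟨s, v, hv, hvO⟩ := isOpen_pi_iff.1 hO c hcO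
  obtain ⟨d, hd, hdc⟩ := hc s a m
  exact ⟨d, hvO fun i hi ↦ hdc i hi ▸ (hv i hi).2, hd⟩

theorem exists_forall_mem_closure_of_exists_extension [Preorder F] [Countable I]
    [TopologicalSpace D] [PolishSpace D] [Nonempty D] (hdir : ∀ a : ℕ → F, ∃ b, ∀ n, b ≤ a n)
    (hmono : ∀ m, Monotone (T · m)) (hne : ∀ a m, (T a m).Nonempty)
    (hext : ∀ a m n, ∃ b, ∀ c ∈ T b m, ∃ d ∈ T a n, ∀ i, rank i < m → d i = c i) :
    ∃ c, ∀ a m, c ∈ closure (T a m) := by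
  obtain ⟨q, hq, q_surjective⟩ := PolishSpace.exists_nat_nat_continuous_surjective D
  let decode (t : I × ℕ → ℕ) (i : I) : D := q fun j ↦ t (i, j)
  have decode_surjective : Surjective decode := fun d ↦ by
    choose z hz using fun i ↦ q_surjective (d i)
    exact ⟨fun e ↦ z e.1 e.2, funext hz⟩
  have continuous_decode : Continuous decode := by fun_prop
  obtain ⟨t, ht⟩ := exists_forall_mem_closure_of_exists_extension_nat (rank := rank ∘ Prod.fst)
    (T := fun a m ↦ decode ⁻¹' T a m) hdir (fun m a b h ↦ preimage_mono (hmono m h))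
    (fun a m ↦ (hne a m).preimage decode_surjective) fun a m n ↦ by
      obtain ⟨b, hb⟩ := hext a m n
      refine ⟨b, fun t ht ↦ ?_⟩
      obtain ⟨d, hd, hdt⟩ := hb _ ht
      obtain ⟨w, rfl⟩ := decode_surjective d
      let w' (e : I × ℕ) : ℕ := if rank e.1 < m then t e else w e
      have decode_w' : decode w' = decode w := funext fun i ↦ by
        by_cases hi : rank i < m
        · simp only [decode, w', if_pos hi] at hdt ⊢
          exact (hdt i hi).symm
        · simp only [decode, w', if_neg hi]
      exact ⟨w', mem_preimage.2 (decode_w' ▸ hd), fun e he ↦ if_pos he⟩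
  exact ⟨decode t, fun a m ↦ map_mem_closure continuous_decode (ht a m) (mapsTo_preimage _ _)⟩

end FiniteApproximation

section Separation

variable {X ι : Type*} [MeasurableSpace X]

/-- Simultaneous separation of a family of sets: the sets have measurable supersets with empty
intersection. For two sets this is `MeasurablySeparable`. -/
def MeasurablySeparableFamily (s : ι → Set X) : Prop :=
  ∃ B : ι → Set X, (∀ i, MeasurableSet (B i)) ∧ (∀ i, s i ⊆ B i) ∧ ⋂ i, B i = ∅

namespace MeasurablySeparableFamily

theorem mono {s t : ι → Set X} (h : MeasurablySeparableFamily t) (hst : ∀ i, s i ⊆ t i) :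
    MeasurablySeparableFamily s :=
  let ⟨B, hB, htB, hE⟩ := h
  ⟨B, hB, fun i ↦ (hst i).trans (htB i), hE⟩

theorem of_disjoint {s : ι → Set X} {i j : ι} {U V : Set X} (hU : MeasurableSet U)
    (hV : MeasurableSet V) (hUV : Disjoint U V) (hi : s i ⊆ U) (hj : s j ⊆ V) :
    MeasurablySeparableFamily s := by
  refine ⟨fun k ↦ (⋂ _ : k = i, U) ∩ ⋂ _ : k = j, V,
    fun k ↦ (MeasurableSet.iInter fun _ ↦ hU).inter (.iInter fun _ ↦ hV), fun k ↦ ?_, ?_⟩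
  · refine subset_inter (subset_iInter ?_) (subset_iInter ?_)
    exacts [fun h ↦ h ▸ hi, fun h ↦ h ▸ hj]
  · refine eq_empty_of_forall_notMem fun x hx ↦ ?_
    rw [mem_iInter] at hx
    exact disjoint_left.1 hUV (mem_iInter.1 (hx i).1 rfl) (mem_iInter.1 (hx j).2 rfl)

theorem of_iUnion {κ : Type*} [Countable κ] {s : ι → Set X} {t : κ → ι → Set X} (i : ι)
    (ht : ∀ k, MeasurablySeparableFamily (t k)) (hi : s i ⊆ ⋃ k, t k i)
    (hne : ∀ k, ∀ j ≠ i, s j ⊆ t k j) : MeasurablySeparableFamily s := by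
  classical
  choose B hB htB hE using ht
  refine ⟨fun j ↦ if j = i then ⋃ k, B k j else ⋂ k, B k j, fun j ↦ ?_, fun j ↦ ?_, ?_⟩
  · dsimp only
    split_ifs
    exacts [.iUnion fun k ↦ hB k j, .iInter fun k ↦ hB k j]
  · dsimp only
    split_ifs with hj
    · exact hj ▸ hi.trans (iUnion_mono fun k ↦ htB k i)
    · exact subset_iInter fun k ↦ (hne k j hj).trans (htB k j)
  · refine eq_empty_of_forall_notMem fun x hx ↦ ?_
    rw [mem_iInter] at hx
    obtain ⟨k, hk⟩ := mem_iUnion.1 (if_pos (rfl : i = i) ▸ hx i)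
    refine eq_empty_iff_forall_notMem.1 (hE k) x (mem_iInter.2 fun j ↦ ?_)
    obtain rfl | hj := eq_or_ne j i
    · exact hk
    · exact mem_iInter.1 (if_neg hj ▸ hx j) k

variable [Countable ι] [TopologicalSpace X] [T2Space X] [OpensMeasurableSpace X]

/- If the ranges are not separable, fix the values of the arguments one coordinate at a time so
that the images of the resulting cylinders remain nonseparable. The limit arguments have different
values under two of the functions, and these values are separated by disjoint open sets. -/
theorem range_of_continuous [Nonempty ι] {f : ι → (ℕ → ℕ) → X} (hf : ∀ i, Continuous (f i))
    (hE : ⋂ i, range (f i) = ∅) : MeasurablySeparableFamily fun i ↦ range (f i) := by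
  classical
  let K (s : Finset (ι × ℕ)) (t : ι × ℕ → ℕ) (i : ι) : Set X :=
    f i '' {z | ∀ n, (i, n) ∈ s → z n = t (i, n)}
  by_contra hsep
  obtain ⟨t, ht⟩ : ∃ t, ∀ s, ¬ MeasurablySeparableFamily (K s t) := by
    refine exists_forall_finset_of_exists_update
      (fun s s' t hs h h' ↦ h (h'.mono fun i ↦ image_mono fun z hz n hn ↦ hz n (hs hn)))
      (fun s t t' htt' h h' ↦ h (h'.mono fun i ↦ image_mono fun z hz n hn ↦
        (hz n hn).trans (htt' _ hn))) ⟨0, by simpa [K] using hsep⟩ fun s t ⟨i, n⟩ hs _ ↦ ?_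
    by_contra! hall
    refine hs (.of_iUnion i hall ?_ fun a j hj ↦ image_mono fun z hz m hm ↦ ?_)
    · rintro _ ⟨z, hz, rfl⟩
      refine mem_iUnion.2 ⟨z n, z, fun m hm ↦ ?_, rfl⟩
      obtain rfl | hmn := eq_or_ne m n
      · rw [update_self]
      · rw [update_of_ne (by simpa using hmn), hz m (Finset.mem_of_mem_insert_of_ne hm
          (by simpa using hmn))]
    · have hne : (j, m) ≠ (i, n) := fun h ↦ hj (congrArg Prod.fst h)
      rw [update_of_ne hne, hz m (Finset.mem_of_mem_insert_of_ne hm hne)]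
  let z (i : ι) (n : ℕ) : ℕ := t (i, n)
  obtain ⟨i, j, hij⟩ : ∃ i j, f i (z i) ≠ f j (z j) := by
    by_contra! heq
    inhabit ι
    exact eq_empty_iff_forall_notMem.1 hE _ (mem_iInter.2 fun i ↦ ⟨z i, heq i default⟩)
  obtain ⟨U, V, hU, hV, hiU, hjV, hUV⟩ := t2_separation hij
  have exists_finset {i : ι} {O : Set X} (hO : IsOpen O) (hi : f i (z i) ∈ O) :
      ∃ s₀, ∀ s, s₀ ⊆ s → K s t i ⊆ O := by
    obtain ⟨s, v, hv, hvO⟩ := isOpen_pi_iff.1 (hO.preimage (hf i)) (z i) hi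
    refine ⟨s.image (Prod.mk i), fun s' hs' ↦ image_subset_iff.2 fun y hy ↦ hvO fun n hn ↦ ?_⟩
    exact hy n (hs' (Finset.mem_image_of_mem _ hn)) ▸ (hv n hn).2
  obtain ⟨s, hs⟩ := exists_finset hU hiU
  obtain ⟨s', hs'⟩ := exists_finset hV hjV
  exact ht (s ∪ s') (.of_disjoint hU.measurableSet hV.measurableSet hUV
    (hs _ Finset.subset_union_left) (hs' _ Finset.subset_union_right))

/-- **Novikov separation theorem** -/
theorem of_analyticSet [Nonempty ι] {s : ι → Set X} (hs : ∀ i, AnalyticSet (s i))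
    (hE : ⋂ i, s i = ∅) : MeasurablySeparableFamily s := by
  by_cases hempty : ∃ i, s i = ∅
  · obtain ⟨i, hi⟩ := hempty
    exact of_disjoint .empty .empty disjoint_bot_left (i := i) (j := i) hi.le hi.le
  have hrange (i) : ∃ f : (ℕ → ℕ) → X, Continuous f ∧ range f = s i := by
    have := hs i
    rw [AnalyticSet] at this
    exact this.resolve_left fun hi ↦ hempty ⟨i, hi⟩
  choose f hf hfs using hrange
  obtain rfl : (fun i ↦ range (f i)) = s := funext hfs
  exact range_of_continuous hf hE

end MeasurablySeparableFamily

theorem exists_measurableSet_subset_iUnion_of_disjoint_iInter [Countable ι] [TopologicalSpace X]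
    [T2Space X] [OpensMeasurableSpace X] {E : Set X} {s : ι → Set X} (hE : AnalyticSet E)
    (hs : ∀ i, AnalyticSet (s i)) (hEs : Disjoint E (⋂ i, s i)) :
    ∃ W : ι → Set X, (∀ i, MeasurableSet (W i)) ∧ (∀ i, Disjoint (W i) (s i)) ∧
      E ⊆ ⋃ i, W i := by
  obtain ⟨B, hB, hsB, hBE⟩ : MeasurablySeparableFamily fun o : Option ι ↦ o.elim E s := by
    refine .of_analyticSet (fun o ↦ ?_) ?_
    · cases o with
      | none => exact hE
      | some i => exact hs i
    · rw [iInter_option]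
      exact hEs.inter_eq
  refine ⟨fun i ↦ (B (some i))ᶜ, fun i ↦ (hB _).compl,
    fun i ↦ disjoint_compl_left.mono_right (hsB (some i)), fun x hx ↦ ?_⟩
  rw [iInter_option] at hBE
  rw [← compl_iInter]
  exact fun hxB ↦ eq_empty_iff_forall_notMem.1 hBE x ⟨hsB none hx, hxB⟩

end Separation

section Analytic

variable {X : Type*} [TopologicalSpace X] {s t : Set X}

theorem analyticSet_union (hs : AnalyticSet s) (ht : AnalyticSet t) : AnalyticSet (s ∪ t) := by
  rw [union_eq_iUnion]
  exact .iUnion <| Bool.forall_bool.2 ⟨ht, hs⟩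

theorem analyticSet_inter [T2Space X] (hs : AnalyticSet s) (ht : AnalyticSet t) :
    AnalyticSet (s ∩ t) := by
  rw [inter_eq_iInter]
  exact .iInter <| Bool.forall_bool.2 ⟨ht, hs⟩

theorem analyticSet_iInter_of_polishSpace [PolishSpace X] {ι : Type*} [Countable ι]
    {s : ι → Set X} (hs : ∀ i, AnalyticSet (s i)) : AnalyticSet (⋂ i, s i) := by
  cases isEmpty_or_nonempty ι
  · rw [iInter_of_empty]
    exact isClosed_univ.analyticSet
  · exact .iInter hs

end Analytic

section FiberwiseClosed

variable {X Y : Type*} [MeasurableSpace X] [TopologicalSpace Y] [SecondCountableTopology Y]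

/-- A subset of `X × Y` whose complement is a union of rectangles with measurable bases in `X` over
the basic open sets of `Y`. These are the sets with closed sections over the points of `X` that
depend on the point in a Borel way. -/
def IsBorelFiberwiseClosed (S : Set (X × Y)) : Prop :=
  ∃ R : countableBasis Y → Set X, (∀ U, MeasurableSet (R U)) ∧ Sᶜ = ⋃ U, R U ×ˢ U.1

namespace IsBorelFiberwiseClosed

variable {S : Set (X × Y)}

theorem measurableSet [MeasurableSpace Y] [OpensMeasurableSpace Y]
    (hS : IsBorelFiberwiseClosed S) : MeasurableSet S := by
  obtain ⟨R, hR, hRS⟩ := hS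
  refine .of_compl (hRS ▸ .iUnion fun U ↦ (hR U).prod ?_)
  exact (isOpen_of_mem_countableBasis U.2).measurableSet

theorem measurableSet_image_fst [CompactSpace Y] (hS : IsBorelFiberwiseClosed S) :
    MeasurableSet (Prod.fst '' S) := by
  obtain ⟨R, hR, hRS⟩ := hS
  have compl_image : (Prod.fst '' S)ᶜ =
      ⋃ (F : Finset (countableBasis Y)) (_ : univ ⊆ ⋃ U ∈ F, (U.1 : Set Y)), ⋂ U ∈ F, R U := by
    have notMem_S (x : X) (y : Y) : (x, y) ∉ S ↔ ∃ U, x ∈ R U ∧ y ∈ U.1 := by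
      simp only [← mem_compl_iff, hRS, mem_iUnion, mem_prod]
    ext x
    simp only [mem_compl_iff, mem_iUnion, mem_iInter, exists_prop]
    refine ⟨fun hx ↦ ?_, ?_⟩
    · have hcover : univ ⊆ ⋃ U ∈ {U | x ∈ R U}, U.1 := fun y _ ↦ mem_iUnion₂.2 <| by
        simpa using (notMem_S x y).1 fun h ↦ hx ⟨_, h, rfl⟩
      obtain ⟨F, hF, hfin, hFcover⟩ := isCompact_univ.elim_finite_subcover_image
        (fun U _ ↦ isOpen_of_mem_countableBasis U.2) hcover
      exact ⟨hfin.toFinset, by simpa using hFcover, fun U hU ↦ hF (hfin.mem_toFinset.1 hU)⟩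
    · rintro ⟨F, hcover, hF⟩ ⟨⟨x, y⟩, hS, rfl⟩
      obtain ⟨U, hU, hy⟩ := mem_iUnion₂.1 (hcover (mem_univ y))
      exact (notMem_S x y).2 ⟨U, hF U hU, hy⟩ hS
  refine .of_compl (compl_image ▸ .iUnion fun F ↦ .iUnion fun _ ↦ ?_)
  exact F.measurableSet_biInter fun U _ ↦ hR U

end IsBorelFiberwiseClosed

/-- A set `E` has a Borel closed cover away from `B` if countably many Borel sets with closed
sections cover `E` and avoid `B`. -/
def HasBorelClosedCover (B E : Set (X × Y)) : Prop :=
  ∃ 𝒮 : Set (Set (X × Y)), 𝒮.Countable ∧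
    (∀ S ∈ 𝒮, IsBorelFiberwiseClosed S ∧ Disjoint S B) ∧ E ⊆ ⋃₀ 𝒮

namespace HasBorelClosedCover

variable {B E E' S : Set (X × Y)}

theorem mono (h : HasBorelClosedCover B E') (hE : E ⊆ E') : HasBorelClosedCover B E :=
  let ⟨𝒮, hc, h𝒮, hcover⟩ := h
  ⟨𝒮, hc, h𝒮, hE.trans hcover⟩

theorem empty : HasBorelClosedCover B ∅ :=
  ⟨∅, countable_empty, by simp, empty_subset _⟩

theorem of_isBorelFiberwiseClosed (hS : IsBorelFiberwiseClosed S) (hSB : Disjoint S B) :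
    HasBorelClosedCover B S :=
  ⟨{S}, countable_singleton S, by simp [hS, hSB], by simp⟩

theorem iUnion {ι : Type*} [Countable ι] {E : ι → Set (X × Y)}
    (h : ∀ i, HasBorelClosedCover B (E i)) : HasBorelClosedCover B (⋃ i, E i) := by
  choose 𝒮 hc h𝒮 hcover using h
  refine ⟨⋃ i, 𝒮 i, countable_iUnion hc, fun S hS ↦ ?_, iUnion_subset fun i ↦
    (hcover i).trans (sUnion_mono (subset_iUnion 𝒮 i))⟩
  obtain ⟨i, hi⟩ := mem_iUnion.1 hS
  exact h𝒮 i S hi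

theorem union (h : HasBorelClosedCover B E) (h' : HasBorelClosedCover B E') :
    HasBorelClosedCover B (E ∪ E') := by
  rw [union_eq_iUnion]
  exact .iUnion <| Bool.forall_bool.2 ⟨h', h⟩

theorem measurableSet_image_fst [CompactSpace Y] (h : HasBorelClosedCover Eᶜ E) :
    MeasurableSet (Prod.fst '' E) := by
  obtain ⟨𝒮, hc, h𝒮, hcover⟩ := h
  have hE : E = ⋃₀ 𝒮 :=
    hcover.antisymm <| sUnion_subset fun S hS ↦ disjoint_compl_right_iff_subset.1 (h𝒮 S hS).2
  rw [hE, image_sUnion]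
  exact .sUnion (hc.image _) <| forall_mem_image.2 fun S hS ↦ (h𝒮 S hS).1.measurableSet_image_fst

end HasBorelClosedCover

end FiberwiseClosed

section FiberClosure

variable {X Y : Type*} [TopologicalSpace Y]

/-- The set obtained from `A ⊆ X × Y` by replacing its section over each point of `X` by the
closure of that section. -/
def fiberClosure (A : Set (X × Y)) : Set (X × Y) :=
  {q | q.2 ∈ closure (Prod.mk q.1 ⁻¹' A)}

theorem fiberClosure_mono {A A' : Set (X × Y)} (h : A ⊆ A') : fiberClosure A ⊆ fiberClosure A' :=
  fun _ hq ↦ closure_mono (preimage_mono h) hq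

theorem fst_mem_image_of_mem_fiberClosure {A : Set (X × Y)} {q : X × Y} (hq : q ∈ fiberClosure A) :
    q.1 ∈ Prod.fst '' A :=
  let ⟨y, hy⟩ := closure_nonempty_iff.1 ⟨q.2, hq⟩
  ⟨(q.1, y), hy, rfl⟩

/-- The points `q` such that `U`, if it is a neighborhood of `q.2`, meets the section of `A` over
`q.1`. Intersecting these sets over a basis gives `fiberClosure A`. -/
def basicFiberClosure (A : Set (X × Y)) (U : Set Y) : Set (X × Y) :=
  {q | q.2 ∈ U → q.1 ∈ Prod.fst '' (A ∩ Prod.snd ⁻¹' U)}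

theorem fiberClosure_eq_iInter [SecondCountableTopology Y] (A : Set (X × Y)) :
    fiberClosure A = ⋂ U : countableBasis Y, basicFiberClosure A U := by
  ext ⟨x, y⟩
  simp only [fiberClosure, basicFiberClosure, mem_ofPred_eq,
    (isBasis_countableBasis Y).mem_closure_iff, mem_iInter, Subtype.forall]
  refine forall₃_congr fun U _ _ ↦ ⟨fun ⟨y', hU, hA⟩ ↦ ⟨(x, y'), ⟨hA, hU⟩, rfl⟩, ?_⟩
  rintro ⟨⟨_, y'⟩, ⟨hA, hU⟩, rfl⟩
  exact ⟨y', hU, hA⟩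

variable [TopologicalSpace X] [PolishSpace X] [PolishSpace Y] {A B : Set (X × Y)}

theorem analyticSet_image_fst_inter_preimage_snd (hA : AnalyticSet A) {U : Set Y} (hU : IsOpen U) :
    AnalyticSet (Prod.fst '' (A ∩ Prod.snd ⁻¹' U)) := by
  borelize Y
  exact (analyticSet_inter hA
    (hU.measurableSet.analyticSet.preimage continuous_snd)).image_of_continuous continuous_fst

theorem analyticSet_basicFiberClosure (hA : AnalyticSet A) {U : Set Y} (hU : IsOpen U) :
    AnalyticSet (basicFiberClosure A U) := by
  simp only [basicFiberClosure, imp_iff_not_or]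
  exact analyticSet_union (hU.isClosed_compl.analyticSet.preimage continuous_snd)
    ((analyticSet_image_fst_inter_preimage_snd hA hU).preimage continuous_fst)

theorem analyticSet_fiberClosure (hA : AnalyticSet A) : AnalyticSet (fiberClosure A) := by
  rw [fiberClosure_eq_iInter]
  exact analyticSet_iInter_of_polishSpace fun U ↦
    analyticSet_basicFiberClosure hA (isOpen_of_mem_countableBasis U.2)

theorem exists_isBorelFiberwiseClosed_of_disjoint_fiberClosure [MeasurableSpace X] [BorelSpace X]
    (hA : AnalyticSet A) (hB : AnalyticSet B) (hBA : Disjoint B (fiberClosure A)) :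
    ∃ S, IsBorelFiberwiseClosed S ∧ A ⊆ S ∧ Disjoint S B := by
  borelize Y
  rw [fiberClosure_eq_iInter] at hBA
  obtain ⟨W, hW, hWA, hBW⟩ := exists_measurableSet_subset_iUnion_of_disjoint_iInter hB
    (fun U : countableBasis Y ↦ analyticSet_basicFiberClosure hA (isOpen_of_mem_countableBasis U.2))
    hBA
  have notMem_of_mem (U) {q : X × Y} (hq : q ∈ W U) :
      q.2 ∈ U.1 ∧ q.1 ∉ Prod.fst '' (A ∩ Prod.snd ⁻¹' U) :=
    Classical.not_imp.1 (disjoint_left.1 (hWA U) hq)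
  have hsep (U : countableBasis Y) : MeasurablySeparable (Prod.fst '' (B ∩ W U))
      (Prod.fst '' (A ∩ Prod.snd ⁻¹' U)) := by
    refine AnalyticSet.measurablySeparable
      ((analyticSet_inter hB (hW U).analyticSet).image_of_continuous continuous_fst)
      (analyticSet_image_fst_inter_preimage_snd hA (isOpen_of_mem_countableBasis U.2)) ?_
    exact disjoint_left.2 <| forall_mem_image.2 fun q hq ↦ (notMem_of_mem U hq.2).2
  choose R hBR hAR hR using hsep
  refine ⟨(⋃ U, R U ×ˢ U.1)ᶜ, ⟨R, hR, compl_compl _⟩, fun q hq hqR ↦ ?_, ?_⟩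
  · obtain ⟨U, hqR, hqU⟩ := mem_iUnion.1 hqR
    exact disjoint_left.1 (hAR U) ⟨q, ⟨hq, hqU⟩, rfl⟩ hqR
  · refine disjoint_compl_left_iff_subset.2 fun q hq ↦ ?_
    obtain ⟨U, hqW⟩ := mem_iUnion.1 (hBW hq)
    exact mem_iUnion.2 ⟨U, hBR U ⟨q, ⟨hq, hqW⟩, rfl⟩, (notMem_of_mem U hqW).1⟩

/-- The points of `X` over which the closure of the section of `A` meets the section of `B`. -/
def touchingBase (A B : Set (X × Y)) : Set X :=
  Prod.fst '' (fiberClosure A ∩ B)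

theorem analyticSet_touchingBase (hA : AnalyticSet A) (hB : AnalyticSet B) :
    AnalyticSet (touchingBase A B) :=
  (analyticSet_inter (analyticSet_fiberClosure hA) hB).image_of_continuous continuous_fst

theorem exists_isBorelFiberwiseClosed_of_disjoint_touchingBase [MeasurableSpace X] [BorelSpace X]
    (hA : AnalyticSet A) (hB : AnalyticSet B) {R : Set X} (hR : MeasurableSet R)
    (hRA : Disjoint R (touchingBase A B)) :
    ∃ S, IsBorelFiberwiseClosed S ∧ A ∩ Prod.fst ⁻¹' R ⊆ S ∧ Disjoint S B := by
  refine exists_isBorelFiberwiseClosed_of_disjoint_fiberClosure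
    (analyticSet_inter hA (hR.analyticSet.preimage continuous_fst)) hB ?_
  refine disjoint_left.2 fun q hqB hqA ↦ disjoint_left.1 hRA ?_
    ⟨q, ⟨fiberClosure_mono inter_subset_left hqA, hqB⟩, rfl⟩
  obtain ⟨q', hq', hqq'⟩ := fst_mem_image_of_mem_fiberClosure hqA
  exact hqq' ▸ hq'.2

end FiberClosure

section Residual

variable {X Y Z : Type*} [TopologicalSpace Y] [TopologicalSpace Z]

/-- The points `z` such that, if `U` is a neighborhood of `z`, then over the projection of `p z` to
`X` the closure of the section of `p '' (A ∩ U)` meets the section of `B`. -/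
def touchingSet (p : Z → X × Y) (B : Set (X × Y)) (A U : Set Z) : Set Z :=
  {z | z ∈ U → (p z).1 ∈ touchingBase (p '' (A ∩ U)) B}

/-- The derivative of `A` with respect to `B`: the points of `A` all of whose neighborhoods `U` in
`A` have an image `p '' U` whose closure in the fiber of `p z` meets `B`. -/
def touchingDerivative [SecondCountableTopology Z] (p : Z → X × Y) (B : Set (X × Y)) (A : Set Z) :
    Set Z :=
  A ∩ ⋂ U : countableBasis Z, touchingSet p B A U

/-- Analytic sets `A` in the domain of `p` that are large with respect to `B`: every analytic set
disjoint from `A` has an image that can be covered by countably many Borel sets with closed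
sections avoiding `B`. -/
structure IsCoverResidual [MeasurableSpace X] [SecondCountableTopology Y]
    (p : Z → X × Y) (B : Set (X × Y)) (A : Set Z) : Prop where
  analyticSet : AnalyticSet A
  hasBorelClosedCover_image {E : Set Z} (hE : AnalyticSet E) (hEA : Disjoint E A) :
    HasBorelClosedCover B (p '' E)

namespace IsCoverResidual

variable [MeasurableSpace X] [PolishSpace Y] [PolishSpace Z]
  {p : Z → X × Y} {B : Set (X × Y)} {A A' : Set Z}

theorem univ : IsCoverResidual p B univ where
  analyticSet := isClosed_univ.analyticSet
  hasBorelClosedCover_image {E} _ hE := by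
    rw [disjoint_univ.1 hE, image_empty]
    exact .empty

theorem iInter {ι : Type*} [Countable ι] {A : ι → Set Z} (hA : ∀ i, IsCoverResidual p B (A i)) :
    IsCoverResidual p B (⋂ i, A i) where
  analyticSet := analyticSet_iInter_of_polishSpace fun i ↦ (hA i).analyticSet
  hasBorelClosedCover_image {E} hE hEA := by
    borelize Z
    obtain ⟨W, hW, hWA, hEW⟩ := exists_measurableSet_subset_iUnion_of_disjoint_iInter hE
      (fun i ↦ (hA i).analyticSet) hEA
    rw [← inter_eq_left.2 hEW, inter_iUnion, image_iUnion]
    exact .iUnion fun i ↦ (hA i).hasBorelClosedCover_image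
      (analyticSet_inter hE (hW i).analyticSet) ((hWA i).mono_left inter_subset_right)

theorem inter (hA : IsCoverResidual p B A) (hA' : IsCoverResidual p B A') :
    IsCoverResidual p B (A ∩ A') := by
  rw [inter_eq_iInter]
  exact .iInter <| Bool.forall_bool.2 ⟨hA', hA⟩

theorem nonempty (hA : IsCoverResidual p B A) (hp : ¬ HasBorelClosedCover B (range p)) :
    A.Nonempty := by
  by_contra! hempty
  refine hp (image_univ ▸ hA.hasBorelClosedCover_image isClosed_univ.analyticSet ?_)
  exact hempty ▸ disjoint_bot_right

variable [TopologicalSpace X] [PolishSpace X] [BorelSpace X]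

/- A Borel set `R` containing the projection of `E` and avoiding the touching base yields a set `S`
that is disjoint from `B` and contains the part over `R` of `p '' (A ∩ U)`. The points of `E` whose
image is outside `S` are then outside `A`. -/
theorem touchingSet (hA : IsCoverResidual p B A) (hp : Continuous p) (hB : AnalyticSet B)
    {U : Set Z} (hU : IsOpen U) : IsCoverResidual p B (touchingSet p B A U) := by
  borelize Y Z
  have continuous_fst_p : Continuous fun z ↦ (p z).1 := by fun_prop
  have hAU := analyticSet_inter hA.analyticSet hU.measurableSet.analyticSet
  have hbase := analyticSet_touchingBase (hAU.image_of_continuous hp) hB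
  refine ⟨?_, fun {E} hE hEA ↦ ?_⟩
  · simp only [_root_.touchingSet, imp_iff_not_or]
    exact analyticSet_union hU.isClosed_compl.analyticSet (hbase.preimage continuous_fst_p)
  have mem_of_mem {z} (hz : z ∈ E) : z ∈ U ∧ (p z).1 ∉ touchingBase (p '' (A ∩ U)) B :=
    Classical.not_imp.1 (disjoint_left.1 hEA hz)
  obtain ⟨R, hER, hRbase, hR⟩ := AnalyticSet.measurablySeparable
    (hE.image_of_continuous continuous_fst_p) hbase
    (disjoint_left.2 <| forall_mem_image.2 fun z hz ↦ (mem_of_mem hz).2)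
  obtain ⟨S, hS, hAS, hSB⟩ := exists_isBorelFiberwiseClosed_of_disjoint_touchingBase
    (hAU.image_of_continuous hp) hB hR hRbase.symm
  have hES : Disjoint (E ∩ p ⁻¹' Sᶜ) A := disjoint_left.2 fun z ⟨hzE, hzS⟩ hzA ↦
    hzS (hAS ⟨⟨z, ⟨hzA, (mem_of_mem hzE).1⟩, rfl⟩, hER ⟨z, hzE, rfl⟩⟩)
  have hcover := hA.hasBorelClosedCover_image
    (analyticSet_inter hE (hS.measurableSet.compl.analyticSet.preimage hp)) hES
  refine ((HasBorelClosedCover.of_isBorelFiberwiseClosed hS hSB).union hcover).mono ?_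
  exact image_subset_iff.2 fun z hz ↦ or_iff_not_imp_left.2 fun hzS ↦ ⟨z, ⟨hz, hzS⟩, rfl⟩

theorem touchingDerivative (hA : IsCoverResidual p B A) (hp : Continuous p) (hB : AnalyticSet B) :
    IsCoverResidual p B (touchingDerivative p B A) :=
  hA.inter <| .iInter fun U ↦ hA.touchingSet hp hB (isOpen_of_mem_countableBasis U.2)

end IsCoverResidual

end Residual

section Scheme

variable {X Y Z W : Type*} [TopologicalSpace Y] [TopologicalSpace Z] [SecondCountableTopology Z]
  {p : Z → X × Y} {g : W → X × Y} {A A' : Set Z}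

/-- The data of a node of a scheme: a point of `Z`, and parameters of points of `range g`, where
`g` has domain `W`, one for each basic open set. -/
abbrev SchemeNode (Z W : Type*) [TopologicalSpace Z] [SecondCountableTopology Z] : Type _ :=
  Z × (countableBasis Z → W)

/-- A node of a scheme over `A`: a point of `A` together with, for each basic neighborhood `U` of
it, a parameter of a point of `range g` in the closure of `p '' (A ∩ U)` inside the same fiber. The
parameters attached to the other basic open sets are arbitrary. -/
def IsSchemeNode (p : Z → X × Y) (g : W → X × Y) (A : Set Z) (d : SchemeNode Z W) : Prop :=
  d.1 ∈ A ∧ ∀ U : countableBasis Z, d.1 ∈ U.1 →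
    (g (d.2 U)).1 = (p d.1).1 ∧ g (d.2 U) ∈ fiberClosure (p '' (A ∩ U))

theorem IsSchemeNode.mono {d : SchemeNode Z W} (h : IsSchemeNode p g A d)
    (hA : A ⊆ A') : IsSchemeNode p g A' d :=
  ⟨hA h.1, fun U hU ↦ ⟨(h.2 U hU).1,
    fiberClosure_mono (image_mono (inter_subset_inter_left _ hA)) (h.2 U hU).2⟩⟩

theorem exists_isSchemeNode {z : Z} (hz : z ∈ touchingDerivative p (range g) A) :
    ∃ d, d.1 = z ∧ IsSchemeNode p g A d := by
  have exists_param (U : countableBasis Z) (hU : z ∈ U.1) :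
      ∃ w, (g w).1 = (p z).1 ∧ g w ∈ fiberClosure (p '' (A ∩ U)) := by
    obtain ⟨_, ⟨hw, w, rfl⟩, hwz⟩ := mem_iInter.1 hz.2 U hU
    exact ⟨w, hwz, hw⟩
  obtain ⟨U, hU, hzU, -⟩ := (isBasis_countableBasis Z).exists_subset_of_mem_open (mem_univ z)
    isOpen_univ
  have : Nonempty W := ⟨(exists_param ⟨U, hU⟩ hzU).choose⟩
  choose! w hw using exists_param
  exact ⟨(z, w), rfl, hz.1, hw⟩

variable [SecondCountableTopology Y]

/-- The labels of the edges of a scheme. -/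
abbrev SchemeLabel (Y Z : Type*) [TopologicalSpace Y] [SecondCountableTopology Y]
    [TopologicalSpace Z] [SecondCountableTopology Z] : Type _ :=
  countableBasis Z × countableBasis Y

/-- The node `d'` is in the same fiber as `d` and, if the point of `range g` which `d` attaches to
`e.1` is over `e.2`, then `d'` approximates this point up to `e.2` from inside `e.1`. The closures
make this a closed condition on `d` and `d'`. -/
def IsSchemeChild (p : Z → X × Y) (g : W → X × Y) (e : SchemeLabel Y Z)
    (d d' : SchemeNode Z W) : Prop :=
  (p d'.1).1 = (p d.1).1 ∧ (d.1 ∈ e.1.1 → (g (d.2 e.1)).2 ∈ e.2.1 →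
    d'.1 ∈ closure e.1.1 ∧ (p d'.1).2 ∈ closure e.2.1)

/-- A tree whose nodes of height less than `m` are scheme nodes over `A` with their children among
each other. A position in the tree is the list of the edge labels leading to it, the last one
first. -/
def IsSchemeUpTo (p : Z → X × Y) (g : W → X × Y) (A : Set Z) (m : ℕ)
    (c : List (SchemeLabel Y Z) → SchemeNode Z W) : Prop :=
  (∀ s, s.length < m → IsSchemeNode p g A (c s)) ∧
    ∀ e s, s.length + 1 < m → IsSchemeChild p g e (c s) (c (e :: s))

theorem exists_isSchemeChild {d : SchemeNode Z W}
    (hd : IsSchemeNode p g (touchingDerivative p (range g) A) d)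
    (e : SchemeLabel Y Z) :
    ∃ d', IsSchemeNode p g A d' ∧ IsSchemeChild p g e d d' := by
  by_cases h : d.1 ∈ e.1.1 ∧ (g (d.2 e.1)).2 ∈ e.2.1
  · obtain ⟨hfst, hclosure⟩ := hd.2 e.1 h.1
    obtain ⟨y, hy, z, ⟨hzA, hz⟩, hpz⟩ := mem_closure_iff.1 hclosure e.2.1
      (isOpen_of_mem_countableBasis e.2.2) h.2
    obtain ⟨d', rfl, hd'⟩ := exists_isSchemeNode hzA
    refine ⟨d', hd', ?_, fun _ _ ↦ ⟨subset_closure hz, subset_closure ?_⟩⟩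
    exacts [hpz ▸ hfst, hpz ▸ hy]
  · exact ⟨d, hd.mono inter_subset_left, rfl, fun hU hV ↦ absurd ⟨hU, hV⟩ h⟩

theorem IsSchemeUpTo.exists_extension
    {c : List (SchemeLabel Y Z) → SchemeNode Z W} {m : ℕ}
    (hc : IsSchemeUpTo p g (touchingDerivative p (range g) A) m c)
    (hA : (touchingDerivative p (range g) A).Nonempty) :
    ∃ c', IsSchemeUpTo p g A (m + 1) c' ∧ ∀ s, s.length < m → c' s = c s := by
  obtain ⟨root, -, hroot⟩ := exists_isSchemeNode hA.some_mem
  have := Nonempty.intro root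
  choose! child hnode hchild using fun d ↦ exists_isSchemeChild (p := p) (g := g) (A := A) (d := d)
  let c' (s : List (SchemeLabel Y Z)) : SchemeNode Z W :=
    if s.length < m then c s else s.casesOn root fun e s ↦ child (c s) e
  have c'_of_lt {s} (hs : s.length < m) : c' s = c s := if_pos hs
  have c'_cons_of_le {e s} (hs : m ≤ (e :: s).length) : c' (e :: s) = child (c s) e :=
    if_neg hs.not_gt
  refine ⟨c', ⟨fun s hs ↦ ?_, fun e s hs ↦ ?_⟩, fun s ↦ c'_of_lt⟩
  · obtain hsm | hsm := lt_or_ge s.length m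
    · exact c'_of_lt hsm ▸ (hc.1 s hsm).mono inter_subset_left
    · cases s with
      | nil =>
        have c'_nil : c' [] = root := if_neg hsm.not_gt
        exact c'_nil ▸ hroot
      | cons e s => exact c'_cons_of_le hsm ▸ hnode _ (hc.1 s (by simpa using hs)) e
  · rw [c'_of_lt (by omega)]
    obtain hsm | hsm := lt_or_ge (e :: s).length m
    · exact c'_of_lt hsm ▸ hc.2 e s hsm
    · exact c'_cons_of_le hsm ▸ hchild _ (hc.1 s (by omega)) e

theorem isClosed_setOf_isSchemeChild [TopologicalSpace X] [T2Space X] [TopologicalSpace W]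
    (hp : Continuous p) (hg : Continuous g) (e : SchemeLabel Y Z) :
    IsClosed {d : SchemeNode Z W × SchemeNode Z W | IsSchemeChild p g e d.1 d.2} := by
  have hU := isOpen_of_mem_countableBasis e.1.2
  have hV := isOpen_of_mem_countableBasis e.2.2
  exact (isClosed_eq (by fun_prop) (by fun_prop)).inter <|
    isClosed_imp (hU.preimage (by fun_prop)) <|
    isClosed_imp (hV.preimage (f := fun d : SchemeNode Z W × SchemeNode Z W ↦ (g (d.1.2 e.1)).2)
      (by fun_prop)) <|
    (isClosed_closure.preimage (f := fun d : SchemeNode Z W × SchemeNode Z W ↦ d.2.1)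
      (by fun_prop)).inter <|
    isClosed_closure.preimage (f := fun d : SchemeNode Z W × SchemeNode Z W ↦ (p d.2.1).2)
      (by fun_prop)

end Scheme

section Fusion

variable {X Y Z W : Type*} [TopologicalSpace X] [T2Space X] [TopologicalSpace Y]
  [SecondCountableTopology Y] [TopologicalSpace Z] [PolishSpace Z]
  {p : Z → X × Y} {g : W → X × Y}

theorem exists_scheme [TopologicalSpace W] [PolishSpace W] (hp : Continuous p) (hg : Continuous g)
    {𝓕 : Set (Set Z)} (huniv : univ ∈ 𝓕) (hinter : ∀ A : ℕ → Set Z, (∀ n, A n ∈ 𝓕) → ⋂ n, A n ∈ 𝓕)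
    (hderiv : ∀ A ∈ 𝓕, touchingDerivative p (range g) A ∈ 𝓕) (hne : ∀ A ∈ 𝓕, A.Nonempty) :
    ∃ c : List (SchemeLabel Y Z) → SchemeNode Z W,
      (∀ s (U : countableBasis Z), (c s).1 ∈ U.1 → (g ((c s).2 U)).1 = (p (c s).1).1) ∧
        ∀ e s, IsSchemeChild p g e (c s) (c (e :: s)) := by
  let T (A : 𝓕) (m : ℕ) : Set (List (SchemeLabel Y Z) → SchemeNode Z W) :=
    {c | IsSchemeUpTo p g A m c}
  have hmono (m : ℕ) : Monotone (T · m) := fun A A' hA c hc ↦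
    ⟨fun s hs ↦ (hc.1 s hs).mono hA, hc.2⟩
  have hanti (A : 𝓕) : Antitone (T A) := fun m m' hm c hc ↦
    ⟨fun s hs ↦ hc.1 s (hs.trans_le hm), fun e s hs ↦ hc.2 e s (hs.trans_le hm)⟩
  have hext := exists_extension_of_exists_extension_succ (rank := List.length) hanti
    fun A m ↦ ⟨⟨_, hderiv A A.2⟩, fun c hc ↦ hc.exists_extension (hne _ (hderiv A A.2))⟩
  obtain ⟨root, -⟩ := exists_isSchemeNode (g := g) (hne _ (hderiv _ huniv)).some_mem
  have := Nonempty.intro root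
  have hT (A : 𝓕) (m : ℕ) : (T A m).Nonempty := by
    obtain ⟨A', hA'⟩ := hext A 0 m
    obtain ⟨c, hc, -⟩ := hA' (fun _ ↦ root) ⟨by simp, by simp⟩
    exact ⟨c, hc⟩
  obtain ⟨c, hc⟩ := exists_forall_mem_closure_of_exists_extension
    (fun A ↦ ⟨⟨_, hinter (fun n ↦ A n) fun n ↦ (A n).2⟩, iInter_subset _⟩) hmono hT hext
  refine ⟨c, fun s U ↦ ?_, fun e s ↦ ?_⟩
  · refine closure_minimal (t := {c | (c s).1 ∈ U.1 → (g ((c s).2 U)).1 = (p (c s).1).1})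
      (fun c hc hU ↦ ((hc.1 s s.length.lt_succ_self).2 U hU).1) ?_
      (hc ⟨univ, huniv⟩ (s.length + 1))
    have hU := isOpen_of_mem_countableBasis U.2
    exact isClosed_imp (hU.preimage (by fun_prop)) (isClosed_eq (by fun_prop) (by fun_prop))
  · refine closure_minimal (t := {c | IsSchemeChild p g e (c s) (c (e :: s))})
      (fun c hc ↦ hc.2 e s (Nat.lt_succ_self _)) ?_ (hc ⟨univ, huniv⟩ (s.length + 2))
    exact (isClosed_setOf_isSchemeChild hp hg e).preimage
      (f := fun c : List (SchemeLabel Y Z) → SchemeNode Z W ↦ (c s, c (e :: s))) (by fun_prop)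

theorem exists_isOpen_inter_subset_of_closure_subset_iUnion {ι : Type*} [Countable ι] {C : Set Z}
    (hC : C.Nonempty) {K : ι → Set Z} (hK : ∀ i, IsClosed (K i)) (hCK : closure C ⊆ ⋃ i, K i) :
    ∃ i O, IsOpen O ∧ (C ∩ O).Nonempty ∧ C ∩ O ⊆ K i := by
  have : PolishSpace (closure C) := isClosed_closure.polishSpace
  have : Nonempty (closure C) := hC.closure.to_subtype
  obtain ⟨i, z, hz⟩ := nonempty_interior_of_iUnion_of_closed
    (fun i ↦ (hK i).preimage (continuous_subtype_val (p := (· ∈ closure C))))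
    (by rw [← preimage_iUnion]; exact eq_univ_of_forall fun z ↦ hCK z.2)
  obtain ⟨O', hO'K, ⟨O, hO, rfl⟩, hzO⟩ := mem_interior.1 hz
  obtain ⟨z', hz'O, hz'C⟩ := mem_closure_iff.1 z.2 O hO hzO
  exact ⟨i, O, hO, ⟨z', hz'C, hz'O⟩, fun z hz ↦ hO'K (a := ⟨z, subset_closure hz.1⟩) hz.2⟩

theorem not_exists_scheme [RegularSpace Y] (hp : Continuous p)
    (hK : ∀ x, ∃ K : ℕ → Set Y, (∀ n, IsClosed (K n)) ∧ Prod.mk x ⁻¹' range p ⊆ ⋃ n, K n ∧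
      ∀ n, Disjoint (K n) (Prod.mk x ⁻¹' range g))
    {c : List (SchemeLabel Y Z) → SchemeNode Z W}
    (hcg : ∀ s (U : countableBasis Z), (c s).1 ∈ U.1 → (g ((c s).2 U)).1 = (p (c s).1).1)
    (hchild : ∀ e s, IsSchemeChild p g e (c s) (c (e :: s))) : False := by
  let x := (p (c []).1).1
  have fst_eq (s) : (p (c s).1).1 = x := by
    induction s with
    | nil => rfl
    | cons e s ih => exact (hchild e s).1.trans ih
  obtain ⟨K, hK, hpK, hgK⟩ := hK x
  let C := range fun s ↦ (c s).1
  have fst_eq_of_mem_closure : closure C ⊆ {z | (p z).1 = x} :=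
    closure_minimal (range_subset_iff.2 fst_eq) (isClosed_eq (by fun_prop) continuous_const)
  obtain ⟨n, O, hO, ⟨_, ⟨s, rfl⟩, hsO⟩, hCO⟩ := exists_isOpen_inter_subset_of_closure_subset_iUnion
    (range_nonempty _) (C := C) (K := fun n ↦ {z | (p z).2 ∈ K n})
    (fun n ↦ (hK n).preimage (by fun_prop)) fun z hz ↦ by
      simpa using hpK (a := (p z).2) ⟨z, Prod.ext (fst_eq_of_mem_closure hz) rfl⟩
  obtain ⟨U, hU, hsU, hUO⟩ := (isBasis_countableBasis Z).exists_closure_subset (hO.mem_nhds hsO)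
  let q := g ((c s).2 ⟨U, hU⟩)
  have fst_q : q.1 = x := (hcg s ⟨U, hU⟩ hsU).trans (fst_eq s)
  have snd_q : q.2 ∈ K n := by
    by_contra hqK
    obtain ⟨V, hV, hqV, hVK⟩ := (isBasis_countableBasis Y).exists_closure_subset
      ((hK n).isOpen_compl.mem_nhds hqK)
    let e : SchemeLabel Y Z := (⟨U, hU⟩, ⟨V, hV⟩)
    obtain ⟨heU, heV⟩ := (hchild e s).2 hsU hqV
    exact hVK heV (hCO ⟨⟨e :: s, rfl⟩, hUO heU⟩)
  exact disjoint_left.1 (hgK n) snd_q ⟨_, Prod.ext fst_q rfl⟩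

end Fusion

section Projection

variable {X Y : Type*} [TopologicalSpace Y]

/-- **Saint Raymond separation theorem** -/
theorem hasBorelClosedCover_of_analyticSet [TopologicalSpace X] [PolishSpace X] [MeasurableSpace X]
    [BorelSpace X] [PolishSpace Y] {A B : Set (X × Y)} (hA : AnalyticSet A) (hB : AnalyticSet B)
    (hK : ∀ x, ∃ K : ℕ → Set Y, (∀ n, IsClosed (K n)) ∧ Prod.mk x ⁻¹' A ⊆ ⋃ n, K n ∧
      ∀ n, Disjoint (K n) (Prod.mk x ⁻¹' B)) :
    HasBorelClosedCover B A := by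
  obtain ⟨Z, _, _, p, hp, rfl⟩ := analyticSet_iff_exists_polishSpace_range.1 hA
  obtain ⟨W, _, _, g, hg, rfl⟩ := analyticSet_iff_exists_polishSpace_range.1 hB
  by_contra hcover
  obtain ⟨c, hcg, hchild⟩ := exists_scheme hp hg (𝓕 := {C | IsCoverResidual p (range g) C})
    .univ (fun _ ↦ .iInter) (fun _ hC ↦ hC.touchingDerivative hp hB) fun _ hC ↦ hC.nonempty hcover
  exact not_exists_scheme hp hK hcg hchild

theorem measurableSet_image_fst_of_isClosed_sections [MeasurableSpace X] [StandardBorelSpace X]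
    [CompactSpace Y] [MetrizableSpace Y] [MeasurableSpace Y] [BorelSpace Y] {P : Set (X × Y)}
    (hP : MeasurableSet P)
    (hK : ∀ x, ∃ K : ℕ → Set Y, (∀ n, IsClosed (K n)) ∧ ⋃ n, K n = Prod.mk x ⁻¹' P) :
    MeasurableSet (Prod.fst '' P) := by
  let _ := upgradeStandardBorel X
  let _ := metrizableSpaceMetric Y
  refine (hasBorelClosedCover_of_analyticSet hP.analyticSet hP.compl.analyticSet
    fun x ↦ ?_).measurableSet_image_fst
  obtain ⟨K, hK, hKP⟩ := hK x
  refine ⟨K, hK, hKP.ge, fun n ↦ ?_⟩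
  rw [preimage_compl, ← hKP]
  exact disjoint_compl_right.mono_left (subset_iUnion K n)

theorem stmt_9_general [MeasurableSpace X] [StandardBorelSpace X] [PolishSpace Y]
    [MeasurableSpace Y] [BorelSpace Y] {P : Set (X × Y)} (hP : MeasurableSet P)
    (hsec : ∀ x, IsSigmaCompact {y | (x, y) ∈ P}) : MeasurableSet {x | ∃ y, (x, y) ∈ P} := by
  let _ := upgradeIsCompletelyMetrizable Y
  obtain ⟨F, hF⟩ := Metric.PiNatEmbed.exists_embedding_to_hilbert_cube (X := Y)
  let Φ : X × Y → X × (ℕ → unitInterval) := Prod.map id F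
  have hΦ : MeasurableEmbedding Φ :=
    MeasurableEmbedding.id.prodMap (hF.continuous.measurableEmbedding hF.injective)
  have image_fst : Prod.fst '' (Φ '' P) = {x | ∃ y, (x, y) ∈ P} := by
    ext x
    simp [Φ]
  refine image_fst ▸ measurableSet_image_fst_of_isClosed_sections (hΦ.measurableSet_image.2 hP)
    fun x ↦ ?_
  obtain ⟨K, hK, hKP⟩ := hsec x
  refine ⟨fun n ↦ F '' K n, fun n ↦ ((hK n).image hF.continuous).isClosed, ?_⟩
  rw [← image_iUnion, hKP]
  ext y
  simp [Φ]

end Projection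

theorem stmt_9 {X : Type*} [TopologicalSpace X] [PolishSpace X]
    [MeasurableSpace X] [BorelSpace X]
    (P : Set (X × (ℕ → ℕ))) (hP : MeasurableSet P)
    (hsec : ∀ x : X, IsSigmaCompact {y : ℕ → ℕ | (x, y) ∈ P}) :
    MeasurableSet {x : X | ∃ y, (x, y) ∈ P} :=
  stmt_9_general hP hsec
end

section
/- (Arsenin–Kunugui uniformization) Let X be a Polish space and P ⊆ X × ℕ^ℕ a Borel set all of whose vertical sections are σ-compact. Then there is a Borel set Q ⊆ P such that for every x with nonempty section P_x, the section Q_x contains exactly one point. -/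
/-!
The fibre embeds in the Hilbert cube, so it may be assumed compact. By a theorem of Saint Raymond,
`P` is then a countable union of Borel sets with closed sections, in fact of complements of
countable unions of measurable-by-open rectangles. Projections of such sets are measurable by
compactness, so each of them is uniformized by minimizing one coordinate after another along the
sections. The resulting uniformizations are glued along the disjointed projections.

Saint Raymond's theorem follows from a separation statement: if `A` and `B` are analytic and every
section `B_x` has a `Gδ` superset disjoint from `A_x`, then countably many section-closed sets
disjoint from `B` cover `A`. Otherwise write `A = range f` and `B = range g` with Polish domains,
and consider pairs `(M, N)` of closed sets for which `f '' M` and `g '' N` remain inseparable over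
a common proper countably complete filter on `X`. A generic family of such pairs has right sides
that shrink to points `b i`, all of whose images lie over a single `x`, while every left side has
arbitrarily small left sides inside it whose images are close to that of `b i`. Given a `Gδ` set
`G = ⋂ n, V n` containing `B_x`, one descends through left sides, entering `V n` at step `n`; the
limit `a` gives a point `f a` over `x` that lies in both `A_x` and `G`.
-/

open Filter MeasureTheory Set Topology
open scoped ENNReal

section SectionOpen

variable {X Z : Type*} [MeasurableSpace X] [TopologicalSpace Z]

/-- A countable union of measurable-by-open rectangles. When `X` and `Z` are Polish, the
Kunugui–Novikov theorem says that these are exactly the Borel sets all of whose vertical sections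
are open. -/
def SectionOpen (O : Set (X × Z)) : Prop :=
  ∃ R : Set (Set X × Set Z), R.Countable ∧ (∀ r ∈ R, MeasurableSet r.1 ∧ IsOpen r.2) ∧
    O = ⋃ r ∈ R, r.1 ×ˢ r.2

/-- The complement of a countable union of measurable-by-open rectangles. -/
def SectionClosed (C : Set (X × Z)) : Prop :=
  SectionOpen Cᶜ

theorem SectionOpen.prod {E : Set X} {U : Set Z} (hE : MeasurableSet E) (hU : IsOpen U) :
    SectionOpen (E ×ˢ U) :=
  ⟨{(E, U)}, countable_singleton _, by simp [hE, hU], by simp⟩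

theorem SectionOpen.iUnion {ι : Sort*} [Countable ι] {O : ι → Set (X × Z)}
    (hO : ∀ i, SectionOpen (O i)) : SectionOpen (⋃ i, O i) := by
  choose R hR_countable hR hO_eq using hO
  refine ⟨⋃ i, R i, countable_iUnion hR_countable, ?_, ?_⟩
  · simp only [mem_iUnion]
    rintro r ⟨i, hi⟩
    exact hR i r hi
  · rw [biUnion_iUnion, iUnion_congr hO_eq]

theorem SectionOpen.union {O O' : Set (X × Z)} (hO : SectionOpen O) (hO' : SectionOpen O') :
    SectionOpen (O ∪ O') := by
  rw [union_eq_iUnion]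
  exact .iUnion (Bool.forall_bool.2 ⟨hO', hO⟩)

theorem SectionOpen.fst_preimage {E : Set X} (hE : MeasurableSet E) :
    SectionOpen (Prod.fst ⁻¹' E : Set (X × Z)) := by
  rw [← prod_univ]
  exact .prod hE isOpen_univ

theorem SectionOpen.measurableSet [MeasurableSpace Z] [OpensMeasurableSpace Z]
    {O : Set (X × Z)} (hO : SectionOpen O) : MeasurableSet O := by
  obtain ⟨R, hR_countable, hR, rfl⟩ := hO
  exact .biUnion hR_countable fun r hr ↦ (hR r hr).1.prod (hR r hr).2.measurableSet

theorem SectionOpen.isOpen_section {O : Set (X × Z)} (hO : SectionOpen O) (x : X) :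
    IsOpen (Prod.mk x ⁻¹' O) := by
  obtain ⟨R, -, hR, rfl⟩ := hO
  simp only [preimage_iUnion]
  refine isOpen_biUnion fun r hr ↦ ?_
  by_cases hx : x ∈ r.1 <;> simp [hx, (hR r hr).2]

theorem SectionOpen.sectionClosed_compl {O : Set (X × Z)} (hO : SectionOpen O) :
    SectionClosed Oᶜ := by
  rwa [SectionClosed, compl_compl]

theorem SectionClosed.snd_preimage {K : Set Z} (hK : IsClosed K) :
    SectionClosed (Prod.snd ⁻¹' K : Set (X × Z)) := by
  rw [SectionClosed, ← preimage_compl, ← univ_prod]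
  exact .prod .univ hK.isOpen_compl

theorem SectionClosed.iInter {ι : Sort*} [Countable ι] {C : ι → Set (X × Z)}
    (hC : ∀ i, SectionClosed (C i)) : SectionClosed (⋂ i, C i) := by
  rw [SectionClosed, compl_iInter]
  exact .iUnion hC

theorem SectionClosed.inter {C C' : Set (X × Z)} (hC : SectionClosed C)
    (hC' : SectionClosed C') : SectionClosed (C ∩ C') := by
  rw [SectionClosed, compl_inter]
  exact hC.union hC'

theorem SectionClosed.measurableSet [MeasurableSpace Z] [OpensMeasurableSpace Z]
    {C : Set (X × Z)} (hC : SectionClosed C) : MeasurableSet C :=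
  (SectionOpen.measurableSet hC).of_compl

theorem SectionClosed.isClosed_section {C : Set (X × Z)} (hC : SectionClosed C) (x : X) :
    IsClosed (Prod.mk x ⁻¹' C) :=
  isOpen_compl_iff.1 (SectionOpen.isOpen_section hC x)

theorem SectionClosed.measurableSet_fst_image [CompactSpace Z] {C : Set (X × Z)}
    (hC : SectionClosed C) : MeasurableSet (Prod.fst '' C) := by
  obtain ⟨R, hR_countable, hR, hC_eq⟩ := hC
  -- `x` lies outside the projection iff finitely many of the rectangles over `x` cover the fibre.
  have h_compl : (Prod.fst '' C)ᶜ =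
      ⋃ F ∈ {F : Set (Set X × Set Z) | F.Finite ∧ F ⊆ R} ∩ {F | ⋃ r ∈ F, r.2 = univ},
        ⋂ r ∈ F, r.1 := by
    ext x
    have h_not_mem : x ∈ (Prod.fst '' C)ᶜ ↔ univ ⊆ ⋃ r ∈ {r ∈ R | x ∈ r.1}, r.2 := by
      have h_section : ∀ z, (x, z) ∉ C ↔ ∃ r ∈ R, x ∈ r.1 ∧ z ∈ r.2 := fun z ↦ by
        simp only [← mem_compl_iff (s := C), hC_eq, mem_iUnion₂, mem_prod, exists_prop]
      simp [subset_def, h_section, and_assoc]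
    rw [h_not_mem]
    constructor
    · intro h_cover
      obtain ⟨F, hF, hF_finite, hF_cover⟩ :=
        isCompact_univ.elim_finite_subcover_image (fun r hr ↦ (hR r hr.1).2) h_cover
      exact mem_biUnion ⟨⟨hF_finite, fun r hr ↦ (hF hr).1⟩, univ_subset_iff.1 hF_cover⟩
        (mem_iInter₂.2 fun r hr ↦ (hF hr).2)
    · simp only [mem_iUnion₂, mem_iInter₂]
      rintro ⟨F, ⟨⟨-, hFR⟩, hF_cover⟩, hxF⟩
      rw [← show ⋃ r ∈ F, r.2 = univ from hF_cover]
      exact biUnion_mono (fun r hr ↦ ⟨hFR hr, hxF r hr⟩) fun _ _ ↦ subset_rfl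
  refine .of_compl (h_compl ▸ .biUnion ((countable_ofPred_finite_subset hR_countable).mono
    inter_subset_left) fun F hF ↦ .biInter hF.1.1.countable fun r hr ↦ (hR r (hF.1.2 hr)).1)

end SectionOpen

section Filters

theorem exists_neBot_inf_of_le_iSup {α ι : Type*} [Countable ι] {l : Filter α} [l.NeBot]
    [CountableInterFilter l] {F : ι → Filter α} (h : l ≤ ⨆ i, F i) :
    ∃ i, (l ⊓ F i).NeBot := by
  by_contra! h_bot
  choose s hs t ht hst using fun i ↦ inf_eq_bot_iff.1 (h_bot i)
  have hs_inter : ⋂ i, s i ∈ l := countable_iInter_mem.2 hs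
  have ht_union : ⋃ i, t i ∈ l :=
    h (mem_iSup.2 fun i ↦ mem_of_superset (ht i) (subset_iUnion t i))
  obtain ⟨x, hxs, hxt⟩ := l.nonempty_of_mem (inter_mem hs_inter ht_union)
  obtain ⟨i, hi⟩ := mem_iUnion.1 hxt
  exact (hst i).subset ⟨mem_iInter.1 hxs i, hi⟩

variable {X Z : Type*} [MeasurableSpace X] [TopologicalSpace Z]

/-- The filter generated by the countable intersections of section-open supersets of `B`. Thus
`Aᶜ ∈ sectionGdelta B` says that countably many section-closed sets disjoint from `B` cover `A`. -/
def sectionGdelta (B : Set (X × Z)) : Filter (X × Z) :=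
  countableGenerate {O | SectionOpen O ∧ B ⊆ O}

instance (B : Set (X × Z)) : CountableInterFilter (sectionGdelta B) :=
  inferInstanceAs (CountableInterFilter (countableGenerate _))

theorem SectionOpen.mem_sectionGdelta {B O : Set (X × Z)} (hO : SectionOpen O) (hBO : B ⊆ O) :
    O ∈ sectionGdelta B :=
  CountableGenerateSets.basic ⟨hO, hBO⟩

theorem exists_sectionOpen_of_mem_sectionGdelta {B S : Set (X × Z)} (hS : S ∈ sectionGdelta B) :
    ∃ O : ℕ → Set (X × Z), (∀ n, SectionOpen (O n)) ∧ (∀ n, B ⊆ O n) ∧ ⋂ n, O n ⊆ S := by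
  obtain ⟨G, hG, hG_countable, hGS⟩ := mem_countableGenerate_iff.1 hS
  have h_univ : SectionOpen (univ : Set (X × Z)) := .fst_preimage .univ
  obtain ⟨O, hO⟩ := (hG_countable.insert univ).exists_eq_range (insert_nonempty _ _)
  have hO_mem n : SectionOpen (O n) ∧ B ⊆ O n := by
    obtain h | h := hO ▸ mem_range_self n
    · exact ⟨h ▸ h_univ, h ▸ subset_univ _⟩
    · exact hG h
  refine ⟨O, fun n ↦ (hO_mem n).1, fun n ↦ (hO_mem n).2, ?_⟩
  rw [← sInter_range, ← hO]
  exact (sInter_subset_sInter (subset_insert _ _)).trans hGS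

/-- The sets `E ⊆ X` containing a measurable `D` such that, away from the fibres over `D`, some
section-open set contains `T` and is disjoint from `S` up to a set that is negligible for
`sectionGdelta B`. This filter is proper iff `S` cannot be separated from `T` in this way with
`D = ∅`. -/
def inseparabilityFilter (B S T : Set (X × Z)) : Filter X :=
  ofCountableInter
    {E | ∃ D ⊆ E, MeasurableSet D ∧ ∃ O, SectionOpen O ∧ T ⊆ O ∪ Prod.fst ⁻¹' D ∧
      ∀ᶠ p in sectionGdelta B, p ∈ S → p ∉ O}
    (by
      intro 𝓔 h𝓔_countable h𝓔
      choose D hDE hD O hO hTO hSO using fun E : 𝓔 ↦ h𝓔 E.2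
      have := h𝓔_countable.to_subtype
      refine ⟨⋂ E, D E, ?_, .iInter hD, ⋃ E, O E, .iUnion hO, fun p hp ↦ ?_, ?_⟩
      · exact subset_sInter fun E hE ↦ (iInter_subset D ⟨E, hE⟩).trans (hDE ⟨E, hE⟩)
      · simp only [mem_union, mem_iUnion, mem_preimage, mem_iInter, or_iff_not_imp_left, not_exists]
        exact fun hpO E ↦ (hTO E hp).resolve_left (hpO E)
      · filter_upwards [eventually_countable_forall.2 hSO] with p hp hpS
        simpa only [mem_iUnion, not_exists] using fun E ↦ hp E hpS)
    fun _ _ ⟨D, hDE, hD⟩ hEE' ↦ ⟨D, hDE.trans hEE', hD⟩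

variable {B S T : Set (X × Z)}

instance : CountableInterFilter (inseparabilityFilter B S T) :=
  inferInstanceAs (CountableInterFilter (ofCountableInter ..))

theorem mem_inseparabilityFilter_of_mapsTo_left {E : Set X} (hE : MeasurableSet E)
    (hS : MapsTo Prod.fst S E) : E ∈ inseparabilityFilter B S T :=
  ⟨E, subset_rfl, hE, Prod.fst ⁻¹' Eᶜ, .fst_preimage hE.compl, fun p _ ↦ (em (p.1 ∈ E)).symm,
    .of_forall fun _ hp hpE ↦ hpE (hS hp)⟩

theorem mem_inseparabilityFilter_of_mapsTo_right {E : Set X} (hE : MeasurableSet E)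
    (hT : MapsTo Prod.fst T E) : E ∈ inseparabilityFilter B S T :=
  ⟨E, subset_rfl, hE, Prod.fst ⁻¹' ∅, .fst_preimage .empty, fun _ hp ↦ .inr (hT hp),
    .of_forall fun _ _ ↦ id⟩

theorem mem_inseparabilityFilter_self {E : Set X} : E ∈ inseparabilityFilter B S B ↔
    ∃ D ⊆ E, MeasurableSet D ∧ ∀ᶠ p in sectionGdelta B, p ∈ S → p.1 ∈ D := by
  constructor
  · rintro ⟨D, hDE, hD, O, hO, hBO, hSO⟩
    refine ⟨D, hDE, hD, ?_⟩
    filter_upwards [hSO, (hO.union (.fst_preimage hD)).mem_sectionGdelta hBO] with p hpS hpO hp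
    exact hpO.resolve_left (hpS hp)
  · rintro ⟨D, hDE, hD, hSD⟩
    exact ⟨D, hDE, hD, Prod.fst ⁻¹' Dᶜ, .fst_preimage hD.compl, fun p _ ↦ (em (p.1 ∈ D)).symm,
      hSD.mono fun _ hp hpS hpD ↦ hpD (hp hpS)⟩

theorem inseparabilityFilter_self_neBot {A : Set (X × Z)} (hA : Aᶜ ∉ sectionGdelta B) :
    (inseparabilityFilter B A B).NeBot := by
  rw [neBot_iff, ne_eq, ← empty_mem_iff_bot, mem_inseparabilityFilter_self]
  rintro ⟨D, hD, -, h⟩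
  rw [subset_empty_iff.1 hD] at h
  exact hA h

theorem inseparabilityFilter_le_iSup_right {ι : Type*} [Countable ι] {T' : ι → Set (X × Z)}
    (hT : T ⊆ ⋃ i, T' i) :
    inseparabilityFilter B S T ≤ ⨆ i, inseparabilityFilter B S (T' i) := by
  intro E hE
  choose D hDE hD O hO hTO hSO using mem_iSup.1 hE
  refine ⟨⋃ i, D i, iUnion_subset hDE, .iUnion hD, ⋃ i, O i, .iUnion hO, fun p hp ↦ ?_, ?_⟩
  · obtain ⟨i, hi⟩ := mem_iUnion.1 (hT hp)
    exact (hTO i hi).imp (mem_iUnion_of_mem i) fun h ↦ mem_iUnion_of_mem i h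
  · filter_upwards [eventually_countable_forall.2 hSO] with p hp hpS
    simpa only [mem_iUnion, not_exists] using fun i ↦ hp i hpS

theorem inseparabilityFilter_le_iSup_self {ι : Type*} [Countable ι] {S' : ι → Set (X × Z)}
    {U : Set Z} (hU : IsOpen U) (hT : MapsTo Prod.snd T U) (hS : S ∩ Prod.snd ⁻¹' U ⊆ ⋃ i, S' i) :
    inseparabilityFilter B S T ≤ ⨆ i, inseparabilityFilter B (S' i) B := by
  intro E hE
  choose D hDE hD hSD using fun i ↦ mem_inseparabilityFilter_self.1 (mem_iSup.1 hE i)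
  have hD_union : MeasurableSet (⋃ i, D i) := .iUnion hD
  refine ⟨⋃ i, D i, iUnion_subset hDE, hD_union, (⋃ i, D i)ᶜ ×ˢ U, .prod hD_union.compl hU,
    fun p hp ↦ ?_, ?_⟩
  · exact (em (p.1 ∈ ⋃ i, D i)).symm.imp (⟨·, hT hp⟩) id
  · filter_upwards [eventually_countable_forall.2 hSD] with p hp hpS ⟨hpD, hpU⟩
    obtain ⟨i, hi⟩ := mem_iUnion.1 (hS ⟨hpS, hpU⟩)
    exact hpD (mem_iUnion_of_mem i (hp i hi))

end Filters

section Metric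

theorem ediam_eball_half_le {α : Type*} [PseudoEMetricSpace α] (a : α) (ε : ℝ≥0∞) :
    Metric.ediam (Metric.eball a (ε / 2)) ≤ ε :=
  Metric.ediam_eball_le.trans_eq (ENNReal.mul_div_cancel two_ne_zero ENNReal.ofNat_ne_top)

theorem exists_mem_forall_of_directed_of_ediam_le {α ι : Type*} [PseudoEMetricSpace α]
    [CompleteSpace α] [Nonempty ι] {t : ι → Set α} (ht_closed : ∀ i, IsClosed (t i))
    (ht_nonempty : ∀ i, (t i).Nonempty) (ht_directed : Directed (· ⊇ ·) t)
    (ht_small : ∀ ε > 0, ∃ i, Metric.ediam (t i) ≤ ε) :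
    ∃ a, (∀ i, a ∈ t i) ∧ ∀ V ∈ 𝓝 a, ∃ i, t i ⊆ V := by
  have h_directed : Directed (· ≥ ·) fun i ↦ 𝓟 (t i) :=
    fun i j ↦ (ht_directed i j).imp fun _ ↦ .imp principal_mono.2 principal_mono.2
  have : Nonempty α := (ht_nonempty (Classical.arbitrary ι)).to_type
  have h_neBot : (⨅ i, 𝓟 (t i)).NeBot :=
    iInf_neBot_of_directed h_directed fun i ↦ principal_neBot_iff.2 (ht_nonempty i)
  have h_cauchy : Cauchy (⨅ i, 𝓟 (t i)) := by
    refine EMetric.cauchy_iff.2 ⟨h_neBot.ne, fun ε hε ↦ ?_⟩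
    obtain ⟨δ, hδ, hδε⟩ := exists_between hε
    obtain ⟨i, hi⟩ := ht_small δ hδ
    exact ⟨t i, mem_iInf_of_mem i (mem_principal_self _), fun x hx y hy ↦
      ((Metric.edist_le_ediam_of_mem hx hy).trans hi).trans_lt hδε⟩
  obtain ⟨a, ha⟩ := CompleteSpace.complete h_cauchy
  refine ⟨a, fun i ↦ ?_, fun V hV ↦ ?_⟩
  · exact isClosed_iff_clusterPt.1 (ht_closed i) a (h_neBot.mono (le_inf ha (iInf_le _ i)))
  · simpa only [mem_iInf_of_directed h_directed, mem_principal] using ha hV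

end Metric

section Linked

variable {α β X Z : Type*} [TopologicalSpace α] [TopologicalSpace β] [MeasurableSpace X]
  [TopologicalSpace Z] {f : α → X × Z} {g : β → X × Z} {l : Filter X} {M : Set α} {N : Set β}

/-- The pieces `f '' M` and `g '' N` of the two ranges cannot be separated over any set of base
points in `l`. -/
structure Linked (f : α → X × Z) (g : β → X × Z) (l : Filter X) (M : Set α) (N : Set β) :
    Prop where
  isClosed_left : IsClosed M
  isClosed_right : IsClosed N
  le : l ≤ inseparabilityFilter (range g) (f '' M) (g '' N)

namespace Linked

theorem univ_univ (hl : l ≤ inseparabilityFilter (range g) (range f) (range g)) :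
    Linked f g l univ univ :=
  ⟨isClosed_univ, isClosed_univ, by simpa only [image_univ] using hl⟩

theorem mono (h : Linked f g l M N) {l' : Filter X} (hl : l' ≤ l) : Linked f g l' M N :=
  ⟨h.isClosed_left, h.isClosed_right, hl.trans h.le⟩

theorem mem_of_mapsTo_left (h : Linked f g l M N) {E : Set X} (hE : MeasurableSet E)
    (hM : MapsTo (fun a ↦ (f a).1) M E) : E ∈ l :=
  h.le (mem_inseparabilityFilter_of_mapsTo_left hE (mapsTo_image_iff.2 hM))

theorem mem_of_mapsTo_right (h : Linked f g l M N) {E : Set X} (hE : MeasurableSet E)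
    (hN : MapsTo (fun b ↦ (g b).1) N E) : E ∈ l :=
  h.le (mem_inseparabilityFilter_of_mapsTo_right hE (mapsTo_image_iff.2 hN))

theorem nonempty_left [l.NeBot] (h : Linked f g l M N) : M.Nonempty := by
  by_contra! hM
  exact empty_notMem l (h.mem_of_mapsTo_left .empty (hM ▸ mapsTo_empty _ _))

theorem nonempty_right [l.NeBot] (h : Linked f g l M N) : N.Nonempty := by
  by_contra! hN
  exact empty_notMem l (h.mem_of_mapsTo_right .empty (hN ▸ mapsTo_empty _ _))

variable [l.NeBot] [CountableInterFilter l]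

theorem exists_shrink_right [SecondCountableTopology β] [RegularSpace β]
    (h : Linked f g l M N) {W : β → Set β} (hW : ∀ b, W b ∈ 𝓝 b) :
    ∃ b, ∃ N' ⊆ N ∩ W b, ∃ l' ≤ l, l'.NeBot ∧ CountableInterFilter l' ∧ Linked f g l' M N' := by
  choose V hV_nhds hV_closed hVW using fun b ↦ exists_mem_nhds_isClosed_subset (hW b)
  obtain ⟨s, hs_countable, hs_cover⟩ := TopologicalSpace.countable_cover_nhds hV_nhds
  have := hs_countable.to_subtype
  have h_cover : g '' N ⊆ ⋃ b : s, g '' (N ∩ V b) := by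
    rw [← image_iUnion, ← inter_iUnion, iUnion_subtype, hs_cover, inter_univ]
  obtain ⟨b, hb⟩ :=
    exists_neBot_inf_of_le_iSup (h.le.trans (inseparabilityFilter_le_iSup_right h_cover))
  exact ⟨b, N ∩ V b, inter_subset_inter_right N (hVW b), _, inf_le_left, hb, inferInstance,
    h.isClosed_left, h.isClosed_right.inter (hV_closed b), inf_le_right⟩

theorem exists_child [SecondCountableTopology α] [RegularSpace α]
    (h : Linked f g l M N) (hf : Continuous fun a ↦ (f a).2) {W : α → Set α}
    (hW : ∀ a, W a ∈ 𝓝 a) {U : Set Z} (hU : IsOpen U) (hNU : MapsTo (fun b ↦ (g b).2) N U) :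
    ∃ a, ∃ M' ⊆ M ∩ W a, MapsTo (fun a ↦ (f a).2) M' (closure U) ∧
      ∃ l' ≤ l, l'.NeBot ∧ CountableInterFilter l' ∧ Linked f g l' M' univ := by
  choose V hV_nhds hV_closed hVW using fun a ↦ exists_mem_nhds_isClosed_subset (hW a)
  obtain ⟨s, hs_countable, hs_cover⟩ := TopologicalSpace.countable_cover_nhds hV_nhds
  have := hs_countable.to_subtype
  let M' a := M ∩ V a ∩ (fun a ↦ (f a).2) ⁻¹' closure U
  have h_cover : f '' M ∩ Prod.snd ⁻¹' U ⊆ ⋃ a : s, f '' M' a := by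
    rintro _ ⟨⟨a, haM, rfl⟩, haU⟩
    obtain ⟨a', ha's, ha'⟩ := mem_iUnion₂.1 (hs_cover ▸ mem_univ a)
    exact mem_iUnion_of_mem ⟨a', ha's⟩ ⟨a, ⟨⟨haM, ha'⟩, subset_closure haU⟩, rfl⟩
  obtain ⟨a, ha⟩ := exists_neBot_inf_of_le_iSup
    (h.le.trans (inseparabilityFilter_le_iSup_self hU (mapsTo_image_iff.2 hNU) h_cover))
  exact ⟨a, M' a, inter_subset_left.trans (inter_subset_inter_right M (hVW a)),
    fun _ ↦ And.right, _, inf_le_left, ha, inferInstance,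
    (h.isClosed_left.inter (hV_closed a)).inter (isClosed_closure.preimage hf), isClosed_univ,
    inf_le_right.trans_eq (by rw [image_univ])⟩

end Linked

end Linked

section LinkedScheme

variable {α β X Z : Type*} [MeasurableSpace X]

/-- A finite set of linked pairs `(left i, right i)`, for `i ∈ nodes`, that are inseparable over a
common proper countably complete filter. The values of `left` and `right` off `nodes` are junk. -/
structure LinkedScheme [TopologicalSpace α] [TopologicalSpace β] [TopologicalSpace Z]
    (f : α → X × Z) (g : β → X × Z) where
  filter : Filter X
  neBot : filter.NeBot
  countableInter : CountableInterFilter filter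
  filter_le : filter ≤ inseparabilityFilter (range g) (range f) (range g)
  nodes : Finset ℕ
  left : ℕ → Set α
  right : ℕ → Set β
  linked : ∀ i ∈ nodes, Linked f g filter (left i) (right i)

namespace LinkedScheme

attribute [instance] LinkedScheme.neBot LinkedScheme.countableInter

section Topology

variable [TopologicalSpace α] [TopologicalSpace β] [TopologicalSpace Z]
  {f : α → X × Z} {g : β → X × Z}

/-- A larger scheme keeps the left sides of the existing nodes, and may shrink their right sides
and the filter, and add nodes. -/
instance : Preorder (LinkedScheme f g) where
  le s s' := s'.filter ≤ s.filter ∧ s.nodes ⊆ s'.nodes ∧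
    ∀ i ∈ s.nodes, s'.left i = s.left i ∧ s'.right i ⊆ s.right i
  le_refl _ := ⟨le_rfl, subset_rfl, fun _ _ ↦ ⟨rfl, subset_rfl⟩⟩
  le_trans _ _ _ h h' := ⟨h'.1.trans h.1, h.2.1.trans h'.2.1, fun i hi ↦
    ⟨(h'.2.2 i (h.2.1 hi)).1.trans (h.2.2 i hi).1,
      (h'.2.2 i (h.2.1 hi)).2.trans (h.2.2 i hi).2⟩⟩

variable {s s' : LinkedScheme f g} {i : ℕ}

theorem filter_anti (h : s ≤ s') : s'.filter ≤ s.filter := h.1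

theorem nodes_mono (h : s ≤ s') : s.nodes ⊆ s'.nodes := h.2.1

theorem left_eq_of_le (h : s ≤ s') (hi : i ∈ s.nodes) : s'.left i = s.left i := (h.2.2 i hi).1

theorem right_anti (h : s ≤ s') (hi : i ∈ s.nodes) : s'.right i ⊆ s.right i := (h.2.2 i hi).2

theorem exists_le_shrink_right (s : LinkedScheme f g) {l : Filter X} (hl : l ≤ s.filter)
    (hl_neBot : l.NeBot) (hl_inter : CountableInterFilter l) {N : Set β} (hN : N ⊆ s.right i)
    (h_linked : Linked f g l (s.left i) N) :
    ∃ s' ≥ s, s'.nodes = s.nodes ∧ s'.right i = N := by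
  have h_linked' : ∀ j ∈ s.nodes, Linked f g l (s.left j) (Function.update s.right i N j) := by
    intro j hj
    obtain rfl | hji := eq_or_ne j i
    · rwa [Function.update_self]
    · rw [Function.update_of_ne hji]
      exact (s.linked j hj).mono hl
  have h_right : Function.update s.right i N ≤ s.right :=
    update_le_iff.2 ⟨hN, fun _ _ ↦ le_rfl⟩
  exact ⟨⟨l, hl_neBot, hl_inter, hl.trans s.filter_le, s.nodes, s.left, _, h_linked'⟩,
    ⟨hl, subset_rfl, fun j _ ↦ ⟨rfl, h_right j⟩⟩, rfl, Function.update_self ..⟩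

theorem exists_le_add_node (s : LinkedScheme f g) {l : Filter X} (hl : l ≤ s.filter)
    (hl_neBot : l.NeBot) (hl_inter : CountableInterFilter l) (hi : i ∉ s.nodes) {M : Set α}
    {N : Set β} (h_linked : Linked f g l M N) :
    ∃ s' ≥ s, i ∈ s'.nodes ∧ s'.left i = M ∧ ∀ j ≠ i, s'.right j = s.right j := by
  refine ⟨⟨l, hl_neBot, hl_inter, hl.trans s.filter_le, insert i s.nodes,
    Function.update s.left i M, Function.update s.right i N, ?_⟩,
    ⟨hl, Finset.subset_insert .., fun j hj ↦ ?_⟩, Finset.mem_insert_self ..,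
    Function.update_self .., fun j hj ↦ Function.update_of_ne hj ..⟩
  · refine Finset.forall_mem_insert .. |>.2 ⟨by simpa, fun j hj ↦ ?_⟩
    have hji := ne_of_mem_of_not_mem hj hi
    simpa [hji] using (s.linked j hj).mono hl
  · have hji := ne_of_mem_of_not_mem hj hi
    simp [hji]

theorem exists_le_mem_nodes (s : LinkedScheme f g) (i : ℕ) : ∃ s' ≥ s, i ∈ s'.nodes := by
  by_cases hi : i ∈ s.nodes
  · exact ⟨s, le_rfl, hi⟩
  · obtain ⟨s', hs', hi', -⟩ := s.exists_le_add_node le_rfl s.neBot s.countableInter hi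
      (.univ_univ s.filter_le)
    exact ⟨s', hs', hi'⟩

/-- The filter generated by the filters of all schemes in an ideal. -/
def limitFilter (I : Order.Ideal (LinkedScheme f g)) : Filter X :=
  ⨅ s : I, s.1.filter

/-- The common value of the left side of the node `i` in the schemes of an ideal. -/
def limitLeft (I : Order.Ideal (LinkedScheme f g)) (i : ℕ) : Set α :=
  ⋃ s ∈ {s ∈ I | i ∈ s.nodes}, s.left i

variable {I : Order.Ideal (LinkedScheme f g)}

theorem limitFilter_le {s : LinkedScheme f g} (hs : s ∈ I) : limitFilter I ≤ s.filter :=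
  iInf_le (fun s : I ↦ s.1.filter) ⟨s, hs⟩

theorem limitFilter_neBot : (limitFilter I).NeBot := by
  obtain ⟨s, -⟩ := I.nonempty
  have : Nonempty X := nonempty_of_neBot s.filter
  refine iInf_neBot_of_directed (fun s s' ↦ ?_) fun s ↦ s.1.neBot
  obtain ⟨t, ht, hst, hs't⟩ := I.directed s.1 s.2 s'.1 s'.2
  exact ⟨⟨t, ht⟩, filter_anti hst, filter_anti hs't⟩

theorem limitLeft_eq {s : LinkedScheme f g} (hs : s ∈ I) (hi : i ∈ s.nodes) :
    limitLeft I i = s.left i := by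
  refine subset_antisymm (iUnion₂_subset fun s' hs' ↦ ?_)
    (subset_biUnion_of_mem (u := fun s : LinkedScheme f g ↦ s.left i) ⟨hs, hi⟩)
  obtain ⟨t, -, hst, hs't⟩ := I.directed s hs s' hs'.1
  rw [← left_eq_of_le hst hi, left_eq_of_le hs't hs'.2]

end Topology

section Metric

variable [PseudoEMetricSpace α] [PseudoEMetricSpace β] [PseudoEMetricSpace Z]
  {f : α → X × Z} {g : β → X × Z}

/-- The node `i` of `s` has a small right side and a child `j` with a small left side, whose image
is close in `Z` to the image of the right side of `i`. -/
structure Resolves (s : LinkedScheme f g) (i : ℕ) (ε : ℝ≥0∞) : Prop where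
  mem_nodes : i ∈ s.nodes
  ediam_right_le : Metric.ediam (s.right i) ≤ ε
  exists_child : ∃ j ∈ s.nodes, s.left j ⊆ s.left i ∧ Metric.ediam (s.left j) ≤ ε ∧
    ∀ a ∈ s.left j, ∀ b ∈ s.right i, edist (f a).2 (g b).2 ≤ ε

theorem Resolves.mono {s : LinkedScheme f g} {i : ℕ} {ε ε' : ℝ≥0∞} (h : s.Resolves i ε)
    (hε : ε ≤ ε') : s.Resolves i ε' := by
  obtain ⟨j, hj, hji, hjε, h_edist⟩ := h.exists_child
  exact ⟨h.mem_nodes, h.ediam_right_le.trans hε, j, hj, hji, hjε.trans hε,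
    fun a ha b hb ↦ (h_edist a ha b hb).trans hε⟩

theorem exists_le_resolves [SecondCountableTopology α] [SecondCountableTopology β]
    (hf : Continuous fun a ↦ (f a).2) (hg : Continuous fun b ↦ (g b).2) (s : LinkedScheme f g)
    (i : ℕ) {ε : ℝ≥0∞} (hε : 0 < ε) : ∃ s' ≥ s, s'.Resolves i ε := by
  have hε2 : 0 < ε / 2 := ENNReal.half_pos hε.ne'
  obtain ⟨s₁, hs₁, hi₁⟩ := s.exists_le_mem_nodes i
  obtain ⟨b, N, hN, l, hl, hl_neBot, hl_inter, hlN⟩ := (s₁.linked i hi₁).exists_shrink_right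
    fun b ↦ inter_mem (Metric.eball_mem_nhds b hε2)
      (hg.continuousAt.preimage_mem_nhds (Metric.eball_mem_nhds _ hε2))
  obtain ⟨s₂, hs₂, h_nodes₂, h_right₂⟩ := s₁.exists_le_shrink_right hl hl_neBot hl_inter
    (hN.trans inter_subset_left) hlN
  have hi₂ : i ∈ s₂.nodes := h_nodes₂ ▸ hi₁
  obtain ⟨a, M, hM, hMU, l', hl', hl'_neBot, hl'_inter, hl'M⟩ :=
    (s₂.linked i hi₂).exists_child hf (Metric.eball_mem_nhds · hε2) Metric.isOpen_eball
      fun b hb ↦ (hN (h_right₂ ▸ hb)).2.2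
  obtain ⟨j, hj⟩ := Infinite.exists_notMem_finset s₂.nodes
  obtain ⟨s₃, hs₃, hj₃, h_left₃, h_right₃⟩ :=
    s₂.exists_le_add_node hl' hl'_neBot hl'_inter hj hl'M
  have h_right : s₃.right i = N := (h_right₃ i (ne_of_mem_of_not_mem hi₂ hj)).trans h_right₂
  refine ⟨s₃, hs₁.trans (hs₂.trans hs₃), nodes_mono hs₃ hi₂, ?_, j, hj₃, ?_, ?_, ?_⟩
  · rw [h_right]
    exact (Metric.ediam_mono fun b hb ↦ (hN hb).2.1).trans (ediam_eball_half_le b ε)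
  · rw [h_left₃, left_eq_of_le hs₃ hi₂]
    exact hM.trans inter_subset_left
  · rw [h_left₃]
    exact (Metric.ediam_mono fun a ha ↦ (hM ha).2).trans (ediam_eball_half_le a ε)
  · rw [h_left₃, h_right]
    refine fun a ha b' hb' ↦ (Metric.edist_le_ediam_of_mem (hMU ha)
      (subset_closure (hN hb').2.2)).trans ?_
    exact (Metric.ediam_closure _).trans_le (ediam_eball_half_le (g b).2 ε)

/-- An ideal of schemes containing, for each node, arbitrarily good resolutions. -/
def IsGeneric (I : Order.Ideal (LinkedScheme f g)) : Prop :=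
  ∀ i, ∀ ε > 0, ∃ s ∈ I, s.Resolves i ε

theorem exists_isGeneric [SecondCountableTopology α] [SecondCountableTopology β]
    (hf : Continuous fun a ↦ (f a).2) (hg : Continuous fun b ↦ (g b).2)
    (s₀ : LinkedScheme f g) : ∃ I : Order.Ideal (LinkedScheme f g), IsGeneric I := by
  let 𝒟 (n : ℕ × ℕ) : Order.Cofinal (LinkedScheme f g) :=
    { carrier := {s | s.Resolves n.1 (n.2 : ℝ≥0∞)⁻¹}
      isCofinal := fun s ↦ (s.exists_le_resolves hf hg n.1
        (ENNReal.inv_pos.2 (ENNReal.natCast_ne_top n.2))).imp fun _ ↦ And.symm }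
  refine ⟨Order.idealOfCofinals s₀ 𝒟, fun i ε hε ↦ ?_⟩
  obtain ⟨n, hn⟩ := ENNReal.exists_inv_nat_lt hε.ne'
  obtain ⟨s, hs, hsI⟩ := Order.cofinal_meets_idealOfCofinals s₀ 𝒟 (i, n)
  exact ⟨s, hsI, Resolves.mono hs hn.le⟩

namespace IsGeneric

variable {I : Order.Ideal (LinkedScheme f g)} {i : ℕ} (hI : IsGeneric I)
include hI

theorem exists_mem_nodes (i : ℕ) : ∃ s ∈ I, i ∈ s.nodes :=
  (hI i 1 one_pos).imp fun _ ↦ And.imp_right Resolves.mem_nodes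

theorem isClosed_limitLeft (i : ℕ) : IsClosed (limitLeft I i) := by
  obtain ⟨s, hs, hi⟩ := hI.exists_mem_nodes i
  exact limitLeft_eq hs hi ▸ (s.linked i hi).isClosed_left

theorem limitLeft_nonempty (i : ℕ) : (limitLeft I i).Nonempty := by
  obtain ⟨s, hs, hi⟩ := hI.exists_mem_nodes i
  exact limitLeft_eq hs hi ▸ (s.linked i hi).nonempty_left

theorem mem_limitFilter_of_mapsTo {E : Set X} (hE : MeasurableSet E)
    (h : MapsTo (fun a ↦ (f a).1) (limitLeft I i) E) : E ∈ limitFilter I := by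
  obtain ⟨s, hs, hi⟩ := hI.exists_mem_nodes i
  exact limitFilter_le hs ((s.linked i hi).mem_of_mapsTo_left hE (limitLeft_eq hs hi ▸ h))

theorem exists_limit_right [CompleteSpace β] [TopologicalSpace X] [OpensMeasurableSpace X]
    (hg : Continuous fun b ↦ (g b).1) (i : ℕ) :
    ∃ b, limitFilter I ≤ 𝓝 (g b).1 ∧ ∀ s ∈ I, i ∈ s.nodes → b ∈ s.right i := by
  have : Nonempty {s // s ∈ I ∧ i ∈ s.nodes} := nonempty_subtype.2 (hI.exists_mem_nodes i)
  let t (s : {s // s ∈ I ∧ i ∈ s.nodes}) : Set β := s.1.right i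
  have ht_directed : Directed (· ⊇ ·) t := fun s s' ↦ by
    obtain ⟨u, hu, hsu, hs'u⟩ := I.directed s.1 s.2.1 s'.1 s'.2.1
    exact ⟨⟨u, hu, nodes_mono hsu s.2.2⟩, right_anti hsu s.2.2, right_anti hs'u s'.2.2⟩
  have ht_small : ∀ ε > 0, ∃ s, Metric.ediam (t s) ≤ ε := fun ε hε ↦ by
    obtain ⟨s, hs, h_resolves⟩ := hI i ε hε
    exact ⟨⟨s, hs, h_resolves.mem_nodes⟩, h_resolves.ediam_right_le⟩
  obtain ⟨b, hb, hb_small⟩ := exists_mem_forall_of_directed_of_ediam_le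
    (fun s ↦ (s.1.linked i s.2.2).isClosed_right) (fun s ↦ (s.1.linked i s.2.2).nonempty_right)
    ht_directed ht_small
  refine ⟨b, (nhds_basis_opens _).ge_iff.2 fun E ⟨hbE, hE⟩ ↦ ?_, fun s hs hi ↦ hb ⟨s, hs, hi⟩⟩
  obtain ⟨s, hsE⟩ := hb_small _ ((hE.preimage hg).mem_nhds hbE)
  exact limitFilter_le s.2.1 ((s.1.linked i s.2.2).mem_of_mapsTo_right hE.measurableSet hsE)

theorem exists_child_limitLeft {b : β} (hb : ∀ s ∈ I, i ∈ s.nodes → b ∈ s.right i) {ε : ℝ≥0∞}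
    (hε : 0 < ε) : ∃ j, limitLeft I j ⊆ limitLeft I i ∧ Metric.ediam (limitLeft I j) ≤ ε ∧
      ∀ a ∈ limitLeft I j, edist (f a).2 (g b).2 ≤ ε := by
  obtain ⟨s, hs, h_resolves⟩ := hI i ε hε
  have hi := h_resolves.mem_nodes
  obtain ⟨j, hj, hji, hjε, h_edist⟩ := h_resolves.exists_child
  refine ⟨j, ?_⟩
  rw [limitLeft_eq hs hi, limitLeft_eq hs hj]
  exact ⟨hji, hjε, fun a ha ↦ h_edist a ha b (hb s hs hi)⟩

theorem exists_child_limitLeft_mapsTo {b : β} (hb : ∀ s ∈ I, i ∈ s.nodes → b ∈ s.right i)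
    {V : Set Z} (hV : V ∈ 𝓝 (g b).2) {ε : ℝ≥0∞} (hε : 0 < ε) :
    ∃ j, limitLeft I j ⊆ limitLeft I i ∧ Metric.ediam (limitLeft I j) ≤ ε ∧
      MapsTo (fun a ↦ (f a).2) (limitLeft I j) V := by
  obtain ⟨δ, hδ, hδV⟩ := Metric.nhds_basis_closedEBall.mem_iff.1 hV
  obtain ⟨j, hji, hj, h_edist⟩ := hI.exists_child_limitLeft hb (lt_min hε hδ)
  exact ⟨j, hji, hj.trans (min_le_left ε δ),
    fun a ha ↦ hδV ((h_edist a ha).trans (min_le_right ε δ))⟩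

theorem limitFilter_le_nhds_of_limitLeft [TopologicalSpace X] [OpensMeasurableSpace X]
    (hf : Continuous fun a ↦ (f a).1) {node : ℕ → ℕ} {a : α}
    (ha : ∀ V ∈ 𝓝 a, ∃ n, limitLeft I (node n) ⊆ V) : limitFilter I ≤ 𝓝 (f a).1 := by
  refine (nhds_basis_opens _).ge_iff.2 fun E ⟨haE, hE⟩ ↦ ?_
  obtain ⟨n, hn⟩ := ha _ ((hE.preimage hf).mem_nhds haE)
  exact hI.mem_limitFilter_of_mapsTo hE.measurableSet hn

theorem exists_forall_isGδ_inter_nonempty [CompleteSpace α] [CompleteSpace β] [TopologicalSpace X]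
    [T2Space X] [OpensMeasurableSpace X] (hf : Continuous f) (hg : Continuous g) :
    ∃ x, ∀ G : Set Z, IsGδ G → Prod.mk x ⁻¹' range g ⊆ G →
      (Prod.mk x ⁻¹' range f ∩ G).Nonempty := by
  have := limitFilter_neBot (I := I)
  choose b hb_nhds hb using hI.exists_limit_right hg.fst
  have h_fst i : (g (b i)).1 = (g (b 0)).1 :=
    eq_of_nhds_neBot (neBot_of_le (le_inf (hb_nhds i) (hb_nhds 0)))
  refine ⟨(g (b 0)).1, fun G hG hGB ↦ ?_⟩
  obtain ⟨V, hV, rfl⟩ := hG.eq_iInter_nat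
  have hbV i n : V n ∈ 𝓝 (g (b i)).2 := by
    have hb_section : (g (b i)).2 ∈ Prod.mk (g (b 0)).1 ⁻¹' range g :=
      ⟨b i, Prod.ext (h_fst i) rfl⟩
    exact (hV n).mem_nhds (mem_iInter.1 (hGB hb_section) n)
  choose child h_child h_ediam h_mapsTo using fun i n ↦
    hI.exists_child_limitLeft_mapsTo (hb i) (hbV i n)
      (ENNReal.inv_pos.2 (ENNReal.natCast_ne_top n))
  let node : ℕ → ℕ := Nat.rec 0 fun n i ↦ child i n
  have h_anti : Antitone fun n ↦ limitLeft I (node n) :=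
    antitone_nat_of_succ_le fun n ↦ h_child (node n) n
  obtain ⟨a, ha, ha_small⟩ := exists_mem_forall_of_directed_of_ediam_le
    (fun n ↦ hI.isClosed_limitLeft (node n)) (fun n ↦ hI.limitLeft_nonempty (node n))
    h_anti.directed_ge fun ε hε ↦ (ENNReal.exists_inv_nat_lt hε.ne').elim fun n hn ↦
      ⟨n + 1, (h_ediam (node n) n).trans hn.le⟩
  have ha_fst : (f a).1 = (g (b 0)).1 := eq_of_nhds_neBot
    (neBot_of_le (le_inf (hI.limitFilter_le_nhds_of_limitLeft hf.fst ha_small) (hb_nhds 0)))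
  exact ⟨(f a).2, ⟨a, Prod.ext ha_fst rfl⟩,
    mem_iInter.2 fun n ↦ h_mapsTo (node n) n (ha (n + 1))⟩

end IsGeneric

end Metric

end LinkedScheme

end LinkedScheme

theorem compl_mem_sectionGdelta_of_isGδ {X Z : Type*} [TopologicalSpace X] [T2Space X]
    [MeasurableSpace X] [OpensMeasurableSpace X] [TopologicalSpace Z]
    [TopologicalSpace.PseudoMetrizableSpace Z] {A B : Set (X × Z)} (hA : AnalyticSet A)
    (hB : AnalyticSet B)
    (h : ∀ x, ∃ G, IsGδ G ∧ Prod.mk x ⁻¹' B ⊆ G ∧ Disjoint (Prod.mk x ⁻¹' A) G) :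
    Aᶜ ∈ sectionGdelta B := by
  obtain ⟨α, _, _, f, hf, rfl⟩ := analyticSet_iff_exists_polishSpace_range.1 hA
  obtain ⟨β, _, _, g, hg, rfl⟩ := analyticSet_iff_exists_polishSpace_range.1 hB
  let := TopologicalSpace.upgradeIsCompletelyMetrizable α
  let := TopologicalSpace.upgradeIsCompletelyMetrizable β
  let := TopologicalSpace.pseudoMetrizableSpacePseudoMetric Z
  by_contra h_inseparable
  let s₀ : LinkedScheme f g :=
    { filter := inseparabilityFilter (range g) (range f) (range g)
      neBot := inseparabilityFilter_self_neBot h_inseparable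
      countableInter := inferInstance
      filter_le := le_rfl
      nodes := ∅
      left := fun _ ↦ ∅
      right := fun _ ↦ ∅
      linked := by simp }
  obtain ⟨I, hI⟩ := s₀.exists_isGeneric hf.snd hg.snd
  obtain ⟨x, hx⟩ := hI.exists_forall_isGδ_inter_nonempty hf hg
  obtain ⟨G, hG, hBG, hAG⟩ := h x
  exact (hx G hG hBG).ne_empty hAG.inter_eq

theorem exists_sectionClosed_iUnion_eq {X Z : Type*} [TopologicalSpace X] [PolishSpace X]
    [MeasurableSpace X] [BorelSpace X] [TopologicalSpace Z] [PolishSpace Z] [MeasurableSpace Z]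
    [BorelSpace Z] {P : Set (X × Z)} (hP : MeasurableSet P)
    (hP_section : ∀ x, IsGδ (Prod.mk x ⁻¹' P)ᶜ) :
    ∃ C : ℕ → Set (X × Z), (∀ n, SectionClosed (C n)) ∧ P = ⋃ n, C n := by
  obtain ⟨O, hO, hPO, hO_inter⟩ := exists_sectionOpen_of_mem_sectionGdelta <|
    compl_mem_sectionGdelta_of_isGδ hP.analyticSet hP.compl.analyticSet fun x ↦
      ⟨_, hP_section x, subset_rfl, disjoint_compl_right⟩
  refine ⟨fun n ↦ (O n)ᶜ, fun n ↦ (hO n).sectionClosed_compl, ?_⟩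
  rw [← compl_iInter, eq_compl_comm]
  exact hO_inter.antisymm (subset_iInter hPO)

section Uniformization

variable {X Y Z : Type*} [MeasurableSpace X] [MeasurableSpace Y]

/-- `P` contains a measurable set that meets each nonempty vertical section of `P` in exactly one
point. -/
def HasMeasurableUniformization (P : Set (X × Y)) : Prop :=
  ∃ Q ⊆ P, MeasurableSet Q ∧ ∀ x, (Prod.mk x ⁻¹' P).Nonempty → ∃! y, (x, y) ∈ Q

namespace HasMeasurableUniformization

theorem iUnion {C : ℕ → Set (X × Y)} (hC : ∀ n, HasMeasurableUniformization (C n))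
    (hC_proj : ∀ n, MeasurableSet (Prod.fst '' C n)) :
    HasMeasurableUniformization (⋃ n, C n) := by
  choose Q hQC hQ hQ_unique using hC
  let D := disjointed fun n ↦ Prod.fst '' C n
  refine ⟨⋃ n, Q n ∩ Prod.fst ⁻¹' D n, iUnion_mono fun n ↦ inter_subset_left.trans (hQC n),
    .iUnion fun n ↦ (hQ n).inter (measurable_fst (.disjointed hC_proj n)), fun x ⟨y, hy⟩ ↦ ?_⟩
  have hx : x ∈ ⋃ n, D n := by
    rw [iUnion_disjointed, ← image_iUnion]
    exact ⟨(x, y), hy, rfl⟩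
  obtain ⟨n, hn⟩ := mem_iUnion.1 hx
  have h_section : (Prod.mk x ⁻¹' C n).Nonempty := by
    obtain ⟨⟨_, z⟩, hz, rfl⟩ := disjointed_subset _ n hn
    exact ⟨z, hz⟩
  obtain ⟨z, hz, hz_unique⟩ := hQ_unique n x h_section
  refine ⟨z, mem_iUnion_of_mem n ⟨hz, hn⟩, fun z' hz' ↦ hz_unique z' ?_⟩
  obtain ⟨m, hzm, hm⟩ := mem_iUnion.1 hz'
  rwa [(disjoint_disjointed _).eq (not_disjoint_iff.2 ⟨x, hn, hm⟩)]

theorem of_image [MeasurableSpace Z] {P : Set (X × Y)} {φ : Y → Z} (hφ : Measurable φ)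
    (hφ_inj : φ.Injective) (h : HasMeasurableUniformization (Prod.map id φ '' P)) :
    HasMeasurableUniformization P := by
  obtain ⟨Q, hQP, hQ, hQ_unique⟩ := h
  refine ⟨Prod.map id φ ⁻¹' Q, fun p hp ↦ ?_, measurable_id.prodMap hφ hQ, fun x ⟨y, hy⟩ ↦ ?_⟩
  · exact (Function.injective_id.prodMap hφ_inj).mem_set_image.1 (hQP hp)
  · obtain ⟨z, hz, hz_unique⟩ := hQ_unique x ⟨φ y, (x, y), hy, rfl⟩
    obtain ⟨⟨x', y'⟩, -, h_eq⟩ := hQP hz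
    obtain ⟨rfl, rfl⟩ := Prod.ext_iff.1 h_eq
    exact ⟨y', hz, fun w hw ↦ hφ_inj (hz_unique (φ w) hw)⟩

end HasMeasurableUniformization

end Uniformization

section Argmin

variable {X Z : Type*}

/-- The points of `C` that minimize `u` on their vertical section of `C`. -/
def sectionArgmin (u : Z → ℝ) (C : Set (X × Z)) : Set (X × Z) :=
  {p ∈ C | ∀ z, (p.1, z) ∈ C → u p.2 ≤ u z}

theorem sectionArgmin_subset (u : Z → ℝ) (C : Set (X × Z)) : sectionArgmin u C ⊆ C :=
  sep_subset C _

/-- The successive restrictions of `C` to the fibrewise minimizers of `u 0`, `u 1`, …. -/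
def iteratedArgmin (u : ℕ → Z → ℝ) (C : Set (X × Z)) : ℕ → Set (X × Z)
  | 0 => C
  | n + 1 => sectionArgmin (u n) (iteratedArgmin u C n)

theorem eq_of_mem_iteratedArgmin {C : Set (X × Z)} {u : ℕ → Z → ℝ} {x : X} {z z' : Z}
    (hz : ∀ n, (x, z) ∈ iteratedArgmin u C n) (hz' : ∀ n, (x, z') ∈ iteratedArgmin u C n)
    (n : ℕ) : u n z = u n z' :=
  ((hz (n + 1)).2 z' (hz' n)).antisymm ((hz' (n + 1)).2 z (hz n))

variable [MeasurableSpace X] [TopologicalSpace Z] [CompactSpace Z] {u : Z → ℝ} {C : Set (X × Z)}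

theorem sectionClosed_sectionArgmin (hC : SectionClosed C) (hu : Continuous u) :
    SectionClosed (sectionArgmin u C) := by
  have h_eq : sectionArgmin u C = C ∩
      ⋂ q : ℚ, ((Prod.fst '' (C ∩ Prod.snd ⁻¹' (u ⁻¹' Iic (q : ℝ)))) ×ˢ (u ⁻¹' Ioi (q : ℝ)))ᶜ := by
    ext ⟨x, z⟩
    simp only [sectionArgmin, mem_sep_iff, mem_inter_iff, mem_iInter, mem_compl_iff,
      mem_prod, mem_image, mem_preimage, mem_Iic, mem_Ioi, Prod.exists, exists_and_right,
      exists_eq_right, not_and, not_lt]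
    refine and_congr_right fun _ ↦ ⟨fun h q ⟨z', hz', hq⟩ ↦ (h z' hz').trans hq, ?_⟩
    intro h z' hz'
    by_contra! h_lt
    obtain ⟨q, hq, hq'⟩ := exists_rat_btwn h_lt
    exact (h q ⟨z', hz', hq.le⟩).not_gt hq'
  rw [h_eq]
  exact hC.inter <| .iInter fun q ↦ (SectionOpen.prod
    (hC.inter (.snd_preimage (isClosed_Iic.preimage hu))).measurableSet_fst_image
    (isOpen_Ioi.preimage hu)).sectionClosed_compl

theorem sectionArgmin_section_nonempty (hC : SectionClosed C) (hu : Continuous u)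
    {x : X} (hx : (Prod.mk x ⁻¹' C).Nonempty) :
    (Prod.mk x ⁻¹' sectionArgmin u C).Nonempty := by
  obtain ⟨z, hz, hz_min⟩ :=
    (hC.isClosed_section x).isCompact.exists_isMinOn hx hu.continuousOn
  exact ⟨z, hz, fun z' hz' ↦ hz_min hz'⟩

theorem sectionClosed_iteratedArgmin {u : ℕ → Z → ℝ} (hC : SectionClosed C)
    (hu : ∀ n, Continuous (u n)) (n : ℕ) : SectionClosed (iteratedArgmin u C n) := by
  induction n with
  | zero => exact hC
  | succ n ih => exact sectionClosed_sectionArgmin ih (hu n)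

theorem iInter_iteratedArgmin_section_nonempty {u : ℕ → Z → ℝ}
    (hC : SectionClosed C) (hu : ∀ n, Continuous (u n)) {x : X}
    (hx : (Prod.mk x ⁻¹' C).Nonempty) :
    (Prod.mk x ⁻¹' ⋂ n, iteratedArgmin u C n).Nonempty := by
  have h_closed n : IsClosed (Prod.mk x ⁻¹' iteratedArgmin u C n) :=
    (sectionClosed_iteratedArgmin hC hu n).isClosed_section x
  rw [preimage_iInter]
  refine IsCompact.nonempty_iInter_of_sequence_nonempty_isCompact_isClosed _
    (fun n ↦ preimage_mono (sectionArgmin_subset _ _)) (fun n ↦ ?_) (h_closed 0).isCompact h_closed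
  induction n with
  | zero => exact hx
  | succ n ih =>
    exact sectionArgmin_section_nonempty (sectionClosed_iteratedArgmin hC hu n) (hu n) ih

theorem SectionClosed.hasMeasurableUniformization [MeasurableSpace Z]
    [OpensMeasurableSpace Z] {u : ℕ → Z → ℝ} (hC : SectionClosed C) (hu : ∀ n, Continuous (u n))
    (hu_inj : (fun z n ↦ u n z).Injective) : HasMeasurableUniformization C := by
  refine ⟨⋂ n, iteratedArgmin u C n, iInter_subset _ 0,
    .iInter fun n ↦ (sectionClosed_iteratedArgmin hC hu n).measurableSet, fun x hx ↦ ?_⟩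
  obtain ⟨z, hz⟩ := iInter_iteratedArgmin_section_nonempty hC hu hx
  exact ⟨z, hz, fun z' hz' ↦
    hu_inj (funext (eq_of_mem_iteratedArgmin (mem_iInter.1 hz') (mem_iInter.1 hz)))⟩

end Argmin

theorem isGδ_compl_of_isSigmaCompact {Z : Type*} [TopologicalSpace Z] [T2Space Z] {S : Set Z}
    (hS : IsSigmaCompact S) : IsGδ Sᶜ := by
  obtain ⟨K, hK, rfl⟩ := hS
  rw [compl_iUnion]
  exact .iInter fun n ↦ (hK n).isClosed.isOpen_compl.isGδ

theorem hasMeasurableUniformization_of_isSigmaCompact {X : Type*} [MeasurableSpace X]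
    [StandardBorelSpace X] {P : Set (X × (ℕ → unitInterval))} (hP : MeasurableSet P)
    (hP_section : ∀ x, IsSigmaCompact (Prod.mk x ⁻¹' P)) : HasMeasurableUniformization P := by
  let := upgradeStandardBorel X
  obtain ⟨C, hC, rfl⟩ := exists_sectionClosed_iUnion_eq hP fun x ↦
    isGδ_compl_of_isSigmaCompact (hP_section x)
  refine .iUnion (fun n ↦ ?_) fun n ↦ (hC n).measurableSet_fst_image
  exact (hC n).hasMeasurableUniformization (u := fun k z ↦ (z k : ℝ)) (by fun_prop)
    fun z z' h ↦ funext fun k ↦ Subtype.ext (congrFun h k)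

theorem stmt_10_general {X Y : Type*} [MeasurableSpace X] [StandardBorelSpace X]
    [TopologicalSpace Y] [PolishSpace Y] [MeasurableSpace Y] [BorelSpace Y]
    (P : Set (X × Y)) (hP : MeasurableSet P)
    (hsec : ∀ x : X, IsSigmaCompact {y : Y | (x, y) ∈ P}) :
    ∃ Q : Set (X × Y), Q ⊆ P ∧ MeasurableSet Q ∧
      ∀ x : X, {y : Y | (x, y) ∈ P}.Nonempty → ∃! y : Y, (x, y) ∈ Q := by
  let := TopologicalSpace.upgradeIsCompletelyMetrizable Y
  obtain ⟨φ, hφ⟩ := Metric.PiNatEmbed.exists_embedding_to_hilbert_cube (X := Y)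
  have h_inj : (Prod.map id φ : X × Y → X × (ℕ → unitInterval)).Injective :=
    Function.injective_id.prodMap hφ.injective
  have h_image : MeasurableSet (Prod.map id φ '' P : Set (X × (ℕ → unitInterval))) :=
    hP.image_of_measurable_injOn (measurable_id.prodMap hφ.continuous.measurable) h_inj.injOn
  have h_section x : Prod.mk x ⁻¹' (Prod.map id φ '' P) = φ '' {y | (x, y) ∈ P} := by
    ext z
    simp [Prod.ext_iff]
  exact HasMeasurableUniformization.of_image hφ.continuous.measurable hφ.injective <|
    hasMeasurableUniformization_of_isSigmaCompact h_image fun x ↦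
      h_section x ▸ (hsec x).image hφ.continuous

theorem stmt_10 {X : Type*} [TopologicalSpace X] [PolishSpace X]
    [MeasurableSpace X] [BorelSpace X]
    (P : Set (X × (ℕ → ℕ))) (hP : MeasurableSet P)
    (hsec : ∀ x : X, IsSigmaCompact {y : ℕ → ℕ | (x, y) ∈ P}) :
    ∃ Q : Set (X × (ℕ → ℕ)), Q ⊆ P ∧ MeasurableSet Q ∧
      ∀ x : X, {y : ℕ → ℕ | (x, y) ∈ P}.Nonempty → ∃! y : ℕ → ℕ, (x, y) ∈ Q :=
  stmt_10_general P hP hsec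
end

section
/- Let X be a Polish space and P ⊆ X × ℕ^ℕ a Borel set all of whose vertical sections are σ-compact. Then P is a countable union of Borel sets P_n each of whose vertical sections is compact. -/
/-!
After embedding the fibre space in a compact space `Z`, compact sections become closed ones, and it
suffices to separate two analytic sets `A = range f` and `B = range g` of `X × Z`, whose sections
over each `x` are separated by an `Fσ` set, by countably many Borel sets with closed sections.
Suppose this fails. A forcing argument then builds a Hurewicz scheme inside a single section: a
point `x`, a continuous map `Φ` from the Baire space to the section `A_x`, and points `b v` of `B_x`
indexed by finite sequences such that `Φ z` is within `1 / (z k + 1)` of `b (z₀, …, zₖ₋₁)` for all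
`k`. By the Baire category theorem, a countable union of closed sets containing the range of `Φ`
contains some `b v`, so the sections `A_x` and `B_x` are not separated by an `Fσ` set.

A forcing condition assigns to the nodes of a tree sets of codes for points of `A` and of `B`, in
such a way that `X` is not covered by countably many Borel sets over each of which the two sets at
some node can be separated. Although the nodes have separate sets of codes, this forces all points
of the generic scheme to lie over the same `x`, since otherwise two disjoint open subsets of `X`
would separate two of them.
-/

open Set Filter Topology MeasureTheory TopologicalSpace

namespace SaintRaymond

/-! ### Separation by sets with closed sections -/

section Separation

variable {X Z : Type*} [MeasurableSpace X] [TopologicalSpace Z] [MeasurableSpace Z]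

/-- A measurable subset of `X × Z` all of whose vertical sections are closed. -/
structure IsClosedSectioned (C : Set (X × Z)) : Prop where
  measurableSet : MeasurableSet C
  isClosed_section (x : X) : IsClosed (Prod.mk x ⁻¹' C)

/-- `A` can be separated from `B` by a countable union of measurable sets with closed sections: the
uniform version of separation of each section of `A` from that of `B` by an `Fσ` set. -/
def FSigmaSeparated (A B : Set (X × Z)) : Prop :=
  ∃ C : ℕ → Set (X × Z),
    (∀ n, IsClosedSectioned (C n)) ∧ (∀ n, Disjoint (C n) B) ∧ A ⊆ ⋃ n, C n

/-- `A` can be separated from `B` by a single measurable set with closed sections, after removing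
from `A` a part that is `Fσ`-separated from `N`. For `B = N` this is `Fσ`-separation. -/
def ClosedSeparatedMod (N A B : Set (X × Z)) : Prop :=
  ∃ C : Set (X × Z), IsClosedSectioned C ∧ Disjoint C B ∧ FSigmaSeparated (A \ C) N

variable {A A' B B' C N : Set (X × Z)} {D : Set X}

lemma IsClosedSectioned.empty : IsClosedSectioned (∅ : Set (X × Z)) :=
  ⟨.empty, fun _ => isClosed_empty⟩

lemma IsClosedSectioned.fst_preimage (hD : MeasurableSet D) :
    IsClosedSectioned (Prod.fst ⁻¹' D : Set (X × Z)) :=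
  ⟨measurable_fst hD, fun x => isClosed_const (p := x ∈ D)⟩

lemma IsClosedSectioned.snd_preimage [OpensMeasurableSpace Z] {F : Set Z} (hF : IsClosed F) :
    IsClosedSectioned (Prod.snd ⁻¹' F : Set (X × Z)) :=
  ⟨measurable_snd hF.measurableSet, fun _ => hF⟩

lemma IsClosedSectioned.iInter {ι : Type*} [Countable ι] {C : ι → Set (X × Z)}
    (hC : ∀ i, IsClosedSectioned (C i)) : IsClosedSectioned (⋂ i, C i) where
  measurableSet := .iInter fun i => (hC i).measurableSet
  isClosed_section x := by
    rw [preimage_iInter]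
    exact isClosed_iInter fun i => (hC i).isClosed_section x

lemma IsClosedSectioned.iUnion_inter_fst_preimage {ι : Type*} [Countable ι] {C : ι → Set (X × Z)}
    {D : ι → Set X} (hC : ∀ i, IsClosedSectioned (C i)) (hD : ∀ i, MeasurableSet (D i))
    (hdisj : Pairwise (Function.onFun Disjoint D)) :
    IsClosedSectioned (⋃ i, C i ∩ Prod.fst ⁻¹' D i) where
  measurableSet := .iUnion fun i => (hC i).measurableSet.inter (measurable_fst (hD i))
  isClosed_section x := by
    by_cases hx : ∃ i, x ∈ D i
    · obtain ⟨i, hi⟩ := hx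
      convert (hC i).isClosed_section x using 1
      ext y
      simp only [mem_preimage, mem_iUnion, mem_inter_iff]
      refine ⟨fun ⟨j, hy, hj⟩ => ?_, fun hy => ⟨i, hy, hi⟩⟩
      obtain rfl : j = i := hdisj.eq (not_disjoint_iff.2 ⟨x, hj, hi⟩)
      exact hy
    · convert isClosed_empty using 1
      ext y
      simpa using fun i _ hi => hx ⟨i, hi⟩

lemma FSigmaSeparated.mono (h : FSigmaSeparated A B) (hA : A' ⊆ A) : FSigmaSeparated A' B :=
  let ⟨C, hC, hCB, hAC⟩ := h
  ⟨C, hC, hCB, hA.trans hAC⟩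

lemma IsClosedSectioned.fSigmaSeparated (hC : IsClosedSectioned C) (hCB : Disjoint C B) :
    FSigmaSeparated C B :=
  ⟨fun _ => C, fun _ => hC, fun _ => hCB, subset_iUnion (fun _ : ℕ => C) 0⟩

lemma FSigmaSeparated.iUnion {A : ℕ → Set (X × Z)} (h : ∀ n, FSigmaSeparated (A n) B) :
    FSigmaSeparated (⋃ n, A n) B := by
  choose C hC hCB hAC using h
  refine ⟨fun k => C k.unpair.1 k.unpair.2, fun _ => hC _ _, fun _ => hCB _ _, ?_⟩
  rw [iUnion_unpair C]
  exact iUnion_mono hAC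

lemma FSigmaSeparated.union (h : FSigmaSeparated A B) (h' : FSigmaSeparated A' B) :
    FSigmaSeparated (A ∪ A') B :=
  (FSigmaSeparated.iUnion (A := fun n => Nat.casesOn n A fun _ => A')
    (Nat.rec h fun _ _ => h')).mono
    (union_subset (subset_iUnion_of_subset 0 Subset.rfl) (subset_iUnion_of_subset 1 Subset.rfl))

lemma ClosedSeparatedMod.fSigmaSeparated (h : ClosedSeparatedMod B A B) : FSigmaSeparated A B := by
  obtain ⟨C, hC, hCB, hAC⟩ := h
  refine ((hC.fSigmaSeparated hCB).union hAC).mono ?_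
  rw [union_sdiff_self]
  exact subset_union_right

lemma closedSeparatedMod_of_subset (hC : IsClosedSectioned C) (hAC : A ⊆ C) (hCB : Disjoint C B) :
    ClosedSeparatedMod N A B :=
  ⟨C, hC, hCB, by
    rw [sdiff_eq_empty.2 hAC]
    exact IsClosedSectioned.empty.fSigmaSeparated (empty_disjoint N)⟩

lemma closedSeparatedMod_empty : ClosedSeparatedMod N ∅ B :=
  closedSeparatedMod_of_subset .empty Subset.rfl (empty_disjoint B)

lemma ClosedSeparatedMod.iUnion_fst_preimage {D : ℕ → Set X} (hD : ∀ n, MeasurableSet (D n))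
    (h : ∀ n, ClosedSeparatedMod N (A ∩ Prod.fst ⁻¹' D n) B) :
    ClosedSeparatedMod N (A ∩ Prod.fst ⁻¹' ⋃ n, D n) B := by
  choose C hC hCB hAC using h
  refine ⟨⋃ n, C n ∩ Prod.fst ⁻¹' disjointed D n, .iUnion_inter_fst_preimage hC
    (MeasurableSet.disjointed hD) (disjoint_disjointed D),
    disjoint_iUnion_left.2 fun n => (hCB n).mono_left inter_subset_left,
    (FSigmaSeparated.iUnion hAC).mono ?_⟩
  rintro p ⟨⟨hpA, hpD⟩, hpC⟩
  rw [← iUnion_disjointed] at hpD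
  obtain ⟨n, hn⟩ := mem_iUnion.1 hpD
  exact mem_iUnion.2
    ⟨n, ⟨hpA, disjointed_subset D n hn⟩, fun hp => hpC (mem_iUnion.2 ⟨n, hp, hn⟩)⟩

lemma ClosedSeparatedMod.of_subset_iUnion_right {A' B' : ℕ → Set (X × Z)} (hA : ∀ n, A ⊆ A' n)
    (hB : B ⊆ ⋃ n, B' n) (h : ∀ n, ClosedSeparatedMod N (A' n) (B' n)) :
    ClosedSeparatedMod N A B := by
  choose C hC hCB hAC using h
  refine ⟨⋂ n, C n, .iInter hC, ?_, (FSigmaSeparated.iUnion hAC).mono ?_⟩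
  · exact (disjoint_iUnion_right.2 fun n => (hCB n).mono_left (iInter_subset C n)).mono_right hB
  · rw [sdiff_iInter]
    exact iUnion_mono fun n => sdiff_subset_sdiff_left (hA n)

lemma ClosedSeparatedMod.of_snd_mem_open [OpensMeasurableSpace Z] {U : Set Z} (hU : IsOpen U)
    (hB : B ⊆ Prod.snd ⁻¹' U) (h : FSigmaSeparated (A ∩ Prod.snd ⁻¹' U) N) :
    ClosedSeparatedMod N A B :=
  ⟨Prod.snd ⁻¹' Uᶜ, .snd_preimage hU.isClosed_compl,
    (disjoint_compl_left (a := Prod.snd ⁻¹' U)).mono_right hB, by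
    rwa [preimage_compl, sdiff_compl]⟩

end Separation

/-! ### The ideal of sets over which two families of codes can be separated -/

section SepIdeal

variable {X Z : Type*} [MeasurableSpace X] [TopologicalSpace Z] [MeasurableSpace Z]

/-- The measurable sets `D` such that the part of `f '' R` over `D` can be separated from `g '' T`
by a measurable set with closed sections, modulo sets that are `Fσ`-separated from `range g`. They
form a `σ`-ideal of measurable sets. -/
def sepIdeal (f g : (ℕ → ℕ) → X × Z) (R T : Set (ℕ → ℕ)) : Set (Set X) :=
  {D | MeasurableSet D ∧ ClosedSeparatedMod (range g) (f '' R ∩ Prod.fst ⁻¹' D) (g '' T)}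

variable {f g : (ℕ → ℕ) → X × Z} {R T : Set (ℕ → ℕ)} {D : Set X}

lemma sUnion_mem_sepIdeal {𝒮 : Set (Set X)} (h𝒮 : 𝒮.Countable) (h : 𝒮 ⊆ sepIdeal f g R T) :
    ⋃₀ 𝒮 ∈ sepIdeal f g R T := by
  rcases 𝒮.eq_empty_or_nonempty with rfl | hne
  · simpa [sepIdeal] using closedSeparatedMod_empty
  · obtain ⟨D, rfl⟩ := h𝒮.exists_eq_range hne
    rw [range_subset_iff] at h
    rw [sUnion_range]
    exact ⟨.iUnion fun n => (h n).1, .iUnion_fst_preimage (fun n => (h n).1) fun n => (h n).2⟩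

lemma mem_sepIdeal_of_left (hD : MeasurableSet D) (h : ∀ α ∈ R, (f α).1 ∉ D) :
    D ∈ sepIdeal f g R T := by
  have hempty : f '' R ∩ Prod.fst ⁻¹' D = ∅ := by
    rw [← disjoint_iff_inter_eq_empty, disjoint_image_left]
    exact disjoint_left.2 h
  exact ⟨hD, hempty ▸ closedSeparatedMod_empty⟩

lemma mem_sepIdeal_of_right (hD : MeasurableSet D) (h : ∀ β ∈ T, (g β).1 ∉ D) :
    D ∈ sepIdeal f g R T := by
  refine ⟨hD, closedSeparatedMod_of_subset (.fst_preimage hD) inter_subset_right ?_⟩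
  rw [disjoint_image_right]
  exact disjoint_right.2 h

lemma iInter_mem_sepIdeal_of_right {Q : ℕ → Set (ℕ → ℕ)} (hQ : ⋃ c, Q c = univ) {D : ℕ → Set X}
    (hD : ∀ c, D c ∈ sepIdeal f g R (T ∩ Q c)) : ⋂ c, D c ∈ sepIdeal f g R T := by
  refine ⟨.iInter fun c => (hD c).1, .of_subset_iUnion_right (fun c => ?_) ?_ fun c => (hD c).2⟩
  · exact inter_subset_inter_right _ (preimage_mono (iInter_subset D c))
  · rw [← image_iUnion, ← inter_iUnion, hQ, inter_univ]

/-- Points outside `U` in the fibre direction are captured by the closed set `Uᶜ`; those inside `U`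
are already `Fσ`-separated from all of `range g`, because the right codes there are unrestricted. -/
lemma iInter_mem_sepIdeal_of_left [OpensMeasurableSpace Z] {U : Set Z} (hU : IsOpen U)
    (hT : ∀ β ∈ T, (g β).2 ∈ U) {j : ℕ} {D : ℕ → Set X}
    (hD : ∀ c, D c ∈ sepIdeal f g {α ∈ R | (f α).2 ∈ U ∧ α j = c} univ) :
    ⋂ c, D c ∈ sepIdeal f g R T := by
  have hsep (c : ℕ) : FSigmaSeparated
      (f '' {α ∈ R | (f α).2 ∈ U ∧ α j = c} ∩ Prod.fst ⁻¹' D c) (range g) :=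
    ClosedSeparatedMod.fSigmaSeparated (image_univ (f := g) ▸ (hD c).2)
  refine ⟨.iInter fun c => (hD c).1, .of_snd_mem_open hU (image_subset_iff.2 hT)
    ((FSigmaSeparated.iUnion hsep).mono ?_)⟩
  rintro _ ⟨⟨⟨α, hα, rfl⟩, hαD⟩, hαU⟩
  exact mem_iUnion.2 ⟨α j, ⟨α, ⟨hα, hαU, rfl⟩, rfl⟩, mem_iInter.1 hαD _⟩

end SepIdeal

/-! ### Forcing conditions -/

/-- An approximation to a Hurewicz scheme: at each node `v` of a set of finite sequences, the codes
`left v` still allowed for points of the analytic set `range f`, and the codes `right v` still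
allowed for points of `range g`. The values of `left` and `right` outside `nodes` are irrelevant.
As with `PiNat.res`, finite sequences are listed with their last entry first. -/
structure Condition where
  nodes : Set (List ℕ)
  left : List ℕ → Set (ℕ → ℕ)
  right : List ℕ → Set (ℕ → ℕ)

namespace Condition

/-- Stronger conditions are larger. Passing to a stronger condition adds nodes and shrinks the sets
`right v`; the sets `left v` are final, being refined only at the children of `v`. -/
instance : Preorder Condition where
  le p q := p.nodes ⊆ q.nodes ∧ ∀ v ∈ p.nodes, q.left v = p.left v ∧ q.right v ⊆ p.right v
  le_refl _ := ⟨Subset.rfl, fun _ _ => ⟨rfl, Subset.rfl⟩⟩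
  le_trans _ _ _ hpq hqr := ⟨hpq.1.trans hqr.1, fun v hv =>
    ⟨(hqr.2 v (hpq.1 hv)).1.trans (hpq.2 v hv).1,
      (hqr.2 v (hpq.1 hv)).2.trans (hpq.2 v hv).2⟩⟩

/-- Add the node `w` if necessary, and prescribe the two sets of codes there. -/
def update (p : Condition) (w : List ℕ) (R T : Set (ℕ → ℕ)) : Condition where
  nodes := insert w p.nodes
  left := Function.update p.left w R
  right := Function.update p.right w T

/-- Shrink the set `right w` to its intersection with `Q`. -/
def restrictRight (p : Condition) (w : List ℕ) (Q : Set (ℕ → ℕ)) : Condition :=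
  p.update w (p.left w) (p.right w ∩ Q)

variable {p : Condition} {v w : List ℕ} {R T Q : Set (ℕ → ℕ)}

lemma mem_nodes_update_self : w ∈ (p.update w R T).nodes :=
  mem_insert w p.nodes

lemma left_restrictRight : (p.restrictRight w Q).left = p.left :=
  Function.update_eq_self w p.left

lemma right_restrictRight_self : (p.restrictRight w Q).right w = p.right w ∩ Q :=
  Function.update_self ..

lemma right_restrictRight_subset : (p.restrictRight w Q).right v ⊆ p.right v := by
  rcases eq_or_ne v w with rfl | hvw
  · exact right_restrictRight_self.trans_subset inter_subset_left
  · exact (Function.update_of_ne hvw _ p.right).subset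

lemma le_restrictRight : p ≤ p.restrictRight w Q :=
  ⟨subset_insert w p.nodes, fun v _ =>
    ⟨congrFun left_restrictRight v, right_restrictRight_subset⟩⟩

lemma le_update (hw : w ∉ p.nodes) : p ≤ p.update w R T := by
  refine ⟨subset_insert w p.nodes, fun v hv => ?_⟩
  have hvw : v ≠ w := ne_of_mem_of_not_mem hv hw
  simp [update, hvw]

section Separated

variable {X Z : Type*} [MeasurableSpace X] [TopologicalSpace Z] [MeasurableSpace Z]
  {f g : (ℕ → ℕ) → X × Z}

/-- `X` is covered by countably many measurable sets, over each of which the sets coded at some node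
of `p` can be separated. -/
def Separated (f g : (ℕ → ℕ) → X × Z) (p : Condition) : Prop :=
  ∃ 𝒟 : Set (Set X), 𝒟.Countable ∧ ⋃₀ 𝒟 = univ ∧
    ∀ D ∈ 𝒟, ∃ v ∈ p.nodes, D ∈ sepIdeal f g (p.left v) (p.right v)

lemma separated_of_compl {V : Set X} (hv : v ∈ p.nodes) (hw : w ∈ p.nodes)
    (hVv : V ∈ sepIdeal f g (p.left v) (p.right v))
    (hVw : Vᶜ ∈ sepIdeal f g (p.left w) (p.right w)) : p.Separated f g := by
  refine ⟨{V, Vᶜ}, by simp, by simp, ?_⟩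
  rintro D (rfl | rfl)
  · exact ⟨v, hv, hVv⟩
  · exact ⟨w, hw, hVw⟩

lemma Separated.of_update {R T : ℕ → Set (ℕ → ℕ)} (hv : v ∈ p.nodes)
    (hsep : ∀ D : ℕ → Set X, (∀ c, D c ∈ sepIdeal f g (R c) (T c)) →
      ⋂ c, D c ∈ sepIdeal f g (p.left v) (p.right v))
    (h : ∀ c, (p.update w (R c) (T c)).Separated f g) : p.Separated f g := by
  choose 𝒟 h𝒟 hcover hmem using h
  -- A point outside some `W c` lies in a piece separated at a node of `p` itself.
  let W : ℕ → Set X := fun c => ⋃₀ {D ∈ 𝒟 c | D ∈ sepIdeal f g (R c) (T c)}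
  have hW (c : ℕ) : W c ∈ sepIdeal f g (R c) (T c) :=
    sUnion_mem_sepIdeal ((h𝒟 c).mono (sep_subset _ _)) fun _ hD => hD.2
  let 𝒪 : Set (Set X) := {D | ∃ u ∈ p.nodes, D ∈ sepIdeal f g (p.left u) (p.right u)}
  have hsplit (c : ℕ) (D : Set X) (hD : D ∈ 𝒟 c) : D ∈ sepIdeal f g (R c) (T c) ∨ D ∈ 𝒪 := by
    obtain ⟨u, hu, hDu⟩ := hmem c D hD
    rcases eq_or_ne u w with rfl | huw
    · left
      simpa [update] using hDu
    · exact .inr ⟨u, mem_of_mem_insert_of_ne hu huw, by simpa [update, huw] using hDu⟩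
  refine ⟨insert (⋂ c, W c) (⋃ c, 𝒟 c ∩ 𝒪), ?_, eq_univ_of_forall fun x => ?_, ?_⟩
  · exact (countable_iUnion fun c => (h𝒟 c).mono inter_subset_left).insert _
  · by_cases hx : x ∈ ⋂ c, W c
    · exact ⟨_, mem_insert _ _, hx⟩
    · obtain ⟨c, hc⟩ := not_forall.1 (mt mem_iInter.2 hx)
      obtain ⟨D, hD, hxD⟩ := (hcover c).ge (mem_univ x)
      have hDO : D ∈ 𝒪 := (hsplit c D hD).resolve_left fun hDw => hc ⟨D, ⟨hD, hDw⟩, hxD⟩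
      exact ⟨D, .inr (mem_iUnion.2 ⟨c, hD, hDO⟩), hxD⟩
  · rintro D (rfl | hD)
    · exact ⟨v, hv, hsep W hW⟩
    · obtain ⟨c, -, hDO⟩ := mem_iUnion.1 hD
      exact hDO

lemma Separated.of_restrictRight {Q : ℕ → Set (ℕ → ℕ)} (hv : v ∈ p.nodes)
    (hQ : ⋃ c, Q c = univ) (h : ∀ c, (p.restrictRight v (Q c)).Separated f g) :
    p.Separated f g :=
  .of_update hv (fun _ => iInter_mem_sepIdeal_of_right hQ) h

lemma Separated.of_child [OpensMeasurableSpace Z] {U : Set Z} {m : ℕ} (hv : v ∈ p.nodes)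
    (hU : IsOpen U) (hvU : ∀ β ∈ p.right v, (g β).2 ∈ U)
    (h : ∀ c, (p.update (m :: v) {α ∈ p.left v | (f α).2 ∈ U ∧ α v.length = c} univ).Separated
      f g) : p.Separated f g :=
  .of_update hv (fun _ => iInter_mem_sepIdeal_of_left hU hvU) h

/-- The trivial condition, whose only node is the root and which allows all codes there. -/
def root : Condition where
  nodes := {[]}
  left := fun _ => univ
  right := fun _ => univ

lemma Separated.fSigmaSeparated_of_root (h : root.Separated f g) :
    FSigmaSeparated (range f) (range g) := by
  obtain ⟨𝒟, h𝒟, hcover, hmem⟩ := h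
  have huniv : univ ∈ sepIdeal f g univ univ := by
    rw [← hcover]
    refine sUnion_mem_sepIdeal h𝒟 fun D hD => ?_
    obtain ⟨v, -, hDv⟩ := hmem D hD
    exact hDv
  refine ClosedSeparatedMod.fSigmaSeparated ?_
  simpa only [image_univ, preimage_univ, inter_univ] using huniv.2

end Separated

section Valid

variable {X Z : Type*} [PseudoMetricSpace Z] {f g : (ℕ → ℕ) → X × Z}

/-- The constraints linking the left codes `R` at the child `m :: v` of a node `v` of length `j` to
the codes `L` and `T` allowed on the left and on the right at `v`: coordinate `j` is determined, and
the points coded by `R` are within `1 / (m + 1)` of those coded by `T` in the fibre direction. -/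
structure IsChildCompatible (f g : (ℕ → ℕ) → X × Z) (m j : ℕ) (L T R : Set (ℕ → ℕ)) : Prop where
  subset : R ⊆ L
  exists_apply_eq : ∃ c, ∀ α ∈ R, α j = c
  dist_le : ∀ α ∈ R, ∀ β ∈ T, dist (f α).2 (g β).2 ≤ 1 / (m + 1)

/-- The nodes of `p` form a tree, along which the sets of codes are compatible. -/
structure Valid (f g : (ℕ → ℕ) → X × Z) (p : Condition) : Prop where
  nil_mem : [] ∈ p.nodes
  mem_of_cons_mem {m v} : m :: v ∈ p.nodes → v ∈ p.nodes
  compatible {m v} : m :: v ∈ p.nodes →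
    IsChildCompatible f g m v.length (p.left v) (p.right v) (p.left (m :: v))

lemma valid_root : root.Valid f g where
  nil_mem := rfl
  mem_of_cons_mem h := (List.cons_ne_nil _ _ h).elim
  compatible h := (List.cons_ne_nil _ _ h).elim

lemma Valid.restrictRight (hp : p.Valid f g) (hw : w ∈ p.nodes) :
    (p.restrictRight w Q).Valid f g := by
  have hnodes : (p.restrictRight w Q).nodes = p.nodes := insert_eq_of_mem hw
  refine ⟨hnodes ▸ hp.nil_mem, hnodes ▸ hp.mem_of_cons_mem, fun hmv => ?_⟩
  rw [hnodes] at hmv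
  obtain ⟨hsub, happly, hdist⟩ := hp.compatible hmv
  rw [left_restrictRight]
  exact ⟨hsub, happly, fun α hα β hβ => hdist α hα β (right_restrictRight_subset hβ)⟩

lemma Valid.child {U : Set Z} {m c : ℕ} (hp : p.Valid f g) (hv : v ∈ p.nodes)
    (hm : m :: v ∉ p.nodes) (hU : ∀ y ∈ U, ∀ y' ∈ U, dist y y' ≤ 1 / (m + 1))
    (hvU : ∀ β ∈ p.right v, (g β).2 ∈ U) :
    (p.update (m :: v) {α ∈ p.left v | (f α).2 ∈ U ∧ α v.length = c} univ).Valid f g := by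
  have hne {u} (hu : u ∈ p.nodes) : u ≠ m :: v := ne_of_mem_of_not_mem hu hm
  refine ⟨.inr hp.nil_mem, fun hku => ?_, fun hku => ?_⟩ <;> rcases hku with hku | hku
  · exact .inr ((List.cons.inj hku).2 ▸ hv)
  · exact .inr (hp.mem_of_cons_mem hku)
  · obtain ⟨rfl, rfl⟩ := List.cons.inj hku
    simp only [update, Function.update_self, Function.update_of_ne (hne hv)]
    exact ⟨sep_subset _ _, ⟨c, fun α hα => hα.2.2⟩,
      fun α hα β hβ => hU _ hα.2.1 _ (hvU β hβ)⟩
  · simpa only [update, Function.update_of_ne (hne hku),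
      Function.update_of_ne (hne (hp.mem_of_cons_mem hku))] using hp.compatible hku

end Valid

end Condition

/-! ### Generic sequences of conditions -/

lemma tendsto_smallSets_nhds_pi {ι κ : Type*} {E : κ → Type*} [∀ k, TopologicalSpace (E k)]
    [∀ k, DiscreteTopology (E k)] {l : Filter ι} {S : ι → Set (∀ k, E k)} {a : ∀ k, E k}
    (h : ∀ k, ∀ᶠ i in l, ∀ γ ∈ S i, γ k = a k) : Tendsto S l (𝓝 a).smallSets := by
  simp only [nhds_pi, Filter.pi, smallSets_iInf, smallSets_comap_eq_comap_image, tendsto_iInf,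
    tendsto_comap_iff, nhds_discrete, ← principal_singleton, smallSets_principal, tendsto_principal]
  simp only [Function.comp_apply, mem_powerset_iff, image_subset_iff]
  exact h

lemma mem_closure_of_tendsto_smallSets {ι E : Type*} [TopologicalSpace E] {l : Filter ι}
    {s : ι → Set E} {S : Set E} {a : E} (hs : Tendsto s l (𝓝 a).smallSets)
    (hS : ∃ᶠ i in l, (s i ∩ S).Nonempty) : a ∈ closure S := by
  refine mem_closure_iff_nhds.2 fun U hU => ?_
  obtain ⟨i, hiS, hiU⟩ := (hS.and_eventually (tendsto_smallSets_iff.1 hs U hU)).exists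
  exact hiS.mono (inter_subset_inter_left S hiU)

section Forcing

variable {X Z : Type*} [MeasurableSpace X] [PseudoMetricSpace Z] [MeasurableSpace Z]
  {f g : (ℕ → ℕ) → X × Z}

/-- The forcing notion for a Hurewicz scheme of points of `range f` and `range g`: the valid
conditions that are not separated. -/
abbrev Forcing (f g : (ℕ → ℕ) → X × Z) : Type :=
  {p : Condition // p.Valid f g ∧ ¬ p.Separated f g}

namespace Forcing

variable {p : Forcing f g} {v w : List ℕ}

lemma compl_notMem_sepIdeal {V : Set X} (hv : v ∈ p.1.nodes) (hw : w ∈ p.1.nodes)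
    (hV : V ∈ sepIdeal f g (p.1.left v) (p.1.right v)) :
    Vᶜ ∉ sepIdeal f g (p.1.left w) (p.1.right w) :=
  fun hVc => p.2.2 (Condition.separated_of_compl hv hw hV hVc)

lemma right_nonempty (hv : v ∈ p.1.nodes) : (p.1.right v).Nonempty := by
  by_contra! hempty
  refine compl_notMem_sepIdeal hv hv (mem_sepIdeal_of_right .univ ?_)
    (mem_sepIdeal_of_left MeasurableSet.univ.compl ?_)
  · simp [hempty]
  · simp

lemma exists_restrictRight (hv : v ∈ p.1.nodes) {Q : ℕ → Set (ℕ → ℕ)} (hQ : ⋃ c, Q c = univ) :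
    ∃ q ≥ p, v ∈ q.1.nodes ∧ ∃ c, q.1.right v ⊆ Q c := by
  obtain ⟨c, hc⟩ : ∃ c, ¬ (p.1.restrictRight v (Q c)).Separated f g := by
    by_contra! h
    exact p.2.2 (.of_restrictRight hv hQ h)
  exact ⟨⟨_, p.2.1.restrictRight hv, hc⟩, Condition.le_restrictRight,
    Condition.mem_nodes_update_self, c,
    Condition.right_restrictRight_self.trans_subset inter_subset_right⟩

variable [OpensMeasurableSpace Z]

lemma exists_child {m : ℕ} {U : Set Z} (hv : v ∈ p.1.nodes) (hU : IsOpen U)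
    (hdist : ∀ y ∈ U, ∀ y' ∈ U, dist y y' ≤ 1 / (m + 1)) (hvU : ∀ β ∈ p.1.right v, (g β).2 ∈ U) :
    ∃ q ≥ p, m :: v ∈ q.1.nodes := by
  by_cases hm : m :: v ∈ p.1.nodes
  · exact ⟨p, le_rfl, hm⟩
  obtain ⟨c, hc⟩ : ∃ c, ¬ (p.1.update (m :: v)
      {α ∈ p.1.left v | (f α).2 ∈ U ∧ α v.length = c} univ).Separated f g := by
    by_contra! h
    exact p.2.2 (.of_child hv hU hvU h)
  exact ⟨⟨_, p.2.1.child hv hm hdist hvU, hc⟩, Condition.le_update hm,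
    Condition.mem_nodes_update_self⟩

variable [SeparableSpace Z]

lemma exists_mem_nodes (v : List ℕ) (p : Forcing f g) : ∃ q ≥ p, v ∈ q.1.nodes := by
  induction v with
  | nil => exact ⟨p, le_rfl, p.2.1.nil_mem⟩
  | cons m v ih =>
    obtain ⟨q, hpq, hv⟩ := ih
    have : Nonempty Z := ⟨(g 0).2⟩
    let U (u : ℕ) : Set Z := Metric.ball (denseSeq Z u) (1 / (m + 1) / 2)
    have hU : ⋃ u, {β | (g β).2 ∈ U u} = univ := by
      refine iUnion_eq_univ_iff.2 fun β => ?_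
      obtain ⟨u, hu⟩ := (denseRange_denseSeq Z).exists_dist_lt (g β).2
        (show (0 : ℝ) < 1 / (m + 1) / 2 by positivity)
      exact ⟨u, hu⟩
    obtain ⟨q', hqq', hv', u, hu⟩ := exists_restrictRight hv hU
    have hdist : ∀ y ∈ U u, ∀ y' ∈ U u, dist y y' ≤ 1 / (m + 1) := fun y hy y' hy' => by
      linarith [dist_triangle_right y y' (denseSeq Z u), Metric.mem_ball.1 hy,
        Metric.mem_ball.1 hy']
    obtain ⟨q'', hq', hm⟩ := exists_child hv' Metric.isOpen_ball hdist hu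
    exact ⟨q'', hpq.trans (hqq'.trans hq'), hm⟩

end Forcing

/-- The sequence of conditions `r` decides every set `left v`, to be `R v`, and shrinks every set
`right v` to the single code `β v`. -/
structure IsGenericLimit (r : ℕ → Forcing f g) (R : List ℕ → Set (ℕ → ℕ)) (β : List ℕ → ℕ → ℕ) :
    Prop where
  eventually_mem (v : List ℕ) : ∀ᶠ i in atTop, v ∈ (r i).1.nodes ∧ (r i).1.left v = R v
  tendsto_right (v : List ℕ) : Tendsto (fun i => (r i).1.right v) atTop (𝓝 (β v)).smallSets

lemma Forcing.exists_isGenericLimit [OpensMeasurableSpace Z] [SeparableSpace Z]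
    (p : Forcing f g) :
    ∃ (r : ℕ → Forcing f g) (R : List ℕ → Set (ℕ → ℕ)) (β : List ℕ → ℕ → ℕ),
      IsGenericLimit r R β := by
  let 𝒟 (vk : List ℕ × ℕ) : Order.Cofinal (Forcing f g) :=
    { carrier := {q | vk.1 ∈ q.1.nodes ∧ ∃ c, ∀ γ ∈ q.1.right vk.1, γ vk.2 = c}
      isCofinal := fun p => by
        obtain ⟨q, hpq, hv⟩ := exists_mem_nodes vk.1 p
        obtain ⟨q', hqq', hv', hc⟩ := exists_restrictRight hv
          (Q := fun c => {γ | γ vk.2 = c}) (iUnion_eq_univ_iff.2 fun γ => ⟨γ vk.2, rfl⟩)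
        exact ⟨q', ⟨hv', hc⟩, hpq.trans hqq'⟩ }
  let r := Order.sequenceOfCofinals p 𝒟
  have hr : Monotone r := Order.sequenceOfCofinals.monotone p 𝒟
  have hdecide (v : List ℕ) (k : ℕ) :
      ∃ i, v ∈ (r i).1.nodes ∧ ∃ c, ∀ γ ∈ (r i).1.right v, γ k = c :=
    ⟨_, Order.sequenceOfCofinals.encode_mem p 𝒟 (v, k)⟩
  choose n hn β hβ using hdecide
  refine ⟨r, fun v => (r (n v 0)).1.left v, β, fun v => ?_, fun v =>
    tendsto_smallSets_nhds_pi fun k => ?_⟩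
  · filter_upwards [eventually_ge_atTop (n v 0)] with i hi
    exact ⟨(hr hi).1 (hn v 0), ((hr hi).2 v (hn v 0)).1⟩
  · filter_upwards [eventually_ge_atTop (n v k)] with i hi γ hγ
    exact hβ v k γ (((hr hi).2 v (hn v k)).2 hγ)

end Forcing

namespace IsGenericLimit

variable {X Z : Type*} [TopologicalSpace X] [MeasurableSpace X] [PseudoMetricSpace Z]
  [MeasurableSpace Z] {f g : (ℕ → ℕ) → X × Z} {r : ℕ → Forcing f g} {R : List ℕ → Set (ℕ → ℕ)}
  {β : List ℕ → ℕ → ℕ}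

lemma eventually_mem_sepIdeal (h : IsGenericLimit r R β) (hg : Continuous g) {v : List ℕ}
    {D : Set X} (hD : MeasurableSet D) (hv : Dᶜ ∈ 𝓝 (g (β v)).1) :
    ∀ᶠ i in atTop, D ∈ sepIdeal f g ((r i).1.left v) ((r i).1.right v) := by
  have hnhds : (fun γ => (g γ).1) ⁻¹' Dᶜ ∈ 𝓝 (β v) :=
    (continuous_fst.comp hg).continuousAt.preimage_mem_nhds hv
  filter_upwards [tendsto_smallSets_iff.1 (h.tendsto_right v) _ hnhds] with i hi
  exact mem_sepIdeal_of_right hD fun γ hγ => hi hγ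

variable [OpensMeasurableSpace X]

lemma fst_eq [T2Space X] (h : IsGenericLimit r R β) (hg : Continuous g) (v w : List ℕ) :
    (g (β v)).1 = (g (β w)).1 := by
  by_contra hne
  obtain ⟨V, W, hV, hW, hvV, hwW, hVW⟩ := t2_separation hne
  have hwV : Vᶜ ∈ 𝓝 (g (β w)).1 := mem_of_superset (hW.mem_nhds hwW) hVW.subset_compl_left
  have hvV' : Vᶜᶜ ∈ 𝓝 (g (β v)).1 := (compl_compl V).symm ▸ hV.mem_nhds hvV
  obtain ⟨i, ⟨hv, -⟩, ⟨hw, -⟩, hiw, hiv⟩ :=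
    ((h.eventually_mem v).and <| (h.eventually_mem w).and <|
      (h.eventually_mem_sepIdeal hg hV.measurableSet hwV).and
        (h.eventually_mem_sepIdeal hg hV.measurableSet.compl hvV')).exists
  exact Forcing.compl_notMem_sepIdeal hw hv hiw hiv

lemma exists_mem_left (h : IsGenericLimit r R β) (hg : Continuous g) (v w : List ℕ) {V : Set X}
    (hV : IsOpen V) (hw : (g (β w)).1 ∈ V) : ∃ α ∈ R v, (f α).1 ∈ V := by
  by_contra! hR
  have hwV : Vᶜᶜ ∈ 𝓝 (g (β w)).1 := (compl_compl V).symm ▸ hV.mem_nhds hw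
  obtain ⟨i, ⟨hv, hleft⟩, ⟨hw, -⟩, hiw⟩ :=
    ((h.eventually_mem v).and <| (h.eventually_mem w).and
      (h.eventually_mem_sepIdeal hg hV.measurableSet.compl hwV)).exists
  exact Forcing.compl_notMem_sepIdeal hv hw
    (mem_sepIdeal_of_left hV.measurableSet (hleft ▸ hR)) hiw

end IsGenericLimit

/-! ### Hurewicz schemes -/

lemma antitone_comp_res {α : Type*} [Preorder α] {R : List ℕ → α} (hR : ∀ m v, R (m :: v) ≤ R v)
    (z : ℕ → ℕ) : Antitone fun K => R (PiNat.res z K) :=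
  antitone_nat_of_succ_le fun K => hR (z K) (PiNat.res z K)

lemma exists_continuous_branch {R : List ℕ → Set (ℕ → ℕ)} (hsub : ∀ m v, R (m :: v) ⊆ R v)
    (hR : ∀ m v, ∃ c, ∀ α ∈ R (m :: v), α v.length = c) :
    ∃ a : (ℕ → ℕ) → ℕ → ℕ, Continuous a ∧
      ∀ z, Tendsto (fun K => R (PiNat.res z K)) atTop (𝓝 (a z)).smallSets := by
  choose c hc using hR
  refine ⟨fun z k => c (z k) (PiNat.res z k), continuous_pi fun k => IsLocallyConstant.continuous
    ((IsLocallyConstant.iff_exists_open _).2 fun z => ?_), fun z => ?_⟩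
  · refine ⟨_, PiNat.isOpen_cylinder _ z (k + 1), PiNat.self_mem_cylinder z (k + 1), ?_⟩
    intro z' hz'
    rw [PiNat.cylinder_eq_res] at hz'
    obtain ⟨hlast, hinit⟩ := List.cons.inj hz'
    rw [hlast, hinit]
  · refine tendsto_smallSets_nhds_pi fun k => ?_
    filter_upwards [eventually_ge_atTop (k + 1)] with K hK α hα
    simpa only [PiNat.res_length] using hc (z k) (PiNat.res z k) α (antitone_comp_res hsub z hK hα)

/-- A continuous family `Φ` of points of `Z` indexed by the Baire space, together with points `b v`
such that every `b v` is a limit of values of `Φ` at sequences extending `v`. -/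
structure IsHurewiczScheme {Z : Type*} [PseudoMetricSpace Z] (Φ : (ℕ → ℕ) → Z) (b : List ℕ → Z) :
    Prop where
  continuous : Continuous Φ
  dist_le (z : ℕ → ℕ) (k : ℕ) : dist (Φ z) (b (PiNat.res z k)) ≤ 1 / (z k + 1)

lemma IsHurewiczScheme.exists_mem_iUnion {Z : Type*} [PseudoMetricSpace Z] {Φ : (ℕ → ℕ) → Z}
    {b : List ℕ → Z} (h : IsHurewiczScheme Φ b) {F : ℕ → Set Z} (hF : ∀ n, IsClosed (F n))
    (hΦ : ∀ z, Φ z ∈ ⋃ n, F n) : ∃ v, b v ∈ ⋃ n, F n := by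
  obtain ⟨n, z, hz⟩ := nonempty_interior_of_iUnion_of_closed
    (fun n => (hF n).preimage h.continuous) (by rw [← preimage_iUnion]; exact eq_univ_of_forall hΦ)
  obtain ⟨_, ⟨y, k, rfl⟩, -, hyF⟩ :=
    (PiNat.isTopologicalBasis_cylinders fun _ => ℕ).exists_subset_of_mem_open hz isOpen_interior
  let y' (m : ℕ) : ℕ → ℕ := Function.update y k m
  have hy' (m : ℕ) : y' m ∈ PiNat.cylinder y k := PiNat.update_mem_cylinder y k m
  have hdist (m : ℕ) : dist (Φ (y' m)) (b (PiNat.res y k)) ≤ 1 / (m + 1) := by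
    have hres : PiNat.res (y' m) k = PiNat.res y k := by
      simpa only [PiNat.cylinder_eq_res, mem_ofPred_eq] using hy' m
    simpa only [hres, y', Function.update_self] using h.dist_le (y' m) k
  have hlim : Tendsto (fun m => Φ (y' m)) atTop (𝓝 (b (PiNat.res y k))) :=
    tendsto_iff_dist_tendsto_zero.2 <|
      squeeze_zero (fun _ => dist_nonneg) hdist tendsto_one_div_add_atTop_nhds_zero_nat
  have hmem (m : ℕ) : Φ (y' m) ∈ F n := interior_subset (s := Φ ⁻¹' F n) (hyF (hy' m))
  exact ⟨PiNat.res y k, mem_iUnion.2 ⟨n, (hF n).mem_of_tendsto hlim (.of_forall hmem)⟩⟩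

namespace IsGenericLimit

variable {X Z : Type*} [MeasurableSpace X] [PseudoMetricSpace Z] [MeasurableSpace Z]
  {f g : (ℕ → ℕ) → X × Z} {r : ℕ → Forcing f g} {R : List ℕ → Set (ℕ → ℕ)} {β : List ℕ → ℕ → ℕ}

lemma isChildCompatible (h : IsGenericLimit r R β) (hg : Continuous fun γ => (g γ).2) (m : ℕ)
    (v : List ℕ) : Condition.IsChildCompatible f g m v.length (R v) {β v} (R (m :: v)) := by
  have hcompat : ∀ᶠ i in atTop, v ∈ (r i).1.nodes ∧ Condition.IsChildCompatible f g m v.length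
      (R v) ((r i).1.right v) (R (m :: v)) := by
    filter_upwards [h.eventually_mem v, h.eventually_mem (m :: v)] with i ⟨hv, hRv⟩ ⟨hm, hRm⟩
    exact ⟨hv, hRv ▸ hRm ▸ (r i).2.1.compatible hm⟩
  obtain ⟨i, -, hi⟩ := hcompat.exists
  refine ⟨hi.subset, hi.exists_apply_eq, ?_⟩
  rintro α hα _ rfl
  have hclosed : IsClosed {γ | dist (f α).2 (g γ).2 ≤ 1 / (m + 1)} :=
    isClosed_le (continuous_const.dist hg) continuous_const
  refine hclosed.closure_subset
    (mem_closure_of_tendsto_smallSets (h.tendsto_right v) (Eventually.frequently ?_))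
  filter_upwards [hcompat] with i ⟨hv, hi⟩
  obtain ⟨γ, hγ⟩ := Forcing.right_nonempty hv
  exact ⟨γ, hγ, hi.dist_le α hα γ hγ⟩

variable [TopologicalSpace X] [T2Space X] [OpensMeasurableSpace X]

lemma exists_isHurewiczScheme (h : IsGenericLimit r R β) (hf : Continuous f) (hg : Continuous g) :
    ∃ (x : X) (Φ : (ℕ → ℕ) → Z) (b : List ℕ → Z), IsHurewiczScheme Φ b ∧
      (∀ z, (x, Φ z) ∈ range f) ∧ ∀ v, (x, b v) ∈ range g := by
  have hcompat := h.isChildCompatible (continuous_snd.comp hg)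
  have hsub (m : ℕ) (v : List ℕ) : R (m :: v) ⊆ R v := (hcompat m v).subset
  obtain ⟨a, ha, hRa⟩ := exists_continuous_branch hsub fun m v => (hcompat m v).exists_apply_eq
  have hfst (z : ℕ → ℕ) : (f (a z)).1 = (g (β [])).1 := by
    by_contra hne
    obtain ⟨V, W, hV, hW, hzV, hW', hVW⟩ := t2_separation hne
    obtain ⟨K, hK⟩ := (tendsto_smallSets_iff.1 (hRa z) _
      ((hV.preimage (continuous_fst.comp hf)).mem_nhds hzV)).exists
    obtain ⟨α, hα, hαW⟩ := h.exists_mem_left hg (PiNat.res z K) [] hW hW'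
    exact disjoint_left.1 hVW (hK hα) hαW
  have hdist (z : ℕ → ℕ) (k : ℕ) :
      dist (f (a z)).2 (g (β (PiNat.res z k))).2 ≤ 1 / (z k + 1) := by
    have hclosed : IsClosed {α | dist (f α).2 (g (β (PiNat.res z k))).2 ≤ 1 / (z k + 1)} :=
      isClosed_le ((continuous_snd.comp hf).dist continuous_const) continuous_const
    refine hclosed.closure_subset
      (mem_closure_of_tendsto_smallSets (hRa z) (Eventually.frequently ?_))
    filter_upwards [eventually_ge_atTop (k + 1)] with K hK
    obtain ⟨α, hα, -⟩ := h.exists_mem_left hg (PiNat.res z K) [] isOpen_univ (mem_univ _)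
    exact ⟨α, hα, (hcompat _ _).dist_le α (antitone_comp_res hsub z hK hα) _ rfl⟩
  exact ⟨(g (β [])).1, fun z => (f (a z)).2, fun v => (g (β v)).2,
    ⟨continuous_snd.comp (hf.comp ha), hdist⟩, fun z => ⟨a z, Prod.ext (hfst z) rfl⟩,
    fun v => ⟨β v, Prod.ext (h.fst_eq hg v []) rfl⟩⟩

end IsGenericLimit

/-! ### Separation of analytic sets and decomposition of Borel sets -/

lemma fSigmaSeparated_range {X Z : Type*} [TopologicalSpace X] [T2Space X] [MeasurableSpace X]
    [OpensMeasurableSpace X] [PseudoMetricSpace Z] [SeparableSpace Z] [MeasurableSpace Z]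
    [OpensMeasurableSpace Z] {f g : (ℕ → ℕ) → X × Z} (hf : Continuous f) (hg : Continuous g)
    (h : ∀ x, ∃ F : ℕ → Set Z, (∀ n, IsClosed (F n)) ∧ Prod.mk x ⁻¹' range f ⊆ ⋃ n, F n ∧
      Disjoint (⋃ n, F n) (Prod.mk x ⁻¹' range g)) :
    FSigmaSeparated (range f) (range g) := by
  by_contra hsep
  let p : Forcing f g :=
    ⟨.root, Condition.valid_root, mt Condition.Separated.fSigmaSeparated_of_root hsep⟩
  obtain ⟨r, R, β, hlim⟩ := p.exists_isGenericLimit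
  obtain ⟨x, Φ, b, hscheme, hΦ, hb⟩ := hlim.exists_isHurewiczScheme hf hg
  obtain ⟨F, hF, hfF, hgF⟩ := h x
  obtain ⟨v, hv⟩ := hscheme.exists_mem_iUnion hF fun z => hfF (hΦ z)
  exact disjoint_left.1 hgF hv (hb v)

theorem fSigmaSeparated_of_analyticSet {X Z : Type*} [TopologicalSpace X] [T2Space X]
    [MeasurableSpace X] [OpensMeasurableSpace X] [TopologicalSpace Z] [PseudoMetrizableSpace Z]
    [SecondCountableTopology Z] [MeasurableSpace Z] [OpensMeasurableSpace Z] {A B : Set (X × Z)}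
    (hA : AnalyticSet A) (hB : AnalyticSet B)
    (h : ∀ x, ∃ F : ℕ → Set Z, (∀ n, IsClosed (F n)) ∧ Prod.mk x ⁻¹' A ⊆ ⋃ n, F n ∧
      Disjoint (⋃ n, F n) (Prod.mk x ⁻¹' B)) :
    FSigmaSeparated A B := by
  let := pseudoMetrizableSpacePseudoMetric Z
  rw [AnalyticSet] at hA hB
  rcases hA with rfl | ⟨f, hf, rfl⟩
  · exact IsClosedSectioned.empty.fSigmaSeparated (empty_disjoint B)
  rcases hB with rfl | ⟨g, hg, rfl⟩
  · exact ((IsClosedSectioned.fst_preimage .univ).fSigmaSeparated (disjoint_empty _)).mono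
      (subset_univ _)
  exact fSigmaSeparated_range hf hg h

theorem exists_iUnion_isClosedSectioned {X Z : Type*} [MeasurableSpace X] [StandardBorelSpace X]
    [TopologicalSpace Z] [PolishSpace Z] [MeasurableSpace Z] [BorelSpace Z] {P : Set (X × Z)}
    (hP : MeasurableSet P)
    (h : ∀ x, ∃ F : ℕ → Set Z, (∀ n, IsClosed (F n)) ∧ Prod.mk x ⁻¹' P = ⋃ n, F n) :
    ∃ C : ℕ → Set (X × Z), (∀ n, IsClosedSectioned (C n)) ∧ P = ⋃ n, C n := by
  let := upgradeStandardBorel X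
  obtain ⟨C, hC, hCP, hPC⟩ : FSigmaSeparated P Pᶜ := by
    refine fSigmaSeparated_of_analyticSet hP.analyticSet hP.compl.analyticSet fun x => ?_
    obtain ⟨F, hF, hPF⟩ := h x
    exact ⟨F, hF, hPF.subset, hPF ▸ disjoint_compl_right⟩
  exact ⟨C, hC, hPC.antisymm (iUnion_subset fun n => disjoint_compl_right_iff_subset.1 (hCP n))⟩

end SaintRaymond

open SaintRaymond in
theorem stmt_11_general {X Y : Type*} [MeasurableSpace X] [StandardBorelSpace X]
    [TopologicalSpace Y] [PolishSpace Y] [MeasurableSpace Y] [BorelSpace Y]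
    (P : Set (X × Y)) (hP : MeasurableSet P) (hsec : ∀ x : X, IsSigmaCompact {y | (x, y) ∈ P}) :
    ∃ Pn : ℕ → Set (X × Y), (∀ n, MeasurableSet (Pn n)) ∧
      (∀ n, ∀ x : X, IsCompact {y | (x, y) ∈ Pn n}) ∧ P = ⋃ n, Pn n := by
  let := upgradeIsCompletelyMetrizable Y
  obtain ⟨e, he⟩ := Metric.PiNatEmbed.exists_embedding_to_hilbert_cube (X := Y)
  have he' : MeasurableEmbedding (Prod.map id e : X × Y → X × (ℕ → unitInterval)) :=
    MeasurableEmbedding.id.prodMap (he.continuous.measurableEmbedding he.injective)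
  have hsecF (x : X) : ∃ F : ℕ → Set (ℕ → unitInterval), (∀ n, IsClosed (F n)) ∧
      Prod.mk x ⁻¹' (Prod.map id e '' P) = ⋃ n, F n := by
    obtain ⟨K, hK, hKP⟩ := hsec x
    refine ⟨fun n => e '' K n, fun n => ((hK n).image he.continuous).isClosed, ?_⟩
    rw [← image_iUnion, hKP]
    ext y
    simp
  obtain ⟨C, hC, hPC⟩ := exists_iUnion_isClosedSectioned (he'.measurableSet_image.2 hP) hsecF
  refine ⟨fun n => Prod.map id e ⁻¹' C n, fun n => he'.measurable (hC n).measurableSet,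
    fun n x => ?_, ?_⟩
  · refine he.isInducing.isCompact_preimage' ((hC n).isClosed_section x).isCompact fun y hy => ?_
    obtain ⟨p, -, hp⟩ := hPC.ge (mem_iUnion.2 ⟨n, hy⟩)
    exact ⟨p.2, congrArg Prod.snd hp⟩
  · rw [← preimage_iUnion, ← hPC, preimage_image_eq _ he'.injective]

theorem stmt_11 {X : Type*} [TopologicalSpace X] [PolishSpace X]
    [MeasurableSpace X] [BorelSpace X]
    (P : Set (X × (ℕ → ℕ))) (hP : MeasurableSet P)
    (hsec : ∀ x : X, IsSigmaCompact {y : ℕ → ℕ | (x, y) ∈ P}) :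
    ∃ Pn : ℕ → Set (X × (ℕ → ℕ)),
      (∀ n, MeasurableSet (Pn n)) ∧
      (∀ n, ∀ x : X, IsCompact {y : ℕ → ℕ | (x, y) ∈ Pn n}) ∧
      P = ⋃ n, Pn n :=
  stmt_11_general P hP hsec
end

section
/- (Burgess–Hillard) Let X be a Polish space and P ⊆ X × ℕ^ℕ an analytic set each of whose vertical sections P_x is contained in a σ-compact subset of ℕ^ℕ. Then there is a countable family of Borel sets P_n ⊆ X × ℕ^ℕ, each with all vertical sections compact, such that P ⊆ ⋃_n P_n. -/
/-!
Call a subset of `X × ℕ^ℕ` small if countably many Borel sets with compact sections cover it, and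
let `P` be the range of a continuous map `F` on `ℕ^ℕ`. A node is a pair `(t, s)` of finite
sequences; its pieces are the sets of those points `F w` with `t ⊆ w` whose second coordinate
extends `s ++ [m]` for some `m ≥ M`, one piece for each `M`. In the spirit of Novikov's separation
theorem, a set `S` of nodes is inseparable if `X` is not a countable union of Borel sets over each
of which some piece of some node of `S` is small.

If `P` is not small, then some `{([], s)}` is inseparable. Moreover, if `S` is inseparable and
`(t, s) ∈ S`, then for every `M` an inseparable set is obtained from `S` by adding a node
`(t ++ [n], s')` where `s'` extends `s ++ [m]` for some `m ≥ M`. The reason is that, over the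
points `x` at which the pieces of all `(t, s')`, `s' ⊇ s`, can be made small, what remains of the
section is a closed, finitely branching, hence compact set.

A generic (Rasiowa-Sikorski) sequence of inseparable sets therefore yields a set of nodes closed
under such extensions. Since two of its nodes cannot be separated by disjoint open subsets of `X`,
all its branches converge to points of `P` over one and the same `x`, and the choice of the
entries `m` along a branch makes the section `P_x` escape any given σ-compact set.
-/

open Set Topology MeasureTheory
open Filter (Tendsto atTop eventually_ge_atTop)
open PiNat (res res_succ res_length res_eq_res)

namespace BurgessHillard

section CountablyCovered

variable {α : Type*} {𝒢 : Set (Set α)} {A A' : Set α}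

/-- Membership in the σ-ideal generated by `𝒢`: countably many members of `𝒢` cover `A`. -/
def CountablyCovered (𝒢 : Set (Set α)) (A : Set α) : Prop :=
  ∃ C ⊆ 𝒢, C.Countable ∧ A ⊆ ⋃₀ C

namespace CountablyCovered

lemma of_mem (hA : A ∈ 𝒢) : CountablyCovered 𝒢 A :=
  ⟨{A}, singleton_subset_iff.2 hA, countable_singleton A, (sUnion_singleton A).superset⟩

lemma empty : CountablyCovered 𝒢 (∅ : Set α) :=
  ⟨∅, empty_subset _, countable_empty, empty_subset _⟩

lemma mono (h : CountablyCovered 𝒢 A') (hA : A ⊆ A') : CountablyCovered 𝒢 A :=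
  let ⟨C, hC, hcount, hcov⟩ := h
  ⟨C, hC, hcount, hA.trans hcov⟩

lemma iUnion {κ : Sort*} [Countable κ] {A : κ → Set α} (h : ∀ k, CountablyCovered 𝒢 (A k)) :
    CountablyCovered 𝒢 (⋃ k, A k) := by
  choose C hC hcount hcov using h
  exact ⟨⋃ k, C k, iUnion_subset hC, countable_iUnion hcount,
    iUnion_subset fun k => (hcov k).trans (sUnion_subset_sUnion (subset_iUnion C k))⟩

lemma union (h : CountablyCovered 𝒢 A) (h' : CountablyCovered 𝒢 A') :
    CountablyCovered 𝒢 (A ∪ A') := by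
  rw [union_eq_iUnion]
  exact iUnion (Bool.forall_bool.2 ⟨h', h⟩)

lemma exists_seq (h : CountablyCovered 𝒢 A) (hempty : ∅ ∈ 𝒢) :
    ∃ f : ℕ → Set α, (∀ n, f n ∈ 𝒢) ∧ A ⊆ ⋃ n, f n := by
  obtain ⟨C, hC, hcount, hcov⟩ := h
  obtain ⟨f, hf⟩ := (hcount.insert ∅).exists_eq_range (insert_nonempty _ _)
  refine ⟨f, fun n => insert_subset hempty hC (hf ▸ mem_range_self n), hcov.trans ?_⟩
  rw [← sUnion_range, ← hf]
  exact sUnion_subset_sUnion (subset_insert _ _)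

end CountablyCovered

end CountablyCovered

section Cyl

variable {α : Type*} {s t : List α} {y z : ℕ → α}

/-- The basic open set of sequences with initial segment `s`. As in `PiNat.res`, finite sequences
are written in reverse, so that `a :: s` prolongs `s` by `a`, and `s <:+ t` says that `t` is an
extension of `s`. -/
def cyl (s : List α) : Set (ℕ → α) := {y | res y s.length = s}

@[simp]
lemma mem_cyl_nil (y : ℕ → α) : y ∈ cyl [] := rfl

@[simp]
lemma mem_cyl_cons {a : α} : y ∈ cyl (a :: s) ↔ y s.length = a ∧ y ∈ cyl s :=
  List.cons_eq_cons

lemma mem_cyl_res {n : ℕ} : y ∈ cyl (res z n) ↔ res y n = res z n := by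
  rw [cyl, mem_ofPred_eq, res_length]

lemma self_mem_cyl_res (y : ℕ → α) (n : ℕ) : y ∈ cyl (res y n) := mem_cyl_res.2 rfl

lemma cyl_anti (h : s <:+ t) : cyl t ⊆ cyl s := by
  obtain ⟨r, rfl⟩ := h
  induction r with
  | nil => exact subset_rfl
  | cons a r ih => exact fun y hy => ih (mem_cyl_cons.1 hy).2

lemma res_suffix_res (y : ℕ → α) {m n : ℕ} (h : m ≤ n) : res y m <:+ res y n := by
  induction n, h using Nat.le_induction with
  | base => exact List.suffix_rfl
  | succ n _ ih => exact ih.trans (List.suffix_cons _ _)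

lemma suffix_res_of_mem_cyl {n : ℕ} (hy : y ∈ cyl s) (hn : s.length ≤ n) : s <:+ res y n := by
  have h : res y s.length = s := hy
  exact h ▸ res_suffix_res y hn

variable [TopologicalSpace α] [DiscreteTopology α]

lemma isClopen_cyl (s : List α) : IsClopen (cyl s) := by
  induction s with
  | nil =>
    rw [eq_univ_of_forall mem_cyl_nil]
    exact isClopen_univ
  | cons a s ih =>
    have hcons : cyl (a :: s) = (fun y => y s.length) ⁻¹' {a} ∩ cyl s :=
      Set.ext fun _ => mem_cyl_cons
    rw [hcons]
    exact ((isClopen_discrete {a}).preimage (continuous_apply s.length)).inter ih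

lemma exists_cyl_res_subset {U : Set (ℕ → α)} (hU : U ∈ 𝓝 z) : ∃ n, cyl (res z n) ⊆ U := by
  obtain ⟨_, ⟨x, n, rfl⟩, hz, hsub⟩ :=
    (PiNat.isTopologicalBasis_cylinders fun _ => α).mem_nhds_iff.1 hU
  refine ⟨n, fun y hy => hsub ?_⟩
  rw [PiNat.cylinder_eq_res] at hz ⊢
  exact (mem_cyl_res.1 hy).trans hz

lemma tendsto_of_forall_mem_cyl_res {w : ℕ → ℕ → α} (hw : ∀ n, w n ∈ cyl (res z n)) :
    Tendsto w atTop (𝓝 z) := by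
  refine Filter.tendsto_def.2 fun U hU => ?_
  obtain ⟨n, hn⟩ := exists_cyl_res_subset hU
  filter_upwards [eventually_ge_atTop n] with k hk
  exact hn (cyl_anti (res_suffix_res z hk) (hw k))

lemma mem_cyl_of_forall_suffix_succ {β : Type*} [TopologicalSpace β] [DiscreteTopology β]
    {f : (ℕ → α) → ℕ → β} (hf : Continuous f) {σ : ℕ → List β} (hσ : ∀ j, σ j <:+ σ (j + 1))
    (hne : ∀ j, ∃ w ∈ cyl (res z j), f w ∈ cyl (σ j)) (j : ℕ) : f z ∈ cyl (σ j) := by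
  choose w hwz hwσ using hne
  have hlim : Tendsto (fun i => f (w i)) atTop (𝓝 (f z)) :=
    (hf.tendsto z).comp (tendsto_of_forall_mem_cyl_res hwz)
  refine (isClopen_cyl (σ j)).isClosed.mem_of_tendsto hlim ?_
  have hanti : Antitone fun i => cyl (σ i) := antitone_nat_of_succ_le fun i => cyl_anti (hσ i)
  filter_upwards [eventually_ge_atTop j] with i hi using hanti hi (hwσ i)

end Cyl

section Tail

variable {s : List ℕ}

/-- The sequences that extend `s` by an entry at least `M`. -/
def tail (s : List ℕ) (M : ℕ) : Set (ℕ → ℕ) := {y ∈ cyl s | M ≤ y s.length}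

lemma isClopen_tail (s : List ℕ) (M : ℕ) : IsClopen (tail s M) :=
  (isClopen_cyl s).inter ((isClopen_discrete (Ici M)).preimage (continuous_apply s.length))

lemma isCompact_of_finitely_branching {K : Set (ℕ → ℕ)} (hK : IsClosed K) (hs : K ⊆ cyl s)
    (hbound : ∀ t, s <:+ t → ∃ M, Disjoint K (tail t M)) : IsCompact K := by
  choose! M hM using hbound
  have apply_lt {y} (hy : y ∈ K) {n} (hn : s.length ≤ n) : y n < M (res y n) := by
    by_contra! hle
    refine disjoint_left.1 (hM _ (suffix_res_of_mem_cyl (hs hy) hn)) hy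
      ⟨self_mem_cyl_res y n, ?_⟩
    rwa [res_length]
  have finite_res (n : ℕ) (hn : s.length ≤ n) : ((res · n) '' K).Finite := by
    induction n, hn using Nat.le_induction with
    | base => exact (finite_singleton s).subset (image_subset_iff.2 hs)
    | succ n hn ih =>
      refine (ih.biUnion fun t _ => (finite_Iio (M t)).image (· :: t)).subset ?_
      rintro _ ⟨y, hy, rfl⟩
      exact mem_biUnion (mem_image_of_mem _ hy) (mem_image_of_mem _ (apply_lt hy hn))
  have finite_apply (n : ℕ) : ((· n) '' K).Finite := by
    rcases lt_or_ge n s.length with hn | hn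
    · refine Set.Subsingleton.finite ?_
      rintro _ ⟨y, hy, rfl⟩ _ ⟨y', hy', rfl⟩
      exact res_eq_res.1 ((hs hy).trans (hs hy').symm) hn
    · refine ((finite_res n hn).biUnion fun t _ => finite_Iio (M t)).subset ?_
      rintro _ ⟨y, hy, rfl⟩
      exact mem_biUnion (mem_image_of_mem _ hy) (apply_lt hy hn)
  exact (isCompact_univ_pi fun n => (finite_apply n).isCompact).of_isClosed_subset hK
    fun y hy n _ => mem_image_of_mem _ hy

lemma isCompact_cyl_diff_tails {T : {t // s <:+ t} → Set ℕ} (hT : ∀ t, (T t).Nonempty) :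
    IsCompact (cyl s \ ⋃ t, ⋃ M ∈ T t, tail t M) := by
  refine isCompact_of_finitely_branching ?_ sdiff_subset fun t ht => ?_
  · exact (isClopen_cyl s).isClosed.sdiff <| isOpen_iUnion fun t => isOpen_biUnion fun M _ =>
      (isClopen_tail t M).isOpen
  · obtain ⟨M, hM⟩ := hT ⟨t, ht⟩
    exact ⟨M, disjoint_sdiff_left.mono_right <|
      subset_iUnion_of_subset ⟨t, ht⟩ (subset_biUnion_of_mem (u := fun M => tail t M) hM)⟩

end Tail

section IsSmall

variable {X Y : Type*} [MeasurableSpace X] [MeasurableSpace Y] [TopologicalSpace Y]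

variable (X Y) in
/-- The measurable subsets of `X × Y` all of whose vertical sections are compact. -/
def compactSectionSets : Set (Set (X × Y)) :=
  {K | MeasurableSet K ∧ ∀ x, IsCompact {y | (x, y) ∈ K}}

lemma empty_mem_compactSectionSets : ∅ ∈ compactSectionSets X Y :=
  ⟨.empty, fun _ => isCompact_empty⟩

/-- The σ-ideal of the theorem: countably many measurable sets with compact sections cover `A`. -/
def IsSmall (A : Set (X × Y)) : Prop := CountablyCovered (compactSectionSets X Y) A

lemma mem_compactSectionSets_of_forall_tails {s : List ℕ} {B : {t // s <:+ t} → ℕ → Set X}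
    (hB : ∀ t M, MeasurableSet (B t M)) :
    ((⋂ t, ⋃ M, B t M) ×ˢ cyl s) \ ⋃ t, ⋃ M, B t M ×ˢ tail t M ∈
      compactSectionSets X (ℕ → ℕ) := by
  refine ⟨?_, fun x => ?_⟩
  · refine (MeasurableSet.prod ?_ (isClopen_cyl s).isOpen.measurableSet).diff ?_
    · exact .iInter fun t => .iUnion (hB t)
    · exact .iUnion fun t => .iUnion fun M => (hB t M).prod (isClopen_tail t M).isOpen.measurableSet
  · by_cases hx : x ∈ ⋂ t, ⋃ M, B t M
    · convert isCompact_cyl_diff_tails (T := fun t => {M | x ∈ B t M})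
        fun t => mem_iUnion.1 (mem_iInter.1 hx t) using 1
      ext y
      simp only [mem_ofPred_eq, mem_sdiff, mem_prod, hx, true_and, mem_iUnion, exists_prop]
    · convert isCompact_empty (X := ℕ → ℕ)
      ext y
      simp only [mem_ofPred_eq, mem_sdiff, mem_prod, hx, false_and, mem_empty_iff_false]

lemma IsSmall.of_forall_tails {A : Set (X × (ℕ → ℕ))} {s : List ℕ}
    {B : {t // s <:+ t} → ℕ → Set X} (hB : ∀ t M, MeasurableSet (B t M))
    (hsmall : ∀ t M, IsSmall (A ∩ B t M ×ˢ tail t M)) :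
    IsSmall (A ∩ (⋂ t, ⋃ M, B t M) ×ˢ cyl s) := by
  have htails : IsSmall (⋃ t, ⋃ M, A ∩ B t M ×ˢ tail t M) :=
    .iUnion fun t => .iUnion (hsmall t)
  refine (htails.union (.of_mem (mem_compactSectionSets_of_forall_tails hB))).mono ?_
  rintro p ⟨hpA, hp⟩
  by_cases htail : p ∈ ⋃ t, ⋃ M, B t M ×ˢ tail t M
  · left
    simp only [← inter_iUnion]
    exact ⟨hpA, htail⟩
  · exact Or.inr ⟨hp, htail⟩

end IsSmall

section IsNegligible

variable {X Y ι κ : Type*} [MeasurableSpace X] [MeasurableSpace Y] [TopologicalSpace Y]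
  {A : ι → κ → Set (X × Y)} {S : Set ι} {E : Set X}

/-- The σ-ideal on `X` generated by the measurable sets over which some `A i k` with `i ∈ S` is
small. The family `S` is inseparable, in the sense of Novikov's theorem modulo small sets, if
`univ` is not negligible. -/
def IsNegligible (A : ι → κ → Set (X × Y)) (S : Set ι) (E : Set X) : Prop :=
  CountablyCovered {B | MeasurableSet B ∧ ∃ i ∈ S, ∃ k, IsSmall (A i k ∩ Prod.fst ⁻¹' B)} E

namespace IsNegligible

lemma of_isSmall (hE : MeasurableSet E) {i : ι} (hi : i ∈ S) {k : κ}
    (h : IsSmall (A i k ∩ Prod.fst ⁻¹' E)) : IsNegligible A S E :=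
  .of_mem ⟨hE, i, hi, k, h⟩

lemma of_disjoint (hE : MeasurableSet E) {i : ι} (hi : i ∈ S) {k : κ}
    (h : Disjoint (A i k) (Prod.fst ⁻¹' E)) : IsNegligible A S E :=
  of_isSmall hE hi (h.inter_eq ▸ CountablyCovered.empty)

lemma eq_empty (h : IsNegligible A ∅ E) : E = ∅ := by
  obtain ⟨C, hC, -, hcov⟩ := h
  refine subset_empty_iff.1 fun x hx => ?_
  obtain ⟨B, hB, -⟩ := hcov hx
  obtain ⟨-, i, hi, -⟩ := hC hB
  exact hi

lemma exists_isSmall_of_insert {i : ι} (h : IsNegligible A (insert i S) E) :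
    ∃ B : κ → Set X, (∀ k, MeasurableSet (B k)) ∧ (∀ k, IsSmall (A i k ∩ Prod.fst ⁻¹' B k)) ∧
      IsNegligible A S (E \ ⋃ k, B k) := by
  obtain ⟨C, hC, hcount, hcov⟩ := h
  let D (k : κ) : Set (Set X) := {B ∈ C | IsSmall (A i k ∩ Prod.fst ⁻¹' B)}
  have hD (k : κ) : (D k).Countable := hcount.mono (sep_subset _ _)
  refine ⟨fun k => ⋃₀ D k, fun k => .sUnion (hD k) fun B hB => (hC hB.1).1, fun k => ?_,
    C \ ⋃ k, D k, ?_, hcount.mono sdiff_subset, ?_⟩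
  · have := (hD k).to_subtype
    beta_reduce
    rw [sUnion_eq_iUnion, preimage_iUnion, inter_iUnion]
    exact .iUnion fun B => B.2.2
  · rintro B ⟨hB, hBD⟩
    obtain ⟨hBmeas, j, rfl | hj, k, hsmall⟩ := hC hB
    · exact (hBD (mem_iUnion.2 ⟨k, hB, hsmall⟩)).elim
    · exact ⟨hBmeas, j, hj, k, hsmall⟩
  · rintro x ⟨hxE, hxD⟩
    obtain ⟨B, hB, hxB⟩ := hcov hxE
    refine ⟨B, ⟨hB, fun hBD => hxD ?_⟩, hxB⟩
    obtain ⟨k, hk⟩ := mem_iUnion.1 hBD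
    exact mem_iUnion.2 ⟨k, B, hk, hxB⟩

end IsNegligible

end IsNegligible

/-- A pair `(t, s)` of finite sequences, approximating a parameter `w` and the second coordinate
of its value `F w`. -/
abbrev Node := List ℕ × List ℕ

/-- `q'` prolongs the first sequence of `q` by one entry, and the second one by at least one entry,
the first of which is at least `M`. -/
def ExtendsAbove (q : Node) (M : ℕ) (q' : Node) : Prop :=
  (∃ n, q'.1 = n :: q.1) ∧ ∃ m ≥ M, m :: q.2 <:+ q'.2

section Piece

variable {X : Type*} {F : (ℕ → ℕ) → X × (ℕ → ℕ)} {S : Set Node}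

/-- The points `F w` with `w` in the cylinder of `q.1` and second coordinate in `tail q.2 M`. -/
def piece (F : (ℕ → ℕ) → X × (ℕ → ℕ)) (q : Node) (M : ℕ) : Set (X × (ℕ → ℕ)) :=
  F '' cyl q.1 ∩ Prod.snd ⁻¹' tail q.2 M

lemma piece_subset_iUnion (q : Node) (M : ℕ) :
    piece F q M ⊆
      ⋃ (n : ℕ) (m : Ici M), F '' cyl (n :: q.1) ∩ Prod.snd ⁻¹' cyl (m.1 :: q.2) := by
  rintro _ ⟨⟨w, hw, rfl⟩, hs, hM⟩
  exact mem_iUnion₂.2 ⟨w q.1.length, ⟨_, hM⟩,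
    mem_image_of_mem F (mem_cyl_cons.2 ⟨rfl, hw⟩), mem_cyl_cons.2 ⟨rfl, hs⟩⟩

variable [MeasurableSpace X]

lemma exists_isSmall_of_forall_isNegligible {t s : List ℕ}
    (h : ∀ s', s <:+ s' → IsNegligible (piece F) (insert (t, s') S) univ) :
    ∃ E, MeasurableSet E ∧ IsNegligible (piece F) S Eᶜ ∧
      IsSmall ((F '' cyl t ∩ Prod.snd ⁻¹' cyl s) ∩ Prod.fst ⁻¹' E) := by
  choose B hB hsmall hnegl using fun s' : {s' // s <:+ s'} =>
    (h s' s'.2).exists_isSmall_of_insert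
  refine ⟨⋂ s', ⋃ M, B s' M, .iInter fun s' => .iUnion (hB s'), ?_, ?_⟩
  · rw [compl_iInter]
    exact .iUnion fun s' => compl_eq_univ_sdiff _ ▸ hnegl s'
  · refine (IsSmall.of_forall_tails (A := F '' cyl t) hB fun s' M => ?_).mono ?_
    · exact (hsmall s' M).mono fun p ⟨hp, hpB, hpT⟩ => ⟨⟨hp, hpT⟩, hpB⟩
    · exact fun p ⟨⟨hp, hps⟩, hpE⟩ => ⟨hp, hpE, hps⟩

lemma exists_root_not_isNegligible (hF : ¬ IsSmall (range F)) :
    ∃ s, ¬ IsNegligible (piece F) {([], s)} univ := by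
  by_contra! h
  obtain ⟨E, -, hE, hsmall⟩ := exists_isSmall_of_forall_isNegligible (F := F) (S := ∅)
    (t := []) (s := []) fun s' _ => by simpa only [insert_empty_eq] using h s'
  refine hF (hsmall.mono ?_)
  rintro _ ⟨w, rfl⟩
  exact ⟨⟨mem_image_of_mem F (mem_cyl_nil w), mem_cyl_nil _⟩,
    compl_empty_iff.1 hE.eq_empty ▸ mem_univ _⟩

lemma exists_extendsAbove_not_isNegligible (hS : ¬ IsNegligible (piece F) S univ) {q : Node}
    (hq : q ∈ S) (M : ℕ) :
    ∃ q', ExtendsAbove q M q' ∧ ¬ IsNegligible (piece F) (insert q' S) univ := by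
  by_contra! h
  choose E hE hnegl hsmall using fun (n : ℕ) (m : Ici M) =>
    exists_isSmall_of_forall_isNegligible (t := n :: q.1) (s := m.1 :: q.2)
      fun s' hs' => h (n :: q.1, s') ⟨⟨n, rfl⟩, m, m.2, hs'⟩
  let D : Set X := ⋂ (n) (m), E n m
  have hcompl : IsNegligible (piece F) S Dᶜ := by
    simp only [D, compl_iInter]
    exact .iUnion fun n => .iUnion (hnegl n)
  have hpiece : IsSmall (piece F q M ∩ Prod.fst ⁻¹' D) := by
    refine CountablyCovered.mono (.iUnion fun n => .iUnion (hsmall n)) ?_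
    rintro p ⟨hp, hpD⟩
    obtain ⟨n, m, hpnm⟩ := mem_iUnion₂.1 (piece_subset_iUnion q M hp)
    exact mem_iUnion₂.2 ⟨n, m, hpnm, mem_iInter₂.1 hpD n m⟩
  have hD : IsNegligible (piece F) S D :=
    .of_isSmall (.iInter fun n => .iInter (hE n)) hq hpiece
  exact hS ((union_compl_self D).symm ▸ hD.union hcompl)

lemma exists_mem_cyl_of_not_isNegligible (hS : ¬ IsNegligible (piece F) S univ) {q : Node}
    (hq : q ∈ S) : ∃ w ∈ cyl q.1, (F w).2 ∈ cyl q.2 := by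
  by_contra! h
  refine hS (.of_disjoint (k := 0) .univ hq (disjoint_left.2 ?_))
  rintro _ ⟨⟨w, hw, rfl⟩, hs, -⟩
  exact absurd hs (h w hw)

lemma not_disjoint_of_not_isNegligible (hS : ¬ IsNegligible (piece F) S univ) {q q' : Node}
    (hq : q ∈ S) (hq' : q' ∈ S) {V V' : Set X} (hV : MeasurableSet V) (hV' : MeasurableSet V')
    (hqV : cyl q.1 ⊆ (fun w => (F w).1) ⁻¹' V) (hqV' : cyl q'.1 ⊆ (fun w => (F w).1) ⁻¹' V') :
    ¬ Disjoint V V' := by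
  have negligible_compl {q : Node} (hq : q ∈ S) {V : Set X} (hV : MeasurableSet V)
      (hqV : cyl q.1 ⊆ (fun w => (F w).1) ⁻¹' V) : IsNegligible (piece F) S Vᶜ := by
    refine .of_disjoint (k := 0) hV.compl hq (disjoint_left.2 ?_)
    rintro _ ⟨⟨w, hw, rfl⟩, -⟩ hwV
    exact hwV (hqV hw)
  intro hdisj
  refine hS (((negligible_compl hq hV hqV).union (negligible_compl hq' hV' hqV')).mono ?_)
  rw [← compl_inter, hdisj.inter_eq, compl_empty]

end Piece

/-- A form of the Rasiowa-Sikorski lemma. -/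
lemma exists_saturated {ι κ : Type*} [Countable ι] [Countable κ] {Bad : Set ι → Prop}
    {R : ι → κ → ι → Prop} (hstep : ∀ S, Bad S → ∀ i ∈ S, ∀ k, ∃ j, R i k j ∧ Bad (insert j S))
    {S₀ : Set ι} (h₀ : Bad S₀) :
    ∃ N : Set ι, S₀ ⊆ N ∧ (∀ i ∈ N, ∀ k, ∃ j ∈ N, R i k j) ∧
      ∀ i ∈ N, ∀ j ∈ N, ∃ S, Bad S ∧ i ∈ S ∧ j ∈ S := by
  have := Encodable.ofCountable (ι × κ)
  -- Once `i` lies in a member of the generic ideal, directedness excludes the second alternative.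
  let 𝒟 (p : ι × κ) : Order.Cofinal {S // Bad S} :=
    { carrier := {S | (∃ j ∈ S.1, R p.1 p.2 j) ∨ ∀ T ≥ S, p.1 ∉ T.1}
      isCofinal := by
        intro S
        by_cases hp : ∃ T ≥ S, p.1 ∈ T.1
        · obtain ⟨T, hST, hpT⟩ := hp
          obtain ⟨j, hj, hbad⟩ := hstep T.1 T.2 p.1 hpT p.2
          exact ⟨⟨insert j T.1, hbad⟩, Or.inl ⟨j, mem_insert j _, hj⟩,
            hST.trans (subset_insert j T.1)⟩
        · exact ⟨S, Or.inr (by simpa using hp), le_rfl⟩ }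
  let G := Order.idealOfCofinals ⟨S₀, h₀⟩ 𝒟
  refine ⟨⋃ S ∈ G, S.1, ?_, fun i hi k => ?_, fun i hi j hj => ?_⟩
  · exact fun i hi => mem_iUnion₂.2 ⟨_, Order.mem_idealOfCofinals _ 𝒟, hi⟩
  · obtain ⟨S, hS, hiS⟩ := mem_iUnion₂.1 hi
    obtain ⟨S', hS'𝒟, hS'⟩ := Order.cofinal_meets_idealOfCofinals ⟨S₀, h₀⟩ 𝒟 (i, k)
    obtain ⟨T, -, hST, hS'T⟩ := G.directed S hS S' hS'
    rcases hS'𝒟 with ⟨j, hj, hR⟩ | hnever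
    · exact ⟨j, mem_iUnion₂.2 ⟨S', hS', hj⟩, hR⟩
    · exact absurd (hST hiS) (hnever T hS'T)
  · obtain ⟨S, hS, hiS⟩ := mem_iUnion₂.1 hi
    obtain ⟨S', hS', hjS'⟩ := mem_iUnion₂.1 hj
    obtain ⟨T, -, hST, hS'T⟩ := G.directed S hS S' hS'
    exact ⟨T.1, T.2, hST hiS, hS'T hjS'⟩

lemma exists_branch {N : Set Node} (hN : ∀ q ∈ N, ∀ M, ∃ q' ∈ N, ExtendsAbove q M q')
    {s₀ : List ℕ} (hroot : ([], s₀) ∈ N) (g : ℕ → ℕ → ℕ) :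
    ∃ (z : ℕ → ℕ) (σ : ℕ → List ℕ), (∀ j, (res z j, σ j) ∈ N) ∧
      ∀ j, ∃ m > g j (σ j).length, m :: σ j <:+ σ (j + 1) := by
  choose! child child_mem extends_child using hN
  let q (j : ℕ) : Node := Nat.rec ([], s₀) (fun j q => child q (g j q.2.length + 1)) j
  have hqN (j : ℕ) : q j ∈ N := by
    induction j with
    | zero => exact hroot
    | succ j ih => exact child_mem _ ih _
  have hq (j : ℕ) : ExtendsAbove (q j) (g j (q j).2.length + 1) (q (j + 1)) :=
    extends_child _ (hqN j) _
  choose z hz using fun j => (hq j).1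
  have fst_eq_res (j : ℕ) : (q j).1 = res z j := by
    induction j with
    | zero => rfl
    | succ j ih => rw [res_succ, ← ih]; exact hz j
  exact ⟨z, fun j => (q j).2, fun j => fst_eq_res j ▸ hqN j, fun j => (hq j).2⟩

section Limit

variable {X : Type*} [TopologicalSpace X] [T2Space X] [MeasurableSpace X] [OpensMeasurableSpace X]
  {F : (ℕ → ℕ) → X × (ℕ → ℕ)}

lemma fst_eq_of_not_isNegligible (hF : Continuous F) {z z' : ℕ → ℕ} {σ σ' : ℕ → List ℕ}
    (h : ∀ j j', ∃ S, ¬ IsNegligible (piece F) S univ ∧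
      (res z j, σ j) ∈ S ∧ (res z' j', σ' j') ∈ S) :
    (F z).1 = (F z').1 := by
  by_contra hne
  obtain ⟨V, V', hV, hV', hzV, hzV', hdisj⟩ := t2_separation hne
  obtain ⟨j, hj⟩ := exists_cyl_res_subset ((hV.preimage hF.fst).mem_nhds hzV)
  obtain ⟨j', hj'⟩ := exists_cyl_res_subset ((hV'.preimage hF.fst).mem_nhds hzV')
  obtain ⟨S, hS, hzS, hzS'⟩ := h j j'
  exact not_disjoint_of_not_isNegligible hS hzS hzS' hV.measurableSet hV'.measurableSet
    hj hj' hdisj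

lemma exists_section_unbounded (hF : Continuous F) (hsmall : ¬ IsSmall (range F)) :
    ∃ x, ∀ g : ℕ → ℕ → ℕ, ∃ y, (x, y) ∈ range F ∧ ∀ j, ∃ n, g j n < y n := by
  obtain ⟨s₀, hs₀⟩ := exists_root_not_isNegligible hsmall
  obtain ⟨N, hroot, hextend, hpair⟩ :=
    exists_saturated (fun S hS q hq M => exists_extendsAbove_not_isNegligible hS hq M) hs₀
  have branch := exists_branch hextend (singleton_subset_iff.1 hroot)
  obtain ⟨z₀, σ₀, hz₀, -⟩ := branch 0
  refine ⟨(F z₀).1, fun g => ?_⟩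
  obtain ⟨z, σ, hz, hσ⟩ := branch g
  choose m hm hmσ using hσ
  have hfst : (F z).1 = (F z₀).1 :=
    fst_eq_of_not_isNegligible hF fun j j' => hpair _ (hz j) _ (hz₀ j')
  have hsnd : ∀ j, (F z).2 ∈ cyl (σ j) :=
    mem_cyl_of_forall_suffix_succ hF.snd (fun j => (List.suffix_cons _ _).trans (hmσ j)) fun j =>
      let ⟨_, hS, hzS, _⟩ := hpair _ (hz j) _ (hz j)
      exists_mem_cyl_of_not_isNegligible hS hzS
  refine ⟨(F z).2, ⟨z, Prod.ext hfst rfl⟩, fun j => ⟨(σ j).length, ?_⟩⟩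
  have happly : (F z).2 (σ j).length = m j :=
    (mem_cyl_cons.1 (cyl_anti (hmσ j) (hsnd (j + 1)))).1
  exact happly ▸ hm j

end Limit

lemma exists_seq_bound_of_isSigmaCompact {S : Set (ℕ → ℕ)} (hS : IsSigmaCompact S) :
    ∃ g : ℕ → ℕ → ℕ, ∀ y ∈ S, ∃ j, y ≤ g j := by
  obtain ⟨K, hK, rfl⟩ := hS
  choose g hg using fun j =>
    bddAbove_pi.2 fun n => ((hK j).image (continuous_apply n)).bddAbove
  exact ⟨g, fun y hy => (mem_iUnion.1 hy).imp fun j hj => hg j hj⟩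

end BurgessHillard

open BurgessHillard

theorem stmt_12_general {X : Type*} [TopologicalSpace X] [T2Space X]
    [MeasurableSpace X] [OpensMeasurableSpace X]
    (P : Set (X × (ℕ → ℕ))) (hP : AnalyticSet P)
    (hsec : ∀ x : X, ∃ S : Set (ℕ → ℕ), IsSigmaCompact S ∧ {y : ℕ → ℕ | (x, y) ∈ P} ⊆ S) :
    ∃ Pn : ℕ → Set (X × (ℕ → ℕ)),
      (∀ n, MeasurableSet (Pn n)) ∧
      (∀ n, ∀ x : X, IsCompact {y : ℕ → ℕ | (x, y) ∈ Pn n}) ∧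
      P ⊆ ⋃ n, Pn n := by
  suffices hsmall : IsSmall P by
    obtain ⟨Pn, hPn, hcov⟩ := hsmall.exists_seq empty_mem_compactSectionSets
    exact ⟨Pn, fun n => (hPn n).1, fun n => (hPn n).2, hcov⟩
  rw [AnalyticSet] at hP
  obtain rfl | ⟨F, hF, rfl⟩ := hP
  · exact CountablyCovered.empty
  by_contra hsmall
  obtain ⟨x, hx⟩ := exists_section_unbounded hF hsmall
  obtain ⟨S, hS, hsub⟩ := hsec x
  obtain ⟨g, hg⟩ := exists_seq_bound_of_isSigmaCompact hS
  obtain ⟨y, hy, hlt⟩ := hx g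
  obtain ⟨j, hj⟩ := hg y (hsub hy)
  obtain ⟨n, hn⟩ := hlt j
  exact hn.not_ge (hj n)

theorem stmt_12 {X : Type*} [TopologicalSpace X] [PolishSpace X]
    [MeasurableSpace X] [BorelSpace X]
    (P : Set (X × (ℕ → ℕ))) (hP : MeasureTheory.AnalyticSet P)
    (hsec : ∀ x : X, ∃ S : Set (ℕ → ℕ), IsSigmaCompact S ∧
      {y : ℕ → ℕ | (x, y) ∈ P} ⊆ S) :
    ∃ Pn : ℕ → Set (X × (ℕ → ℕ)),
      (∀ n, MeasurableSet (Pn n)) ∧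
      (∀ n, ∀ x : X, IsCompact {y : ℕ → ℕ | (x, y) ∈ Pn n}) ∧
      P ⊆ ⋃ n, Pn n :=
  stmt_12_general P hP hsec
end
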